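/- arXiv:1512.06016 — 2 statements merged into one kernel-verified Lean document; each statement's English description precedes it below -/
import Mathlib

section
/- Let α > 0, K₂ > 0, and set Λ_W = (0,0,0,K₂). For every δ > 0 there exists ε > 0 such that for all parameters Λ = (H₁,H₂,H₃,K₂') ∈ ℝ⁴ with |Λ − Λ_W| < ε, there exist a velocity V ∈ ℝ with |V| < δ and a twice continuously differentiable profile m : ℝ → ℝ³ with |m(ξ)| = 1 for all ξ, satisfying the travelling-wave equation V m' + α V (m × m') + m × (m'' + (m·x̂)x̂ − K₂'(m·ŷ)ŷ + H_a) = 0 on ℝ, such that m has limits m₊ and m₋ as ξ → +∞ and ξ → −∞ respectively, these limits satisfy m± × ((m±·x̂)x̂ − K₂'(m±·ŷ)ŷ + H_a) = 0 with x̂·m₊ > 0 and x̂·m₋ < 0, and sup_{ξ∈ℝ} |m(ξ) − m_W(ξ)| < δ where m_W(ξ) = (tanh ξ, 0, sech ξ). In particular, for Λ = Λ_W the solution is V = 0 and m = m_W. -/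
/-!
The static wall is `m_W = (sin Θ₀, 0, cos Θ₀)` with `sin Θ₀ = tanh` and `cos Θ₀ = sech`. A nearby
profile is written `m = (sin (Θ₀ + u) cos v, sin v, cos (Θ₀ + u) cos v)`, so that the
travelling-wave equation becomes two scalar equations (`twExpr_sph`)

  `u'' + (2 sech² - 1) u + α V sech = G`,   `v'' + (2 sech² - k²) v - V sech = H`,   `k² = 1 + K₂`,

where `G`, `H` (`nonlinG`, `nonlinH`) vanish at `u = v = 0`, `V = 0`, `Λ = Λ_W` and have no linear
part in `(u, v, V)` there.

Both linear operators factor into first-order ones,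
`d² + 2 sech² - 1 = (d - tanh)(d + tanh)` and `d² + 2 sech² - k² = (d + q)(d - q)`, the second with
the Riccati solution `q = qf k`, which is defined because `k > 1`. Each factor is inverted on bounded
continuous functions by an integrating factor (`exists_P`, `exists_S`, `exists_R`, `exists_Q`). The
only obstruction is the translation mode `sech`: `d - tanh` is solvable only for right sides
orthogonal to `sech`, and since `α > 0` the velocity `V` can be chosen to enforce this. The result
is a bounded solution operator `Y` (`exists_Y`), and the problem is the fixed-point equation
`f = n (a, Y f, Λ)` for the right side `f = (G, H)`, with `a` the coefficients
`(tanh, sech, q)`. These range over a compact set, so the nonlinear map is a contraction of a small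
ball for `Λ` near `Λ_W` (`exists_fixed_point`). At `Λ = Λ_W` the fixed point is `0`, which gives the
static wall.

The limits at `±∞` are built into the fixed-point space: functions with limits at both ends are
closed in the sup norm, and all the solution operators preserve them (`stable_tendsto`,
`unstable_tendsto`). Then `m`, `m'` and `m''` converge, the limits of `m'` and `m''` are zero
(`deriv_lim_zero`), and the limit of the travelling-wave equation is the vanishing of the torque.
-/

open MeasureTheory Filter

noncomputable section

/-- Standard basis vector along the wire axis. -/
def xhat : Fin 3 → ℝ := ![1, 0, 0]

/-- Standard basis vector along the hard axis. -/
def yhat : Fin 3 → ℝ := ![0, 1, 0]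

/-- Euclidean dot product on ℝ³. -/
def dot3 (a b : Fin 3 → ℝ) : ℝ := a 0 * b 0 + a 1 * b 1 + a 2 * b 2

/-- Cross product on ℝ³. -/
def cross3 (a b : Fin 3 → ℝ) : Fin 3 → ℝ :=
  ![a 1 * b 2 - a 2 * b 1, a 2 * b 0 - a 0 * b 2, a 0 * b 1 - a 1 * b 0]

/-- Euclidean norm on ℝ³. -/
def norm3 (a : Fin 3 → ℝ) : ℝ := Real.sqrt (dot3 a a)

/-- The static Bloch wall profile m_W(ξ) = (tanh ξ, 0, sech ξ). -/
def mW (ξ : ℝ) : Fin 3 → ℝ := ![Real.tanh ξ, 0, 1 / Real.cosh ξ]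

/-! ### The wall functions tanh and sech -/

/-- The hyperbolic secant, written as in the third component of the static wall. -/
def sech (ξ : ℝ) : ℝ := 1 / Real.cosh ξ

lemma sech_pos (ξ : ℝ) : 0 < sech ξ := one_div_pos.mpr (Real.cosh_pos ξ)

lemma tanh_sq_add_sech_sq (ξ : ℝ) : Real.tanh ξ ^ 2 + sech ξ ^ 2 = 1 := by
  have h := (Real.cosh_pos ξ).ne'
  have := Real.cosh_sq ξ
  rw [Real.tanh_eq_sinh_div_cosh, sech]
  field_simp
  linarith

lemma sech_le_one (ξ : ℝ) : sech ξ ≤ 1 := by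
  nlinarith [tanh_sq_add_sech_sq ξ, sq_nonneg (Real.tanh ξ), sech_pos ξ]

lemma sech_neg (ξ : ℝ) : sech (-ξ) = sech ξ := by simp [sech]

lemma hasDerivAt_tanh (ξ : ℝ) : HasDerivAt Real.tanh (sech ξ ^ 2) ξ := by
  have h := (Real.cosh_pos ξ).ne'
  have h1 := (Real.hasDerivAt_sinh ξ).div (Real.hasDerivAt_cosh ξ) h
  have h2 : Real.tanh = Real.sinh / Real.cosh := by
    ext x; exact Real.tanh_eq_sinh_div_cosh x
  rw [h2]
  refine (h1).congr_deriv ?_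
  have := Real.cosh_sq ξ
  rw [sech]
  field_simp
  linarith

lemma hasDerivAt_sech (ξ : ℝ) : HasDerivAt sech (-Real.tanh ξ * sech ξ) ξ := by
  have h := (Real.cosh_pos ξ).ne'
  have h1 := (Real.hasDerivAt_cosh ξ).inv h
  have h2 : sech = Real.cosh⁻¹ := by ext x; simp [sech]
  rw [h2]
  refine (h1).congr_deriv ?_
  rw [Real.tanh_eq_sinh_div_cosh]
  simp only [Pi.inv_apply]
  field_simp

lemma hasDerivAt_cosh' (ξ : ℝ) : HasDerivAt Real.cosh (Real.tanh ξ * Real.cosh ξ) ξ := by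
  refine (Real.hasDerivAt_cosh ξ).congr_deriv ?_
  rw [Real.tanh_eq_sinh_div_cosh, div_mul_cancel₀ _ (Real.cosh_pos ξ).ne']

lemma continuous_tanh : Continuous Real.tanh :=
  continuous_iff_continuousAt.mpr fun ξ => (hasDerivAt_tanh ξ).continuousAt

lemma continuous_sech : Continuous sech :=
  continuous_iff_continuousAt.mpr fun ξ => (hasDerivAt_sech ξ).continuousAt

lemma sech_le_exp (ξ : ℝ) : sech ξ ≤ 2 * Real.exp ξ := by
  rw [sech, Real.cosh_eq, div_le_iff₀ (by positivity)]
  have : Real.exp ξ * Real.exp (-ξ) = 1 := by rw [← Real.exp_add]; simp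
  nlinarith [Real.exp_pos ξ]

lemma exp_le_sech {ξ : ℝ} (h : ξ ≤ 0) : Real.exp ξ ≤ sech ξ := by
  rw [sech, Real.cosh_eq, le_div_iff₀ (by positivity)]
  have : Real.exp ξ * Real.exp (-ξ) = 1 := by rw [← Real.exp_add]; simp
  have h2 : Real.exp ξ ≤ 1 := Real.exp_le_one_iff.mpr h
  nlinarith [Real.exp_pos ξ]

lemma tendsto_cosh_atTop : Tendsto Real.cosh atTop atTop := by
  refine tendsto_atTop_mono (f := fun x => Real.exp x / 2) (fun x => ?_)
    (Real.tendsto_exp_atTop.atTop_div_const two_pos)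
  rw [Real.cosh_eq]; linarith [Real.exp_pos (-x)]

lemma tendsto_sech_atTop : Tendsto sech atTop (nhds 0) := by
  have : sech = fun x => (Real.cosh x)⁻¹ := by ext x; simp [sech]
  rw [this]; exact tendsto_cosh_atTop.inv_tendsto_atTop

lemma tendsto_sech_atBot : Tendsto sech atBot (nhds 0) := by
  have := tendsto_sech_atTop.comp tendsto_neg_atBot_atTop
  exact this.congr fun x => sech_neg x

lemma tendsto_tanh_atTop : Tendsto Real.tanh atTop (nhds 1) := by
  have h1 : ∀ x : ℝ, 0 ≤ x → Real.tanh x = Real.sqrt (1 - sech x ^ 2) := fun x hx => by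
    rw [← tanh_sq_add_sech_sq x, add_sub_cancel_right, Real.sqrt_sq]
    rw [Real.tanh_eq_sinh_div_cosh]
    exact div_nonneg (Real.sinh_nonneg_iff.mpr hx) (Real.cosh_pos x).le
  have h2 : Tendsto (fun x => Real.sqrt (1 - sech x ^ 2)) atTop (nhds (Real.sqrt (1 - 0 ^ 2))) :=
    ((tendsto_const_nhds.sub (tendsto_sech_atTop.pow 2))).sqrt
  simp only [ne_eq, OfNat.ofNat_ne_zero, not_false_eq_true, zero_pow, sub_zero, Real.sqrt_one] at h2
  refine h2.congr' ?_
  filter_upwards [eventually_ge_atTop 0] with x hx using (h1 x hx).symm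

lemma tendsto_tanh_atBot : Tendsto Real.tanh atBot (nhds (-1)) := by
  have := (tendsto_tanh_atTop.comp tendsto_neg_atBot_atTop).neg
  exact this.congr fun x => by simp [Real.tanh_neg]

/-! ### Limits of bounded solutions of scalar linear equations -/

/-- One-sided comparison for the contracting equation `y' = -q y + f`: if eventually
`f ≤ q l`, then `y` is eventually below `l + ε`. -/
lemma stable_upper {y q f ψ : ℝ → ℝ} {l ε : ℝ} (hε : 0 < ε)
    (hψ : ∀ ξ, 0 < ψ ξ) (hψ' : ∀ ξ, HasDerivAt ψ (q ξ * ψ ξ) ξ) (hψt : Tendsto ψ atTop atTop)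
    (hy : ∀ ξ, HasDerivAt y (-q ξ * y ξ + f ξ) ξ)
    (hf : ∀ᶠ ξ in atTop, f ξ ≤ q ξ * l) :
    ∀ᶠ ξ in atTop, y ξ ≤ l + ε := by
  obtain ⟨T, hT⟩ := eventually_atTop.mp hf
  have hd : ∀ ξ, HasDerivAt (fun x => (y x - l) * ψ x) ((f ξ - q ξ * l) * ψ ξ) ξ := fun ξ => by
    refine (((hy ξ).sub_const l).mul (hψ' ξ)).congr_deriv ?_
    ring
  have hanti : AntitoneOn (fun x => (y x - l) * ψ x) (Set.Ici T) := by
    refine antitoneOn_of_deriv_nonpos (convex_Ici T)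
      (fun x _ => (hd x).continuousAt.continuousWithinAt)
      (fun x _ => (hd x).differentiableAt.differentiableWithinAt) fun x hx => ?_
    rw [(hd x).deriv]
    rw [interior_Ici] at hx
    exact mul_nonpos_of_nonpos_of_nonneg (sub_nonpos.mpr (hT x (le_of_lt hx))) (hψ x).le
  filter_upwards [eventually_ge_atTop T, hψt.eventually_ge_atTop ((y T - l) * ψ T / ε)] with ξ h1 h2
  have h3 := hanti (Set.self_mem_Ici) h1 h1
  simp only at h3
  rw [div_le_iff₀ hε] at h2
  by_contra! h4
  nlinarith [hψ ξ]

/-- One-sided comparison for the expanding equation `y' = q y + f` with bounded `y`. -/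
lemma unstable_upper {y q f ψ : ℝ → ℝ} {l M : ℝ}
    (hψ : ∀ ξ, 0 < ψ ξ) (hψ' : ∀ ξ, HasDerivAt ψ (q ξ * ψ ξ) ξ) (hψt : Tendsto ψ atTop atTop)
    (hy : ∀ ξ, HasDerivAt y (q ξ * y ξ + f ξ) ξ) (hM : ∀ ξ, |y ξ| ≤ M)
    (hf : ∀ᶠ ξ in atTop, -f ξ ≤ q ξ * l) :
    ∀ᶠ ξ in atTop, y ξ ≤ l := by
  obtain ⟨T, hT⟩ := eventually_atTop.mp hf
  have hd : ∀ ξ, HasDerivAt (fun x => (y x - l) / ψ x) ((f ξ + q ξ * l) / ψ ξ) ξ := fun ξ => by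
    have := (hψ ξ).ne'
    refine (((hy ξ).sub_const l).div (hψ' ξ) this).congr_deriv ?_
    field_simp
    ring
  have hmono : MonotoneOn (fun x => (y x - l) / ψ x) (Set.Ici T) := by
    refine monotoneOn_of_deriv_nonneg (convex_Ici T)
      (fun x _ => (hd x).continuousAt.continuousWithinAt)
      (fun x _ => (hd x).differentiableAt.differentiableWithinAt) fun x hx => ?_
    rw [(hd x).deriv]
    rw [interior_Ici] at hx
    exact div_nonneg (by linarith [hT x (le_of_lt hx)]) (hψ x).le
  have hlim : Tendsto (fun x => (y x - l) / ψ x) atTop (nhds 0) := by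
    have h0 : Tendsto (fun x => (M + |l|) / ψ x) atTop (nhds 0) := hψt.const_div_atTop _
    refine squeeze_zero_norm (fun x => ?_) h0
    rw [Real.norm_eq_abs, abs_div, abs_of_pos (hψ x)]
    refine div_le_div_of_nonneg_right ?_ (hψ x).le
    exact (abs_sub _ _).trans (by linarith [hM x])
  filter_upwards [eventually_ge_atTop T] with ξ h1
  have h3 : (y ξ - l) / ψ ξ ≤ 0 := by
    refine ge_of_tendsto hlim ?_
    filter_upwards [eventually_ge_atTop ξ] with η h2
    exact hmono h1 (le_trans h1 h2) h2
  by_contra! h4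
  exact absurd h3 (not_le.mpr (div_pos (by linarith) (hψ ξ)))

lemma tendsto_of_eventually_le {y : ℝ → ℝ} {l : ℝ}
    (h1 : ∀ ε > 0, ∀ᶠ ξ in atTop, y ξ ≤ l + ε) (h2 : ∀ ε > 0, ∀ᶠ ξ in atTop, -y ξ ≤ -l + ε) :
    Tendsto y atTop (nhds l) := by
  rw [Metric.tendsto_nhds]
  intro ε hε
  filter_upwards [h1 (ε / 2) (by linarith), h2 (ε / 2) (by linarith)] with ξ a b
  rw [Real.dist_eq, abs_lt]
  constructor <;> linarith

/-- If `q → a > 0` and `f → b`, then eventually `f ≤ q (b / a + ε)`. -/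
lemma eventually_le_mul {q f : ℝ → ℝ} {a b ε : ℝ} (ha : 0 < a) (hε : 0 < ε)
    (hq : Tendsto q atTop (nhds a)) (hf : Tendsto f atTop (nhds b)) :
    ∀ᶠ ξ in atTop, f ξ ≤ q ξ * (b / a + ε) := by
  have h : Tendsto (fun ξ => f ξ - q ξ * (b / a + ε)) atTop (nhds (b - a * (b / a + ε))) :=
    hf.sub (hq.mul_const _)
  have h2 : b - a * (b / a + ε) < 0 := by
    have : a * (b / a) = b := by field_simp
    nlinarith [mul_pos ha hε]
  filter_upwards [h.eventually_lt_const h2] with ξ h3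
  linarith

lemma stable_tendsto {y q f ψ : ℝ → ℝ} {a b : ℝ} (ha : 0 < a)
    (hψ : ∀ ξ, 0 < ψ ξ) (hψ' : ∀ ξ, HasDerivAt ψ (q ξ * ψ ξ) ξ) (hψt : Tendsto ψ atTop atTop)
    (hy : ∀ ξ, HasDerivAt y (-q ξ * y ξ + f ξ) ξ)
    (hq : Tendsto q atTop (nhds a)) (hf : Tendsto f atTop (nhds b)) :
    Tendsto y atTop (nhds (b / a)) := by
  refine tendsto_of_eventually_le (fun ε hε => ?_) (fun ε hε => ?_)
  · have := stable_upper (half_pos hε) hψ hψ' hψt hy (eventually_le_mul ha (half_pos hε) hq hf)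
    filter_upwards [this] with ξ h
    linarith
  · have := stable_upper (y := fun ξ => -y ξ) (f := fun ξ => -f ξ) (half_pos hε) hψ hψ' hψt
      (fun ξ => ((hy ξ).neg).congr_deriv (by ring)) (eventually_le_mul ha (half_pos hε) hq hf.neg)
    filter_upwards [this] with ξ h
    rw [neg_div] at h
    linarith

lemma unstable_tendsto {y q f ψ : ℝ → ℝ} {a b M : ℝ} (ha : 0 < a)
    (hψ : ∀ ξ, 0 < ψ ξ) (hψ' : ∀ ξ, HasDerivAt ψ (q ξ * ψ ξ) ξ) (hψt : Tendsto ψ atTop atTop)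
    (hy : ∀ ξ, HasDerivAt y (q ξ * y ξ + f ξ) ξ) (hM : ∀ ξ, |y ξ| ≤ M)
    (hq : Tendsto q atTop (nhds a)) (hf : Tendsto f atTop (nhds b)) :
    Tendsto y atTop (nhds (-(b / a))) := by
  refine tendsto_of_eventually_le (fun ε hε => ?_) (fun ε hε => ?_)
  · have := unstable_upper hψ hψ' hψt hy hM (eventually_le_mul ha hε hq hf.neg)
    filter_upwards [this] with ξ h
    rwa [neg_div] at h
  · have := unstable_upper (y := fun ξ => -y ξ) (f := fun ξ => -f ξ) hψ hψ' hψt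
      (fun ξ => ((hy ξ).neg).congr_deriv (by ring)) (M := M) (fun ξ => by rw [abs_neg]; exact hM ξ)
      (by simpa only [neg_neg] using eventually_le_mul ha hε hq hf)
    filter_upwards [this] with ξ h
    linarith

/-- The function has a limit at each end of the line. -/
def HasLims {E : Type*} [TopologicalSpace E] (f : ℝ → E) : Prop :=
  (∃ l, Tendsto f atTop (nhds l)) ∧ ∃ l, Tendsto f atBot (nhds l)

lemma tendsto_atBot_of_neg {E : Type*} [TopologicalSpace E] {f : ℝ → E} {l : E}
    (h : Tendsto (fun ξ => f (-ξ)) atTop (nhds l)) : Tendsto f atBot (nhds l) := by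
  have := h.comp tendsto_neg_atBot_atTop
  exact this.congr fun x => by simp

lemma hasDerivAt_comp_neg {f : ℝ → ℝ} {f' ξ : ℝ} (h : HasDerivAt f f' (-ξ)) :
    HasDerivAt (fun x => f (-x)) (-f') ξ := by
  have := h.comp ξ (hasDerivAt_neg ξ)
  simpa [Function.comp_def] using this

/-! ### Inverting a first-order operator by an integrating factor -/

/-- The solution `ψ⁻¹ ∫_{-∞}^ξ ψ g` of `z' = -(ψ'/ψ) z + g`. -/
def leftInt (ψ g : ℝ → ℝ) (ξ : ℝ) : ℝ := (∫ s in Set.Iic ξ, ψ s * g s) / ψ ξ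

lemma leftInt_hasDerivAt {ψ g q : ℝ → ℝ} (hψ : ∀ ξ, 0 < ψ ξ)
    (hψ' : ∀ ξ, HasDerivAt ψ (q ξ * ψ ξ) ξ) (hg : Continuous g)
    (hint : ∀ ξ, IntegrableOn (fun s => ψ s * g s) (Set.Iic ξ)) (ξ : ℝ) :
    HasDerivAt (leftInt ψ g) (-q ξ * leftInt ψ g ξ + g ξ) ξ := by
  have hc : Continuous (fun s => ψ s * g s) :=
    (continuous_iff_continuousAt.mpr fun ξ => (hψ' ξ).continuousAt).mul hg
  have h1 : (fun ξ => ∫ s in Set.Iic ξ, ψ s * g s) =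
      fun ξ => (∫ s in Set.Iic 0, ψ s * g s) + ∫ s in (0 : ℝ)..ξ, ψ s * g s := by
    ext ξ
    rw [← intervalIntegral.integral_Iic_sub_Iic (hint 0) (hint ξ)]; ring
  have h2 : HasDerivAt (fun ξ => ∫ s in Set.Iic ξ, ψ s * g s) (ψ ξ * g ξ) ξ := by
    rw [h1]
    exact (hc.integral_hasStrictDerivAt 0 ξ).hasDerivAt.const_add _
  have h3 := (hψ ξ).ne'
  refine (h2.div (hψ' ξ) h3).congr_deriv ?_
  unfold leftInt
  field_simp
  ring

/-- Exponentially decaying weights at `-∞` are integrable against bounded functions. -/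
lemma weight_integrableOn {ψ g : ℝ → ℝ} {c k M : ℝ} (hk : 0 < k) (hψ : ∀ ξ, 0 < ψ ξ)
    (hψc : Continuous ψ) (hψe : ∀ ξ, ψ ξ ≤ c * Real.exp (k * ξ)) (hg : Continuous g)
    (hM : ∀ ξ, |g ξ| ≤ M) (ξ : ℝ) : IntegrableOn (fun s => ψ s * g s) (Set.Iic ξ) := by
  have h0 := ((integrableOn_exp_mul_Iic hk ξ).const_mul c).mul_const M
  refine Integrable.mono' h0 (hψc.mul hg).aestronglyMeasurable (ae_of_all _ fun s => ?_)
  rw [Real.norm_eq_abs, abs_mul, abs_of_pos (hψ s)]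
  exact mul_le_mul (hψe s) (hM s) (abs_nonneg _) ((hψ s).le.trans (hψe s))

lemma leftInt_bound {ψ g : ℝ → ℝ} {c c' k M ξ : ℝ} (hk : 0 < k) (hψ : ∀ ξ, 0 < ψ ξ)
    (hψe : ∀ ξ, ψ ξ ≤ c * Real.exp (k * ξ))
    (hM : ∀ ξ, |g ξ| ≤ M) (hc' : 0 < c') (hl : c' * Real.exp (k * ξ) ≤ ψ ξ) :
    |leftInt ψ g ξ| ≤ c / (c' * k) * M := by
  have h0 := ((integrableOn_exp_mul_Iic hk ξ).const_mul c).mul_const M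
  have hM0 : 0 ≤ M := (abs_nonneg _).trans (hM 0)
  have h1 : ‖∫ s in Set.Iic ξ, ψ s * g s‖ ≤ ∫ s in Set.Iic ξ, c * Real.exp (k * s) * M := by
    refine norm_integral_le_of_norm_le h0 (ae_of_all _ fun s => ?_)
    rw [Real.norm_eq_abs, abs_mul, abs_of_pos (hψ s)]
    exact mul_le_mul (hψe s) (hM s) (abs_nonneg _) ((hψ s).le.trans (hψe s))
  rw [integral_mul_const, integral_const_mul, integral_exp_mul_Iic hk] at h1
  have hc : 0 ≤ c := by
    have := (hψ 0).trans_le (hψe 0)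
    simp at this; exact this.le
  unfold leftInt
  rw [abs_div, abs_of_pos (hψ ξ), div_le_iff₀ (hψ ξ)]
  refine h1.trans ?_
  have h2 : c * (Real.exp (k * ξ) / k) * M = c / (c' * k) * M * (c' * Real.exp (k * ξ)) := by
    field_simp
  rw [h2]
  exact mul_le_mul_of_nonneg_left hl (by positivity)

/-! ### Bounded right inverses of the first-order factors -/

lemma HasLims.comp_neg {E : Type*} [TopologicalSpace E] {f : ℝ → E} (h : HasLims f) :
    HasLims (fun ξ => f (-ξ)) := by
  obtain ⟨⟨a, ha⟩, b, hb⟩ := h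
  exact ⟨⟨b, hb.comp tendsto_neg_atTop_atBot⟩, a, ha.comp tendsto_neg_atBot_atTop⟩

/-- A pointwise linear, pointwise bounded formula defines a bounded operator into the bounded
continuous functions. -/
lemma exists_clm {G E : Type*} [NormedAddCommGroup G] [NormedSpace ℝ G] [NormedAddCommGroup E]
    [NormedSpace ℝ E] (F : G → ℝ → E) (C : ℝ) (hadd : ∀ g h ξ, F (g + h) ξ = F g ξ + F h ξ)
    (hsmul : ∀ (a : ℝ) g ξ, F (a • g) ξ = a • F g ξ) (hc : ∀ g, Continuous (F g))
    (hb : ∀ g ξ, ‖F g ξ‖ ≤ C * ‖g‖) :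
    ∃ T : G →L[ℝ] (BoundedContinuousFunction ℝ E), ∀ g ξ, T g ξ = F g ξ := by
  let L : G →ₗ[ℝ] (BoundedContinuousFunction ℝ E) :=
    { toFun := fun g => BoundedContinuousFunction.ofNormedAddCommGroup (F g) (hc g) _ (hb g)
      map_add' := fun g h => by ext1 ξ; exact hadd g h ξ
      map_smul' := fun a g => by ext1 ξ; exact hsmul a g ξ }
  have hC : 0 ≤ |C| := abs_nonneg _
  refine ⟨L.mkContinuous |C| fun g => ?_, fun g ξ => rfl⟩
  refine (BoundedContinuousFunction.norm_le (by positivity)).mpr fun ξ => ?_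
  exact (hb g ξ).trans (mul_le_mul_of_nonneg_right (le_abs_self C) (norm_nonneg _))

lemma leftInt_add {ψ g₁ g₂ : ℝ → ℝ} (ξ : ℝ)
    (h₁ : IntegrableOn (fun s => ψ s * g₁ s) (Set.Iic ξ))
    (h₂ : IntegrableOn (fun s => ψ s * g₂ s) (Set.Iic ξ)) :
    leftInt ψ (fun s => g₁ s + g₂ s) ξ = leftInt ψ g₁ ξ + leftInt ψ g₂ ξ := by
  unfold leftInt
  rw [← add_div, ← integral_add h₁ h₂]
  simp only [mul_add]

lemma leftInt_smul {ψ g : ℝ → ℝ} (a ξ : ℝ) :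
    leftInt ψ (fun s => a * g s) ξ = a * leftInt ψ g ξ := by
  unfold leftInt
  rw [← mul_div_assoc, ← integral_const_mul]
  simp only [mul_left_comm]

/-- Bounded continuous real functions on the line. -/
abbrev BC := BoundedContinuousFunction ℝ ℝ

lemma bcf_abs_le (g : BC) (ξ : ℝ) : |g ξ| ≤ ‖g‖ := g.norm_coe_le_norm ξ

/-- If `ψ` is comparable to `exp (k ξ)` and `q = ψ'/ψ → k` at both ends, then `d/dξ + q` has a bounded
right inverse on bounded continuous functions, which preserves the existence of limits. -/
lemma exists_left_solver {ψ q : ℝ → ℝ} {c c' k : ℝ} (hk : 0 < k) (hc' : 0 < c')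
    (hψ' : ∀ ξ, HasDerivAt ψ (q ξ * ψ ξ) ξ)
    (hl : ∀ ξ, c' * Real.exp (k * ξ) ≤ ψ ξ) (hu : ∀ ξ, ψ ξ ≤ c * Real.exp (k * ξ))
    (hqt : Tendsto q atTop (nhds k)) (hqb : Tendsto q atBot (nhds k)) :
    ∃ T : BC →L[ℝ] BC,
      (∀ g ξ, HasDerivAt (T g) (-q ξ * T g ξ + g ξ) ξ) ∧ ∀ g : BC, HasLims g → HasLims (T g) := by
  have hψ : ∀ ξ, 0 < ψ ξ := fun ξ => (by positivity : 0 < c' * Real.exp (k * ξ)).trans_le (hl ξ)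
  have hψc : Continuous ψ := continuous_iff_continuousAt.mpr fun ξ => (hψ' ξ).continuousAt
  have hint (g : BC) :
      ∀ ξ, IntegrableOn (fun s => ψ s * g s) (Set.Iic ξ) :=
    weight_integrableOn hk hψ hψc hu g.continuous (bcf_abs_le g)
  have hd (g : BC) (ξ : ℝ) :=
    leftInt_hasDerivAt hψ hψ' g.continuous (hint g) ξ
  obtain ⟨T, hT⟩ := exists_clm (fun (g : BC) => leftInt ψ g) (c / (c' * k))
    (fun g h ξ => leftInt_add ξ (hint g ξ) (hint h ξ)) (fun a g ξ => leftInt_smul a ξ)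
    (fun g => continuous_iff_continuousAt.mpr fun ξ => (hd g ξ).continuousAt)
    (fun g ξ => leftInt_bound hk hψ hu (bcf_abs_le g) hc' (hl ξ))
  have hT' : ∀ g, (T g : ℝ → ℝ) = leftInt ψ g := fun g => funext (hT g)
  have hd' : ∀ g ξ, HasDerivAt (T g) (-q ξ * T g ξ + g ξ) ξ := fun g ξ => by rw [hT']; exact hd g ξ
  refine ⟨T, hd', fun g hg => ?_⟩
  obtain ⟨⟨a, ha⟩, b, hb⟩ := hg
  have he : Tendsto (fun ξ : ℝ => Real.exp (k * ξ)) atTop atTop :=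
    Real.tendsto_exp_atTop.comp (tendsto_id.const_mul_atTop hk)
  refine ⟨⟨_, stable_tendsto hk hψ hψ' (tendsto_atTop_mono hl (he.const_mul_atTop hc')) (hd' g)
    hqt ha⟩, ?_⟩
  -- After reflection the equation is expanding, with weight `1 / ψ (-ξ)`.
  have hc : 0 < c := by
    have := (hψ 0).trans_le (hu 0)
    simpa using this
  refine ⟨-(-b / k), tendsto_atBot_of_neg ?_⟩
  refine unstable_tendsto (q := fun ξ => q (-ξ)) (ψ := fun ξ => 1 / ψ (-ξ)) (f := fun ξ => -g (-ξ))
    (M := ‖T g‖) hk (fun ξ => one_div_pos.mpr (hψ _)) (fun ξ => ?_) ?_ (fun ξ => ?_)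
    (fun ξ => bcf_abs_le _ _) (hqb.comp tendsto_neg_atTop_atBot)
    (hb.comp tendsto_neg_atTop_atBot).neg
  · have h1 := (hψ (-ξ)).ne'
    refine ((hasDerivAt_const ξ (1 : ℝ)).div (hasDerivAt_comp_neg (hψ' (-ξ))) h1).congr_deriv ?_
    field_simp
    ring
  · refine tendsto_atTop_mono (f := fun ξ => c⁻¹ * Real.exp (k * ξ)) (fun ξ => ?_)
      (he.const_mul_atTop (inv_pos.mpr hc))
    rw [le_div_iff₀ (hψ _)]
    calc c⁻¹ * Real.exp (k * ξ) * ψ (-ξ)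
        ≤ c⁻¹ * Real.exp (k * ξ) * (c * Real.exp (k * (-ξ))) := by gcongr; exact hu _
      _ = (c⁻¹ * c) * (Real.exp (k * ξ) * Real.exp (k * (-ξ))) := by ring
      _ = 1 := by rw [← Real.exp_add]; simp [hc.ne']
  · exact (hasDerivAt_comp_neg (hd' g (-ξ))).congr_deriv (by ring)

lemma exists_reflection : ∃ T : BC →L[ℝ] BC, ∀ g ξ, T g ξ = g (-ξ) :=
  exists_clm (fun (g : BC) ξ => g (-ξ)) 1 (fun g h ξ => rfl)
    (fun a g ξ => rfl) (fun g => g.continuous.comp continuous_neg)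
    (fun g ξ => by rw [one_mul]; exact bcf_abs_le g _)

/-- The logarithmic derivative of `exp (k ξ) * (k - tanh ξ)`, the positive zero mode of
`d²/dξ² + 2 sech² - k²` which vanishes at `-∞`. -/
def qf (k ξ : ℝ) : ℝ := k - sech ξ ^ 2 / (k - Real.tanh ξ)

lemma tanh_bounds (ξ : ℝ) : -1 < Real.tanh ξ ∧ Real.tanh ξ < 1 :=
  ⟨Real.neg_one_lt_tanh ξ, Real.tanh_lt_one ξ⟩

lemma qf_tendsto_atTop {k : ℝ} (hk : 1 < k) : Tendsto (qf k) atTop (nhds k) := by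
  have h := (tendsto_sech_atTop.pow 2).div (tendsto_tanh_atTop.const_sub k) (by linarith)
  have := h.const_sub k
  simp only [ne_eq, OfNat.ofNat_ne_zero, not_false_eq_true, zero_pow, zero_div, sub_zero] at this
  exact this

lemma qf_tendsto_atBot {k : ℝ} (hk : 1 < k) : Tendsto (qf k) atBot (nhds k) := by
  have h := (tendsto_sech_atBot.pow 2).div (tendsto_tanh_atBot.const_sub k) (by linarith)
  have := h.const_sub k
  simp only [ne_eq, OfNat.ofNat_ne_zero, not_false_eq_true, zero_pow, zero_div, sub_zero] at this
  exact this

/-- The Riccati equation behind the factorization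
`d²/dξ² + 2 sech² - k² = (d/dξ + q) (d/dξ - q)`. -/
lemma hasDerivAt_qf {k : ℝ} (hk : 1 < k) (ξ : ℝ) :
    HasDerivAt (qf k) (k ^ 2 - 1 + Real.tanh ξ ^ 2 - sech ξ ^ 2 - qf k ξ ^ 2) ξ := by
  have h1 : k - Real.tanh ξ ≠ 0 := by linarith [(tanh_bounds ξ).2]
  refine ((((hasDerivAt_sech ξ).pow 2).div ((hasDerivAt_tanh ξ).const_sub k) h1).const_sub
    k).congr_deriv ?_
  have h2 := tanh_sq_add_sech_sq ξ
  have h3 : Real.tanh ξ ^ 2 = 1 - sech ξ ^ 2 := by linarith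
  rw [h3, qf]
  simp only [Pi.pow_apply]
  field_simp
  ring

lemma exists_R {k : ℝ} (hk : 1 < k) :
    ∃ T : BC →L[ℝ] BC,
      (∀ g ξ, HasDerivAt (T g) (-qf k ξ * T g ξ + g ξ) ξ) ∧ ∀ g : BC, HasLims g → HasLims (T g) := by
  refine exists_left_solver (ψ := fun ξ => Real.exp (k * ξ) * (k - Real.tanh ξ)) (c := k + 1)
    (c' := k - 1) (k := k) (by linarith) (by linarith) (fun ξ => ?_) (fun ξ => ?_) (fun ξ => ?_)
    (qf_tendsto_atTop hk) (qf_tendsto_atBot hk)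
  · have h1 : k - Real.tanh ξ ≠ 0 := by linarith [(tanh_bounds ξ).2]
    refine ((((hasDerivAt_id ξ).const_mul k).exp).mul
      ((hasDerivAt_tanh ξ).const_sub k)).congr_deriv ?_
    simp only [qf, id]
    field_simp
    ring
  · rw [mul_comm]
    exact mul_le_mul_of_nonneg_left (by linarith [(tanh_bounds ξ).2]) (Real.exp_pos _).le
  · rw [mul_comm (k + 1)]
    exact mul_le_mul_of_nonneg_left (by linarith [(tanh_bounds ξ).1]) (Real.exp_pos _).le

/-- The expanding counterpart of `exists_R`, obtained by reflecting the line, which turns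
`d/dξ - q` into `-(d/dξ + q (-ξ))`. -/
lemma exists_Q {k : ℝ} (hk : 1 < k) :
    ∃ T : BC →L[ℝ] BC,
      (∀ g ξ, HasDerivAt (T g) (qf k ξ * T g ξ + g ξ) ξ) ∧ ∀ g : BC, HasLims g → HasLims (T g) := by
  have key : ∃ T : BC →L[ℝ] BC, (∀ g ξ, HasDerivAt (T g) (-qf k (-ξ) * T g ξ + g ξ) ξ) ∧
      ∀ g : BC, HasLims g → HasLims (T g) := by
    refine exists_left_solver (ψ := fun ξ => Real.exp (k * ξ) / (k + Real.tanh ξ))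
      (q := fun ξ => qf k (-ξ)) (c := 1 / (k - 1))
      (c' := 1 / (k + 1)) (k := k) (by linarith) (by positivity) (fun ξ => ?_) (fun ξ => ?_)
      (fun ξ => ?_)
      ((qf_tendsto_atBot hk).comp tendsto_neg_atTop_atBot)
      ((qf_tendsto_atTop hk).comp tendsto_neg_atBot_atTop)
    · have h1 : k + Real.tanh ξ ≠ 0 := by linarith [(tanh_bounds ξ).1]
      refine ((((hasDerivAt_id ξ).const_mul k).exp).div
        ((hasDerivAt_tanh ξ).const_add k) h1).congr_deriv ?_
      simp only [qf, id, Real.tanh_neg, sech_neg, sub_neg_eq_add]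
      field_simp
    · rw [one_div, mul_comm, div_eq_mul_inv]
      refine mul_le_mul_of_nonneg_left ?_ (Real.exp_pos _).le
      exact inv_anti₀ (by linarith [(tanh_bounds ξ).1]) (by linarith [(tanh_bounds ξ).2])
    · rw [one_div, mul_comm (k - 1)⁻¹, div_eq_mul_inv]
      refine mul_le_mul_of_nonneg_left ?_ (Real.exp_pos _).le
      exact inv_anti₀ (by linarith) (by linarith [(tanh_bounds ξ).1])
  obtain ⟨T, hT, hTl⟩ := key
  obtain ⟨N, hN⟩ := exists_reflection
  have hN' : ∀ g, (N g : ℝ → ℝ) = fun ξ => g (-ξ) := fun g => funext (hN g)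
  refine ⟨-(N.comp (T.comp N)), fun g ξ => ?_, fun g hg => ?_⟩
  · have h1 : ((-(N.comp (T.comp N))) g : ℝ → ℝ) = fun ξ => -T (N g) (-ξ) := by
      ext x; simp [hN]
    rw [h1]
    refine (hasDerivAt_comp_neg (hT (N g) (-ξ))).neg.congr_deriv ?_
    simp [hN]
  · have h1 : ((-(N.comp (T.comp N))) g : ℝ → ℝ) = fun ξ => -T (N g) (-ξ) := by
      ext x; simp [hN]
    rw [h1]
    have h2 : HasLims (N g) := by rw [hN']; exact hg.comp_neg
    obtain ⟨⟨a, ha⟩, b, hb⟩ := (hTl _ h2).comp_neg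
    exact ⟨⟨_, ha.neg⟩, _, hb.neg⟩

/-- The solution `u = sech ξ ∫₀^ξ cosh w` of `u' = -tanh ξ u + w`, `u 0 = 0`. -/
lemma exists_S :
    ∃ T : BC →L[ℝ] BC,
      (∀ g ξ, HasDerivAt (T g) (-Real.tanh ξ * T g ξ + g ξ) ξ) ∧
      ∀ g : BC, HasLims g → HasLims (T g) := by
  have hc (g : BC) : Continuous (fun s => Real.cosh s * g s) :=
    Real.continuous_cosh.mul g.continuous
  have hd (g : BC) (ξ : ℝ) :
      HasDerivAt (fun ξ => sech ξ * ∫ s in (0 : ℝ)..ξ, Real.cosh s * g s)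
        (-Real.tanh ξ * (sech ξ * ∫ s in (0 : ℝ)..ξ, Real.cosh s * g s) + g ξ) ξ := by
    refine ((hasDerivAt_sech ξ).mul ((hc g).integral_hasStrictDerivAt 0 ξ).hasDerivAt).congr_deriv ?_
    have : sech ξ * Real.cosh ξ = 1 := by
      rw [sech, one_div, inv_mul_cancel₀ (Real.cosh_pos ξ).ne']
    linear_combination (g ξ) * this
  obtain ⟨T, hT⟩ := exists_clm (fun (g : BC) ξ =>
      sech ξ * ∫ s in (0 : ℝ)..ξ, Real.cosh s * g s) 1
    (fun g h ξ => by
      rw [← mul_add, ← intervalIntegral.integral_add ((hc g).intervalIntegrable _ _)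
        ((hc h).intervalIntegrable _ _)]
      simp [mul_add])
    (fun a g ξ => by
      rw [smul_eq_mul, mul_left_comm, ← intervalIntegral.integral_const_mul]
      simp [mul_left_comm])
    (fun g => continuous_iff_continuousAt.mpr fun ξ => (hd g ξ).continuousAt)
    (fun g ξ => by
      have h1 : ‖∫ s in (0 : ℝ)..ξ, Real.cosh s * g s‖ ≤ |∫ s in (0 : ℝ)..ξ, Real.cosh s * ‖g‖| := by
        refine intervalIntegral.norm_integral_le_abs_of_norm_le (ae_of_all _ fun s => ?_)
          ((Real.continuous_cosh.mul continuous_const).intervalIntegrable _ _)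
        rw [Real.norm_eq_abs, abs_mul, abs_of_pos (Real.cosh_pos s)]
        exact mul_le_mul_of_nonneg_left (bcf_abs_le g s) (Real.cosh_pos s).le
      have h2 : ∫ s in (0 : ℝ)..ξ, Real.cosh s = Real.sinh ξ := by
        rw [intervalIntegral.integral_eq_sub_of_hasDerivAt (fun x _ => Real.hasDerivAt_sinh x)
          (Real.continuous_cosh.intervalIntegrable _ _)]
        simp
      rw [intervalIntegral.integral_mul_const, h2, abs_mul, abs_norm] at h1
      rw [norm_mul, Real.norm_eq_abs, abs_of_pos (sech_pos ξ), one_mul]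
      refine (mul_le_mul_of_nonneg_left h1 (sech_pos ξ).le).trans ?_
      rw [← mul_assoc]
      refine mul_le_of_le_one_left (norm_nonneg _) ?_
      have : sech ξ * |Real.sinh ξ| = |Real.tanh ξ| := by
        rw [Real.tanh_eq_sinh_div_cosh, abs_div, abs_of_pos (Real.cosh_pos ξ), sech]; ring
      rw [this]; exact (Real.abs_tanh_lt_one ξ).le)
  have hd' : ∀ g ξ, HasDerivAt (T g) (-Real.tanh ξ * T g ξ + g ξ) ξ := fun g ξ => by
    have h1 : (T g : ℝ → ℝ) = fun ξ => sech ξ * ∫ s in (0 : ℝ)..ξ, Real.cosh s * g s := funext (hT g)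
    rw [h1]; exact hd g ξ
  refine ⟨T, hd', fun g hg => ?_⟩
  obtain ⟨⟨a, ha⟩, b, hb⟩ := hg
  refine ⟨⟨_, stable_tendsto one_pos Real.cosh_pos hasDerivAt_cosh' tendsto_cosh_atTop (hd' g)
    tendsto_tanh_atTop ha⟩, -b / 1, tendsto_atBot_of_neg ?_⟩
  refine stable_tendsto (q := Real.tanh) one_pos Real.cosh_pos hasDerivAt_cosh' tendsto_cosh_atTop
    (fun ξ => ?_) tendsto_tanh_atTop (hb.comp tendsto_neg_atTop_atBot).neg
  refine (hasDerivAt_comp_neg (hd' g (-ξ))).congr_deriv ?_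
  rw [Real.tanh_neg, Function.comp_apply]
  ring

lemma sech_integrableOn (g : BC) (ξ : ℝ) :
    IntegrableOn (fun s => sech s * g s) (Set.Iic ξ) :=
  weight_integrableOn one_pos sech_pos continuous_sech
    (fun ξ => by rw [one_mul ξ]; exact sech_le_exp ξ) g.continuous (bcf_abs_le g) ξ

lemma sech_integrable (g : BC) : Integrable (fun s => sech s * g s) := by
  obtain ⟨N, hN⟩ := exists_reflection
  have h1 := sech_integrableOn g 0
  have h2 : IntegrableOn (fun s => sech s * N g s) (Set.Iic (-0)) := by
    rw [neg_zero]; exact sech_integrableOn (N g) 0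
  have h3 := h2.comp_neg_Ici
  simp only [sech_neg, hN, neg_neg] at h3
  rw [← integrableOn_univ, ← Set.Iic_union_Ici (a := (0 : ℝ))]
  exact h1.union h3

/-- `sech` as a bounded continuous function. -/
def sechB : BC := BoundedContinuousFunction.ofNormedAddCommGroup sech continuous_sech 1
  fun ξ => by rw [Real.norm_eq_abs, abs_of_pos (sech_pos ξ)]; exact sech_le_one ξ

lemma sechB_apply (ξ : ℝ) : sechB ξ = sech ξ := rfl

/-- Normalization of the pairing with the translation mode. -/
lemma integral_sech_sq : ∫ s, sech s * sechB s = 2 := by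
  have h : ∀ ξ, HasDerivAt Real.tanh (sech ξ * sechB ξ) ξ := fun ξ =>
    (hasDerivAt_tanh ξ).congr_deriv (by rw [sechB_apply]; ring)
  rw [integral_of_hasDerivAt_of_tendsto h (sech_integrable sechB) tendsto_tanh_atBot
    tendsto_tanh_atTop]
  norm_num

/-- Half the pairing with the translation mode `sech`; subtracting `c g • sech` projects onto the
range of `d²/dξ² + 2 sech² - 1`. -/
lemma exists_pairing : ∃ c : BC →L[ℝ] ℝ, ∀ g : BC, ∫ s, sech s * (g s - c g * sech s) = 0 := by
  have h1 : Integrable sech := by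
    have := sech_integrable (BoundedContinuousFunction.const ℝ 1)
    simpa using this
  let L : BC →ₗ[ℝ] ℝ :=
    { toFun := fun g => (∫ s, sech s * g s) / 2
      map_add' := fun g h => by
        rw [← add_div, ← integral_add (sech_integrable g) (sech_integrable h)]
        simp [mul_add]
      map_smul' := fun a g => by
        rw [smul_eq_mul, RingHom.id_apply, ← mul_div_assoc, ← integral_const_mul]
        simp [mul_left_comm] }
  refine ⟨L.mkContinuous ((∫ s, sech s) / 2) fun g => ?_, fun g => ?_⟩
  · change ‖(∫ s, sech s * g s) / 2‖ ≤ _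
    have h2 : ‖∫ s, sech s * g s‖ ≤ ∫ s, sech s * ‖g‖ := by
      refine norm_integral_le_of_norm_le (h1.mul_const _) (ae_of_all _ fun s => ?_)
      rw [Real.norm_eq_abs, abs_mul, abs_of_pos (sech_pos s)]
      exact mul_le_mul_of_nonneg_left (bcf_abs_le g s) (sech_pos s).le
    rw [integral_mul_const] at h2
    rw [norm_div, Real.norm_two]
    linarith
  · change ∫ s, sech s * (g s - (∫ s, sech s * g s) / 2 * sech s) = 0
    have h2 : ∀ a : ℝ, ∫ s, sech s * (g s - a * sech s) = (∫ s, sech s * g s) - a * 2 := by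
      intro a
      rw [← integral_sech_sq, ← integral_const_mul,
        ← integral_sub (sech_integrable g) ((sech_integrable sechB).const_mul a)]
      congr 1; ext s; rw [sechB_apply]; ring
    rw [h2]; ring

/-- After projection, `d/dξ - tanh` has a bounded right inverse: for a right side orthogonal to
`sech`, integrating `sech g` from either end gives the same function, and each representation is
bounded on its own half-line. -/
lemma exists_P : ∃ (c : BC →L[ℝ] ℝ) (T : BC →L[ℝ] BC),
    (∀ g ξ, HasDerivAt (T g) (Real.tanh ξ * T g ξ + (g ξ - c g * sech ξ)) ξ) ∧
    ∀ g : BC, HasLims g → HasLims (T g) := by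
  obtain ⟨c, hc⟩ := exists_pairing
  obtain ⟨N, hN⟩ := exists_reflection
  let E : BC →L[ℝ] BC := ContinuousLinearMap.id ℝ BC - c.smulRight sechB
  have hE : ∀ g ξ, E g ξ = g ξ - c g * sech ξ := fun g ξ => rfl
  have hd (g : BC) (ξ : ℝ) := leftInt_hasDerivAt (q := fun ξ => -Real.tanh ξ) sech_pos
    hasDerivAt_sech g.continuous (sech_integrableOn g) ξ
  have hb0 (g : BC) (ξ : ℝ) (hξ : ξ ≤ 0) : |leftInt sech g ξ| ≤ 2 * ‖g‖ := by
    have := leftInt_bound (c := 2) (c' := 1) one_pos sech_pos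
      (fun ξ => by rw [one_mul]; exact sech_le_exp ξ) (bcf_abs_le g) one_pos
      (by rw [one_mul, one_mul]; exact exp_le_sech hξ)
    simpa using this
  have hb (g : BC) (ξ : ℝ) : |leftInt sech (E g) ξ| ≤ 2 * ‖E g‖ := by
    rcases le_total ξ 0 with h | h
    · exact hb0 _ ξ h
    · have h1 : leftInt sech (E g) ξ = -leftInt sech (N (E g)) (-ξ) := by
        have h2 : (∫ s in Set.Iic ξ, sech s * E g s) + ∫ s in Set.Ioi ξ, sech s * E g s = 0 := by
          rw [intervalIntegral.integral_Iic_add_Ioi (sech_integrableOn _ _)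
            (sech_integrable _).integrableOn]
          exact hc g
        have h3 : ∫ s in Set.Iic (-ξ), sech s * N (E g) s = ∫ s in Set.Ioi ξ, sech s * E g s := by
          have := integral_comp_neg_Iic (-ξ) (fun s => sech s * E g s)
          rw [neg_neg] at this
          rw [← this]
          simp only [hN, sech_neg]
        unfold leftInt
        rw [h3, sech_neg, ← neg_div]
        congr 1
        linarith
      have h4 : ‖N (E g)‖ ≤ ‖E g‖ := (BoundedContinuousFunction.norm_le (norm_nonneg _)).mpr
        fun s => by rw [hN]; exact bcf_abs_le _ _
      rw [h1, abs_neg]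
      exact (hb0 _ _ (by linarith)).trans (by linarith)
  obtain ⟨T, hT⟩ := exists_clm (fun g : BC => leftInt sech (E g)) (2 * ‖E‖)
    (fun g h ξ => by
      rw [map_add]
      exact leftInt_add ξ (sech_integrableOn (E g) ξ) (sech_integrableOn (E h) ξ))
    (fun a g ξ => by rw [map_smul]; exact leftInt_smul a ξ)
    (fun g => continuous_iff_continuousAt.mpr fun ξ => (hd (E g) ξ).continuousAt)
    (fun g ξ => (hb g ξ).trans (by linarith [E.le_opNorm g]))
  have hd' : ∀ g ξ, HasDerivAt (T g) (Real.tanh ξ * T g ξ + (g ξ - c g * sech ξ)) ξ := fun g ξ => by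
    have h1 : (T g : ℝ → ℝ) = leftInt sech (E g) := funext (hT g)
    rw [h1]; exact (hd (E g) ξ).congr_deriv (by rw [hE]; ring)
  refine ⟨c, T, hd', fun g hg => ?_⟩
  obtain ⟨⟨a, ha⟩, b, hb⟩ := hg
  refine ⟨⟨_, unstable_tendsto one_pos Real.cosh_pos hasDerivAt_cosh' tendsto_cosh_atTop (hd' g)
    (bcf_abs_le _) tendsto_tanh_atTop (ha.sub (tendsto_sech_atTop.const_mul _))⟩, _,
    tendsto_atBot_of_neg (unstable_tendsto (q := Real.tanh) (M := ‖T g‖)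
    (f := fun ξ => -(g (-ξ) - c g * sech (-ξ))) one_pos Real.cosh_pos hasDerivAt_cosh'
    tendsto_cosh_atTop (fun ξ => ?_) (fun ξ => bcf_abs_le _ _) tendsto_tanh_atTop
    ((hb.sub (tendsto_sech_atBot.const_mul _)).comp tendsto_neg_atTop_atBot).neg)⟩
  refine (hasDerivAt_comp_neg (hd' g (-ξ))).congr_deriv ?_
  simp [Real.tanh_neg]
  ring

/-! ### The contraction argument -/

lemma isClosed_hasLim {F : Type*} [NormedAddCommGroup F] [CompleteSpace F] (l : Filter ℝ) [l.NeBot] :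
    IsClosed {f : BoundedContinuousFunction ℝ F | ∃ x, Tendsto f l (nhds x)} := by
  refine isClosed_of_closure_subset fun f hf => ?_
  rw [Set.mem_ofPred_eq, ← cauchy_map_iff_exists_tendsto, Metric.cauchy_iff]
  refine ⟨inferInstance, fun ε hε => ?_⟩
  obtain ⟨g, hg, hfg⟩ := Metric.mem_closure_iff.mp hf (ε / 3) (by linarith)
  rw [Set.mem_ofPred_eq, ← cauchy_map_iff_exists_tendsto, Metric.cauchy_iff] at hg
  obtain ⟨t, ht, htd⟩ := hg.2 (ε / 3) (by linarith)
  refine ⟨Set.image f (Set.preimage g t), image_mem_map ht, ?_⟩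
  rintro _ ⟨x, hx, rfl⟩ _ ⟨y, hy, rfl⟩
  have h1 := f.dist_coe_le_dist (g := g) x
  have h2 := f.dist_coe_le_dist (g := g) y
  have h3 := htd _ hx _ hy
  have h4 := dist_triangle4 (f x) (g x) (g y) (f y)
  rw [dist_comm (g y)] at h4
  linarith

section Contraction

variable {A E L F : Type*} [NormedAddCommGroup A] [NormedSpace ℝ A] [NormedAddCommGroup E]
  [NormedSpace ℝ E] [NormedAddCommGroup L] [NormedSpace ℝ L] [NormedAddCommGroup F]
  [NormedSpace ℝ F]

/-- Uniformly over the compact set of coefficients, a nonlinearity without linear part in the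
unknown has an arbitrarily small Lipschitz constant near the base point. -/
lemma small_lipschitz {n : A × E × L → F} {K : Set A} (hK : IsCompact K) {l₀ : L}
    (hn : ∀ a ∈ K, ContDiffAt ℝ 1 n (a, 0, l₀))
    (hn' : ∀ a ∈ K, ∀ y, fderiv ℝ n (a, 0, l₀) (0, y, 0) = 0) {η : ℝ} (hη : 0 < η) :
    ∃ ρ > 0, ∀ a ∈ K, ∀ y y' l, ‖y‖ < ρ → ‖y'‖ < ρ → ‖l - l₀‖ < ρ →
      ContinuousAt n (a, y, l) ∧ ‖n (a, y, l) - n (a, y', l)‖ ≤ η * ‖y - y'‖ := by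
  have key : ∀ᶠ x : E × E × L in nhds (0, 0, l₀), ∀ a ∈ K,
      ContinuousAt n (a, x.1, x.2.2) ∧
        ‖n (a, x.1, x.2.2) - n (a, x.2.1, x.2.2)‖ ≤ η * ‖x.1 - x.2.1‖ := by
    refine hK.eventually_forall_of_forall_eventually (P := fun (x : E × E × L) a =>
      ContinuousAt n (a, x.1, x.2.2) ∧
        ‖n (a, x.1, x.2.2) - n (a, x.2.1, x.2.2)‖ ≤ η * ‖x.1 - x.2.1‖) fun a ha => ?_
    have h1 := (hn a ha).eventually (by simp)
    have h2 := ((hn a ha).hasStrictFDerivAt one_ne_zero).isLittleO.def hη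
    have c1 : Tendsto (fun z : (E × E × L) × A => (z.2, z.1.1, z.1.2.2)) (nhds ((0, 0, l₀), a))
        (nhds (a, 0, l₀)) := Continuous.tendsto' (by fun_prop) _ _ rfl
    have c2 : Tendsto (fun z : (E × E × L) × A => ((z.2, z.1.1, z.1.2.2), (z.2, z.1.2.1, z.1.2.2)))
        (nhds ((0, 0, l₀), a)) (nhds ((a, 0, l₀), (a, 0, l₀))) :=
      Continuous.tendsto' (by fun_prop) _ _ rfl
    filter_upwards [c1.eventually h1, c2.eventually h2] with z z1 z2
    refine ⟨z1.continuousAt, ?_⟩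
    have e : ((z.2, z.1.1, z.1.2.2) : A × E × L) - (z.2, z.1.2.1, z.1.2.2) =
        (0, z.1.1 - z.1.2.1, 0) := by simp only [Prod.mk_sub_mk, sub_self]
    simp only [e, hn' a ha, sub_zero] at z2
    rw [Prod.norm_def, Prod.norm_def] at z2
    simp only [norm_zero] at z2
    rwa [max_eq_left (norm_nonneg (z.1.1 - z.1.2.1)),
      max_eq_right (norm_nonneg (z.1.1 - z.1.2.1))] at z2
  obtain ⟨ρ, hρ, h⟩ := Metric.eventually_nhds_iff.mp key
  refine ⟨ρ, hρ, fun a ha y y' l hy hy' hl => ?_⟩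
  refine h (y := (y, y', l)) ?_ a ha
  rw [dist_eq_norm, Prod.norm_def, Prod.norm_def]
  simp [hy, hy', hl]

lemma small_at_zero {n : A × E × L → F} {K : Set A} (hK : IsCompact K) {l₀ : L}
    (hn : ∀ a ∈ K, ContDiffAt ℝ 1 n (a, 0, l₀)) (hn0 : ∀ a ∈ K, n (a, 0, l₀) = 0)
    {μ : ℝ} (hμ : 0 < μ) :
    ∃ ε > 0, ∀ a ∈ K, ∀ l, ‖l - l₀‖ < ε → ‖n (a, 0, l)‖ ≤ μ := by
  have key : ∀ᶠ l : L in nhds l₀, ∀ a ∈ K, ‖n (a, 0, l)‖ ≤ μ := by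
    refine hK.eventually_forall_of_forall_eventually (P := fun l a => ‖n (a, 0, l)‖ ≤ μ)
      fun a ha => ?_
    have c1 : Tendsto (fun z : L × A => (z.2, (0 : E), z.1)) (nhds (l₀, a)) (nhds (a, 0, l₀)) :=
      Continuous.tendsto' (by fun_prop) _ _ rfl
    have h1 := ((hn a ha).continuousAt.tendsto.comp c1).norm
    rw [hn0 a ha, norm_zero] at h1
    filter_upwards [h1.eventually_lt_const hμ] with z hz using hz.le
  obtain ⟨ε, hε, h⟩ := Metric.eventually_nhds_iff.mp key
  exact ⟨ε, hε, fun a ha l hl => h (by rwa [dist_eq_norm]) a ha⟩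

/-- The fixed-point problem `f = n (a, Y f, l)` for functions with limits at both ends: it is
solvable with small `f` for `l` near `l₀` when `n` vanishes to second order in the unknown. -/
lemma exists_fixed_point [CompleteSpace F] {n : A × E × L → F} {K : Set A} (hK : IsCompact K) {l₀ : L}
    (hn : ∀ a ∈ K, ContDiffAt ℝ 1 n (a, 0, l₀))
    (hn' : ∀ a ∈ K, ∀ y, fderiv ℝ n (a, 0, l₀) (0, y, 0) = 0)
    (hn0 : ∀ a ∈ K, n (a, 0, l₀) = 0)
    (Y : BoundedContinuousFunction ℝ F →L[ℝ] BoundedContinuousFunction ℝ E)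
    (hY : ∀ f : BoundedContinuousFunction ℝ F, HasLims f → HasLims (Y f))
    {a : ℝ → A} (ha : Continuous a) (haK : ∀ ξ, a ξ ∈ K) (hal : HasLims a) {r : ℝ} (hr : 0 < r) :
    ∃ ε > 0, ∀ l, ‖l - l₀‖ < ε → ∃ f : BoundedContinuousFunction ℝ F,
      HasLims f ∧ ‖f‖ ≤ r ∧ (∀ ξ, f ξ = n (a ξ, Y f ξ, l)) ∧ (l = l₀ → f = 0) := by
  set C : ℝ := ‖Y‖ + 1 with hC
  have hC0 : 0 < C := by positivity
  have hYC : ∀ f ξ, ‖Y f ξ‖ ≤ C * ‖f‖ := fun f ξ =>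
    ((Y f).norm_coe_le_norm ξ).trans ((Y.le_opNorm f).trans
      (mul_le_mul_of_nonneg_right (by linarith) (norm_nonneg _)))
  obtain ⟨ρ, hρ, hlip⟩ := small_lipschitz hK hn hn' (η := 1 / (2 * C)) (by positivity)
  set r' : ℝ := min r (ρ / (2 * C)) with hr'
  have hr0 : 0 < r' := lt_min hr (by positivity)
  have hCr : C * r' < ρ := by
    have : r' ≤ ρ / (2 * C) := min_le_right _ _
    rw [le_div_iff₀ (by positivity)] at this
    nlinarith
  obtain ⟨ε, hε, hzero⟩ := small_at_zero hK hn hn0 (half_pos hr0)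
  refine ⟨min ε ρ, lt_min hε hρ, fun l hl => ?_⟩
  have hlε := hl.trans_le (min_le_left _ _)
  have hlρ := hl.trans_le (min_le_right _ _)
  have hYρ : ∀ f : BoundedContinuousFunction ℝ F, ‖f‖ ≤ r' → ∀ ξ, ‖Y f ξ‖ < ρ := fun f hf ξ =>
    ((hYC f ξ).trans (mul_le_mul_of_nonneg_left hf hC0.le)).trans_lt hCr
  have hdiff : ∀ f g : BoundedContinuousFunction ℝ F, ‖f‖ ≤ r' → ‖g‖ ≤ r' → ∀ ξ,
      ‖n (a ξ, Y f ξ, l) - n (a ξ, Y g ξ, l)‖ ≤ 1 / 2 * ‖f - g‖ := fun f g hf hg ξ => by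
    refine (hlip _ (haK ξ) _ _ l (hYρ f hf ξ) (hYρ g hg ξ) hlρ).2.trans ?_
    have h1 := hYC (f - g) ξ
    rw [map_sub, BoundedContinuousFunction.sub_apply] at h1
    calc 1 / (2 * C) * ‖Y f ξ - Y g ξ‖ ≤ 1 / (2 * C) * (C * ‖f - g‖) :=
          mul_le_mul_of_nonneg_left h1 (by positivity)
      _ = 1 / 2 * ‖f - g‖ := by field_simp
  have hbound : ∀ f : BoundedContinuousFunction ℝ F, ‖f‖ ≤ r' → ∀ ξ,
      ‖n (a ξ, Y f ξ, l)‖ ≤ r' := fun f hf ξ => by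
    have h1 := hdiff f 0 hf (by simp [hr0.le]) ξ
    have h2 := hzero _ (haK ξ) l hlε
    rw [map_zero, BoundedContinuousFunction.coe_zero, Pi.zero_apply, sub_zero] at h1
    have h3 := norm_le_norm_sub_add (n (a ξ, Y f ξ, l)) (n (a ξ, 0, l))
    linarith
  have hcont : ∀ f : BoundedContinuousFunction ℝ F, ‖f‖ ≤ r' →
      Continuous (fun ξ => n (a ξ, Y f ξ, l)) := fun f hf =>
    continuous_iff_continuousAt.mpr fun ξ =>
      ContinuousAt.comp' (f := fun ξ => (a ξ, Y f ξ, l))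
        (hlip _ (haK ξ) _ 0 l (hYρ f hf ξ) (by simpa using hρ) hlρ).1
        (ha.continuousAt.prodMk ((Y f).continuous.continuousAt.prodMk continuousAt_const))
  have hlims : ∀ f : BoundedContinuousFunction ℝ F, ‖f‖ ≤ r' → HasLims f →
      HasLims (fun ξ => n (a ξ, Y f ξ, l)) := fun f hf hfl => by
    have aux : ∀ {F' : Filter ℝ} [F'.NeBot] {b : A} {y : E}, Tendsto a F' (nhds b) →
        Tendsto (Y f) F' (nhds y) → ∃ x, Tendsto (fun ξ => n (a ξ, Y f ξ, l)) F' (nhds x) := by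
      intro F' _ b y h1 h2
      have hb : b ∈ K := hK.isClosed.mem_of_tendsto h1 (Eventually.of_forall haK)
      have hy : ‖y‖ < ρ := by
        refine lt_of_le_of_lt (le_of_tendsto h2.norm (Eventually.of_forall fun ξ => ?_)) hCr
        exact (hYC f ξ).trans (mul_le_mul_of_nonneg_left hf hC0.le)
      exact ⟨_, (hlip b hb y 0 l hy (by simpa using hρ) hlρ).1.tendsto.comp
        (h1.prodMk_nhds (h2.prodMk_nhds tendsto_const_nhds))⟩
    obtain ⟨⟨b, hb⟩, c, hc⟩ := hal
    obtain ⟨⟨y, hy⟩, z, hz⟩ := hY f hfl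
    exact ⟨aux hb hy, aux hc hz⟩
  let S : Set (BoundedContinuousFunction ℝ F) := {f | ‖f‖ ≤ r' ∧ HasLims f}
  have hS : IsClosed S := by
    have h1 : IsClosed {f : BoundedContinuousFunction ℝ F | ‖f‖ ≤ r'} :=
      isClosed_le continuous_norm continuous_const
    exact h1.inter ((isClosed_hasLim atTop).inter (isClosed_hasLim atBot))
  have : CompleteSpace S := hS.completeSpace_coe
  have h0S : (0 : BoundedContinuousFunction ℝ F) ∈ S :=
    ⟨by simp [hr0.le], ⟨0, tendsto_const_nhds⟩, 0, tendsto_const_nhds⟩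
  have : Nonempty S := ⟨⟨0, h0S⟩⟩
  let T : S → S := fun f => ⟨BoundedContinuousFunction.ofNormedAddCommGroup
    (fun ξ => n (a ξ, Y f ξ, l)) (hcont f f.2.1) r' (hbound f f.2.1),
    (BoundedContinuousFunction.norm_le hr0.le).mpr (hbound f f.2.1), hlims f f.2.1 f.2.2⟩
  have hT : ContractingWith (1 / 2) T := by
    refine ⟨by norm_num, LipschitzWith.of_dist_le_mul fun f g => ?_⟩
    rw [Subtype.dist_eq, Subtype.dist_eq, dist_eq_norm f.1 g.1]
    refine (BoundedContinuousFunction.dist_le (by positivity)).mpr fun ξ => ?_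
    rw [dist_eq_norm]
    have h := hdiff f g f.2.1 g.2.1 ξ
    change ‖n (a ξ, Y f.1 ξ, l) - n (a ξ, Y g.1 ξ, l)‖ ≤ _
    simpa using h
  set f := ContractingWith.fixedPoint T hT with hf
  have hfix : T f = f := hT.fixedPoint_isFixedPt
  have hfξ : ∀ ξ, f.1 ξ = n (a ξ, Y f.1 ξ, l) := fun ξ =>
    (congrArg (fun g : S => g.1 ξ) hfix).symm
  refine ⟨f.1, f.2.2, f.2.1.trans (min_le_left _ _), hfξ, fun hll => ?_⟩
  have h1 : ‖f.1‖ ≤ 1 / 2 * ‖f.1‖ := by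
    refine (BoundedContinuousFunction.norm_le (by positivity)).mpr fun ξ => ?_
    have h2 := hdiff f.1 0 f.2.1 h0S.1 ξ
    rw [map_zero, BoundedContinuousFunction.coe_zero, Pi.zero_apply, sub_zero, hll, hn0 _ (haK ξ), sub_zero,
      ← hll, ← hfξ] at h2
    exact h2
  exact norm_le_zero_iff.mp (by linarith)

end Contraction

/-! ### The nonlinearity -/

/-- The `x̂`-coordinate of the wall direction `(t, 0, s)` rotated by the angle `u` in the
`x̂ẑ`-plane. For `t = tanh ξ = sin Θ₀` and `s = sech ξ = cos Θ₀` it is `sin (Θ₀ + u)`. -/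
def rotS (t s u : ℝ) : ℝ := t * Real.cos u + s * Real.sin u

/-- The `ẑ`-coordinate of the wall direction `(t, 0, s)` rotated by the angle `u` in the
`x̂ẑ`-plane. For `t = tanh ξ = sin Θ₀` and `s = sech ξ = cos Θ₀` it is `cos (Θ₀ + u)`. -/
def rotC (t s u : ℝ) : ℝ := s * Real.cos u - t * Real.sin u

/-- In-plane part of the nonlinearity: the travelling-wave equation for the angle `Θ₀ + u` reads
`u'' = (t ^ 2 - s ^ 2) u + nonlinG - α V s`, where `u' = -t u + w` and `v' = q v + z`. The forcing
`α V s`, of first order in the unknown `V`, is kept apart. -/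
def nonlinG (α t s q u w v z V H₁ H₃ : ℝ) : ℝ :=
  2 * (Real.sin v / Real.cos v) * (q * v + z) * (s + w - t * u)
    - (rotS t s u * rotC t s u - s * t - (s ^ 2 - t ^ 2) * u)
    - (H₁ * rotC t s u - H₃ * rotS t s u + V * (q * v + z)) / Real.cos v
    - α * V * (w - t * u)

/-- Out-of-plane part of the nonlinearity: the travelling-wave equation for the elevation `v` reads
`v'' = (K₂ + t ^ 2 - s ^ 2) v + nonlinH + V s`. -/
def nonlinH (α K₂ t s q u w v z V H₁ H₂ H₃ K : ℝ) : ℝ :=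
  V * (Real.cos v * (s + w - t * u) - s) - α * V * (q * v + z)
    - (Real.sin v * Real.cos v * ((s + w - t * u) ^ 2 - rotS t s u ^ 2 - K)
        + (K₂ + t ^ 2 - s ^ 2) * v)
    - H₂ * Real.cos v + (H₁ * rotS t s u + H₃ * rotC t s u) * Real.sin v

/-- Values of the coefficients `(tanh ξ, sech ξ, qf k ξ)`. -/
abbrev Coef := ℝ × ℝ × ℝ

/-- Values of the linear response `(u, w, v, z, V)`. -/
abbrev Resp := ℝ × ℝ × ℝ × ℝ × ℝ

/-- Parameters `(H₁, H₂, H₃, K)`, with `K` the perturbed anisotropy constant. -/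
abbrev Par := ℝ × ℝ × ℝ × ℝ

/-- The two components of the nonlinearity, as a map of coefficients, response and parameters. -/
def nonlin (α K₂ : ℝ) (x : Coef × Resp × Par) : ℝ × ℝ :=
  (nonlinG α x.1.1 x.1.2.1 x.1.2.2 x.2.1.1 x.2.1.2.1 x.2.1.2.2.1 x.2.1.2.2.2.1 x.2.1.2.2.2.2
    x.2.2.1 x.2.2.2.2.1,
   nonlinH α K₂ x.1.1 x.1.2.1 x.1.2.2 x.2.1.1 x.2.1.2.1 x.2.1.2.2.1 x.2.1.2.2.2.1 x.2.1.2.2.2.2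
    x.2.2.1 x.2.2.2.1 x.2.2.2.2.1 x.2.2.2.2.2)

lemma nonlin_contDiffAt (α K₂ : ℝ) (a : Coef) (l : Par) :
    ContDiffAt ℝ 1 (nonlin α K₂) (a, 0, l) := by
  have h : Real.cos ((a, (0 : Resp), l) : Coef × Resp × Par).2.1.2.2.1 ≠ 0 := by simp
  unfold nonlin nonlinG nonlinH rotS rotC
  refine ContDiffAt.prodMk ?_ ?_
  · fun_prop (disch := exact h)
  · fun_prop

lemma nonlin_zero (α K₂ : ℝ) (a : Coef) : nonlin α K₂ (a, 0, (0, 0, 0, K₂)) = 0 := by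
  simp [nonlin, nonlinG, nonlinH, rotS, rotC, mul_comm]

/-- At the static wall the nonlinearity has no linear part in the response; its derivative there is
computed along the rays `τ • y`. -/
lemma nonlin_fderiv (α K₂ : ℝ) (a : Coef) (y : Resp) :
    fderiv ℝ (nonlin α K₂) (a, 0, (0, 0, 0, K₂)) (0, y, 0) = 0 := by
  obtain ⟨t, s, q⟩ := a
  obtain ⟨u, w, v, z, V⟩ := y
  have h1 : HasFDerivAt (nonlin α K₂) _ ((t, s, q), 0, (0, 0, 0, K₂)) :=
    ((nonlin_contDiffAt α K₂ (t, s, q) (0, 0, 0, K₂)).differentiableAt one_ne_zero).hasFDerivAt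
  have hl : ∀ x : ℝ, HasDerivAt (fun τ : ℝ => τ * x) x 0 := fun x => by
    simpa using (hasDerivAt_id (0 : ℝ)).mul_const x
  have h2 : HasDerivAt (fun τ : ℝ => (((t, s, q), (τ * u, τ * w, τ * v, τ * z, τ * V),
      (0, 0, 0, K₂)) : Coef × Resp × Par)) (0, (u, w, v, z, V), 0) 0 :=
    (hasDerivAt_const _ _).prodMk (((hl u).prodMk ((hl w).prodMk ((hl v).prodMk
      ((hl z).prodMk (hl V))))).prodMk (hasDerivAt_const _ _))
  have h3 := HasFDerivAt.comp_hasDerivAt_of_eq (0 : ℝ) h1 h2 (by simp; rfl)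
  have hsu := (Real.hasDerivAt_sin _).comp (0 : ℝ) (hl u)
  have hcu := (Real.hasDerivAt_cos _).comp (0 : ℝ) (hl u)
  have hsv := (Real.hasDerivAt_sin _).comp (0 : ℝ) (hl v)
  have hcv := (Real.hasDerivAt_cos _).comp (0 : ℝ) (hl v)
  have hS : HasDerivAt (fun τ => rotS t s (τ * u)) (s * u) 0 :=
    ((hcu.const_mul t).add (hsu.const_mul s)).congr_deriv (by simp)
  have hC : HasDerivAt (fun τ => rotC t s (τ * u)) (-(t * u)) 0 :=
    ((hcu.const_mul s).sub (hsu.const_mul t)).congr_deriv (by simp)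
  have hr : HasDerivAt (fun τ => q * (τ * v) + τ * z) (q * v + z) 0 :=
    ((hl v).const_mul q).add (hl z)
  have hd : HasDerivAt (fun τ => τ * w - t * (τ * u)) (w - t * u) 0 :=
    (hl w).sub ((hl u).const_mul t)
  have hp : HasDerivAt (fun τ => s + τ * w - t * (τ * u)) (w - t * u) 0 :=
    ((hl w).const_add s).sub ((hl u).const_mul t)
  have hc0 : (Real.cos ∘ fun τ : ℝ => τ * v) 0 ≠ 0 := by simp
  have h4 : HasDerivAt (fun τ : ℝ => nonlin α K₂ ((t, s, q), (τ * u, τ * w, τ * v, τ * z, τ * V),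
      (0, 0, 0, K₂))) (0, 0) 0 := by
    refine HasDerivAt.prodMk ?_ ?_
    · refine (((((((hsv.div hcv hc0).const_mul 2).mul hr).mul hp).sub
        (((hS.mul hC).sub (hasDerivAt_const _ (s * t))).sub ((hl u).const_mul (s ^ 2 - t ^ 2)))).sub
        ((((hC.const_mul 0).sub (hS.const_mul 0)).add ((hl V).mul hr)).div hcv hc0)).sub
        (((hl V).const_mul α).mul hd)).congr_deriv ?_
      simp [rotS, rotC]
      ring
    · refine ((((((hl V).mul ((hcv.mul hp).sub (hasDerivAt_const _ s))).sub
        (((hl V).const_mul α).mul hr)).sub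
        (((hsv.mul hcv).mul (((hp.pow 2).sub (hS.pow 2)).sub (hasDerivAt_const _ K₂))).add
          ((hl v).const_mul (K₂ + t ^ 2 - s ^ 2)))).sub (hcv.const_mul 0)).add
          (((hS.const_mul 0).add (hC.const_mul 0)).mul hsv)).congr_deriv ?_
      simp [rotS, rotC]
      ring
  exact h3.unique h4

/-! ### The linear response -/

/-- The linearized problem with right side `f` and the velocity as an extra unknown. The velocity is
fixed by solvability of the in-plane equation, whose right side `f₁ - α V sech` has to be
orthogonal to `sech`; this is where `α ≠ 0` enters. -/
lemma exists_Y (α : ℝ) {k : ℝ} (hα : 0 < α) (hk : 1 < k) :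
    ∃ Y : BoundedContinuousFunction ℝ (ℝ × ℝ) →L[ℝ] BoundedContinuousFunction ℝ Resp,
      (∀ f : BoundedContinuousFunction ℝ (ℝ × ℝ), HasLims f → HasLims (Y f)) ∧
      ∀ f, ∃ (V : ℝ) (u w v z : ℝ → ℝ), (∀ ξ, Y f ξ = (u ξ, w ξ, v ξ, z ξ, V)) ∧
        (∀ ξ, HasDerivAt u (-Real.tanh ξ * u ξ + w ξ) ξ) ∧
        (∀ ξ, HasDerivAt w (Real.tanh ξ * w ξ + ((f ξ).1 - α * V * sech ξ)) ξ) ∧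
        (∀ ξ, HasDerivAt v (qf k ξ * v ξ + z ξ) ξ) ∧
        (∀ ξ, HasDerivAt z (-qf k ξ * z ξ + ((f ξ).2 + V * sech ξ)) ξ) := by
  obtain ⟨c, P, hP, hPl⟩ := exists_P
  obtain ⟨S, hS, hSl⟩ := exists_S
  obtain ⟨R, hR, hRl⟩ := exists_R hk
  obtain ⟨Q, hQ, hQl⟩ := exists_Q hk
  let f₁ : BoundedContinuousFunction ℝ (ℝ × ℝ) →L[ℝ] BC :=
    (ContinuousLinearMap.fst ℝ ℝ ℝ).compLeftContinuousBounded ℝ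
  let f₂ : BoundedContinuousFunction ℝ (ℝ × ℝ) →L[ℝ] BC :=
    (ContinuousLinearMap.snd ℝ ℝ ℝ).compLeftContinuousBounded ℝ
  let cV : BoundedContinuousFunction ℝ (ℝ × ℝ) →L[ℝ] ℝ := α⁻¹ • (c.comp f₁)
  let W := P.comp f₁
  let U := S.comp W
  let Z := R.comp (f₂ + cV.smulRight sechB)
  let X := Q.comp Z
  obtain ⟨Y, hY⟩ := exists_clm (G := BoundedContinuousFunction ℝ (ℝ × ℝ)) (E := Resp)
    (fun f ξ => (U f ξ, W f ξ, X f ξ, Z f ξ, cV f)) (‖U‖ + ‖W‖ + ‖X‖ + ‖Z‖ + ‖cV‖)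
    (fun f g ξ => by simp only [map_add, BoundedContinuousFunction.add_apply, Prod.mk_add_mk])
    (fun a f ξ => by simp only [map_smul, BoundedContinuousFunction.smul_apply, Prod.smul_mk])
    (fun f => by fun_prop)
    (fun f ξ => by
      have hb : ∀ T : BoundedContinuousFunction ℝ (ℝ × ℝ) →L[ℝ] BC, ‖T f ξ‖ ≤ ‖T‖ * ‖f‖ :=
        fun T => ((T f).norm_coe_le_norm ξ).trans (T.le_opNorm f)
      have h0 : ∀ T : BoundedContinuousFunction ℝ (ℝ × ℝ) →L[ℝ] BC, 0 ≤ ‖T‖ * ‖f‖ :=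
        fun T => by positivity
      have h5 : 0 ≤ ‖cV‖ * ‖f‖ := by positivity
      have h6 := cV.le_opNorm f
      simp only [norm_prod_le_iff]
      refine ⟨?_, ?_, ?_, ?_, ?_⟩ <;>
        linarith [hb U, hb W, hb X, hb Z, h0 U, h0 W, h0 X, h0 Z])
  refine ⟨Y, fun f hf => ?_, fun f => ⟨cV f, U f, W f, X f, Z f, hY f, ?_, ?_, ?_, ?_⟩⟩
  · have hf1 : HasLims (f₁ f) := by
      obtain ⟨⟨x, hx⟩, y, hy⟩ := hf
      exact ⟨⟨_, (continuous_fst.tendsto x).comp hx⟩, _, (continuous_fst.tendsto y).comp hy⟩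
    have hf2 : HasLims ((f₂ + cV.smulRight sechB) f) := by
      obtain ⟨⟨x, hx⟩, y, hy⟩ := hf
      exact ⟨⟨_, ((continuous_snd.tendsto x).comp hx).add (tendsto_sech_atTop.const_mul (cV f))⟩,
        _, ((continuous_snd.tendsto y).comp hy).add (tendsto_sech_atBot.const_mul (cV f))⟩
    have hW : HasLims (W f) := hPl _ hf1
    have hU : HasLims (U f) := hSl _ hW
    have hZ : HasLims (Z f) := hRl _ hf2
    have hX : HasLims (X f) := hQl _ hZ
    have e : (Y f : ℝ → Resp) = fun ξ => (U f ξ, W f ξ, X f ξ, Z f ξ, cV f) := funext (hY f)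
    rw [e]
    obtain ⟨⟨w, hw⟩, w', hw'⟩ := hW
    obtain ⟨⟨u, hu⟩, u', hu'⟩ := hU
    obtain ⟨⟨z, hz⟩, z', hz'⟩ := hZ
    obtain ⟨⟨x, hx⟩, x', hx'⟩ := hX
    exact ⟨⟨_, hu.prodMk_nhds (hw.prodMk_nhds (hx.prodMk_nhds
        (hz.prodMk_nhds tendsto_const_nhds)))⟩,
      _, hu'.prodMk_nhds (hw'.prodMk_nhds (hx'.prodMk_nhds
        (hz'.prodMk_nhds tendsto_const_nhds)))⟩
  · exact fun ξ => hS (W f) ξ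
  · refine fun ξ => (hP (f₁ f) ξ).congr_deriv ?_
    change Real.tanh ξ * W f ξ + ((f ξ).1 - c (f₁ f) * sech ξ) =
      Real.tanh ξ * W f ξ + ((f ξ).1 - α * (α⁻¹ * c (f₁ f)) * sech ξ)
    field_simp
  · exact fun ξ => hQ (Z f) ξ
  · exact fun ξ => hR ((f₂ + cV.smulRight sechB) f) ξ

/-! ### The travelling-wave equation in spherical coordinates -/

/-- The unit vector with in-plane direction `(S, C)` and elevation `v` over the `x̂ẑ`-plane. -/
def sph (S C v : ℝ) : Fin 3 → ℝ := ![S * Real.cos v, Real.sin v, C * Real.cos v]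

/-- First derivative of `sph` along a curve with angular speeds `p` (in-plane) and `r`. -/
def sph' (S C v p r : ℝ) : Fin 3 → ℝ :=
  ![C * p * Real.cos v - S * Real.sin v * r, Real.cos v * r,
    -(S * p * Real.cos v) - C * Real.sin v * r]

/-- Second derivative of `sph` along a curve with angular speeds `p`, `r` and angular
accelerations `a`, `b`. -/
def sph'' (S C v p r a b : ℝ) : Fin 3 → ℝ :=
  ![-(S * p ^ 2 * Real.cos v) + C * a * Real.cos v - 2 * C * p * Real.sin v * r
      - S * Real.cos v * r ^ 2 - S * Real.sin v * b,
    -(Real.sin v * r ^ 2) + Real.cos v * b,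
    -(C * p ^ 2 * Real.cos v) - S * a * Real.cos v + 2 * S * p * Real.sin v * r
      - C * Real.cos v * r ^ 2 - C * Real.sin v * b]

lemma hasDerivAt_vec3 {f g h : ℝ → ℝ} {f' g' h' ξ : ℝ} (hf : HasDerivAt f f' ξ)
    (hg : HasDerivAt g g' ξ) (hh : HasDerivAt h h' ξ) :
    HasDerivAt (fun x => ![f x, g x, h x]) ![f', g', h'] ξ := by
  rw [hasDerivAt_pi]
  intro i
  fin_cases i
  · exact hf
  · exact hg
  · exact hh

lemma hasDerivAt_sph {S C v : ℝ → ℝ} {p r ξ : ℝ} (hS : HasDerivAt S (C ξ * p) ξ)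
    (hC : HasDerivAt C (-(S ξ * p)) ξ) (hv : HasDerivAt v r ξ) :
    HasDerivAt (fun x => sph (S x) (C x) (v x)) (sph' (S ξ) (C ξ) (v ξ) p r) ξ := by
  refine hasDerivAt_vec3 ?_ ?_ ?_
  · exact (hS.mul hv.cos).congr_deriv (by ring)
  · exact hv.sin
  · exact (hC.mul hv.cos).congr_deriv (by ring)

lemma hasDerivAt_sph' {S C v p r : ℝ → ℝ} {a b ξ : ℝ} (hS : HasDerivAt S (C ξ * p ξ) ξ)
    (hC : HasDerivAt C (-(S ξ * p ξ)) ξ) (hv : HasDerivAt v (r ξ) ξ) (hp : HasDerivAt p a ξ)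
    (hr : HasDerivAt r b ξ) :
    HasDerivAt (fun x => sph' (S x) (C x) (v x) (p x) (r x))
      (sph'' (S ξ) (C ξ) (v ξ) (p ξ) (r ξ) a b) ξ := by
  refine hasDerivAt_vec3 ?_ ?_ ?_
  · exact (((hC.mul hp).mul hv.cos).sub ((hS.mul hv.sin).mul hr)).congr_deriv
      (by simp only [Pi.mul_apply]; ring)
  · exact (hv.cos.mul hr).congr_deriv (by ring)
  · exact (((hS.mul hp).mul hv.cos).neg.sub ((hC.mul hv.sin).mul hr)).congr_deriv
      (by simp only [Pi.mul_apply]; ring)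

/-- The left-hand side of the travelling-wave equation, as a function of the profile and its first
two derivatives. -/
def twExpr (α V H₁ H₂ H₃ K : ℝ) (m m' m'' : Fin 3 → ℝ) : Fin 3 → ℝ :=
  V • m' + (α * V) • cross3 m m' +
    cross3 m (m'' + (dot3 m xhat) • xhat - (K * dot3 m yhat) • yhat + ![H₁, H₂, H₃])

/-- In spherical coordinates the travelling-wave equation is a pair of scalar equations. -/
lemma twExpr_sph {α V H₁ H₂ H₃ K S C v p r a b : ℝ} (hSC : S ^ 2 + C ^ 2 = 1)
    (h1 : V * Real.cos v * p - α * V * r - (b + Real.sin v * Real.cos v * (p ^ 2 - S ^ 2 - K)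
      + H₂ * Real.cos v - (H₁ * S + H₃ * C) * Real.sin v) = 0)
    (h2 : V * r + α * V * Real.cos v * p + Real.cos v * a - 2 * Real.sin v * r * p
      + S * C * Real.cos v + H₁ * C - H₃ * S = 0 ) :
    twExpr α V H₁ H₂ H₃ K (sph S C v) (sph' S C v p r) (sph'' S C v p r a b) = 0 := by
  have hv := Real.sin_sq_add_cos_sq v
  unfold twExpr sph sph' sph'' cross3 dot3 xhat yhat
  generalize Real.sin v = f at *
  generalize Real.cos v = c at *
  ext i
  fin_cases i <;> simp
  · grind
  · grind
  · grind

lemma rot_sq {t s : ℝ} (h : t ^ 2 + s ^ 2 = 1) (u : ℝ) :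
    rotS t s u ^ 2 + rotC t s u ^ 2 = 1 := by
  unfold rotS rotC
  linear_combination (t ^ 2 + s ^ 2) * Real.sin_sq_add_cos_sq u + h

/-- The profile with angles `Θ₀ + u` and `v`, where `Θ₀` is the angle of the static wall, solves the
travelling-wave equation once `f` is the nonlinearity evaluated at its own linear response. Its
first two derivatives converge wherever the response and `f` do. -/
lemma wall_solution {α k K₂ V H₁ H₂ H₃ K : ℝ} (hkK : k ^ 2 - 1 = K₂) (hk : 1 < k)
    {u w v z : ℝ → ℝ} {f : ℝ → ℝ × ℝ} (hf : Continuous f)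
    (hu : ∀ ξ, HasDerivAt u (-Real.tanh ξ * u ξ + w ξ) ξ)
    (hw : ∀ ξ, HasDerivAt w (Real.tanh ξ * w ξ + ((f ξ).1 - α * V * sech ξ)) ξ)
    (hv : ∀ ξ, HasDerivAt v (qf k ξ * v ξ + z ξ) ξ)
    (hz : ∀ ξ, HasDerivAt z (-qf k ξ * z ξ + ((f ξ).2 + V * sech ξ)) ξ)
    (hcos : ∀ ξ, Real.cos (v ξ) ≠ 0)
    (hfn : ∀ ξ, f ξ = nonlin α K₂ ((Real.tanh ξ, sech ξ, qf k ξ),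
      (u ξ, w ξ, v ξ, z ξ, V), (H₁, H₂, H₃, K))) :
    ∃ m' m'' : ℝ → Fin 3 → ℝ,
      (∀ ξ, HasDerivAt (fun x => sph (rotS (Real.tanh x) (sech x) (u x))
        (rotC (Real.tanh x) (sech x) (u x)) (v x)) (m' ξ) ξ) ∧
      (∀ ξ, HasDerivAt m' (m'' ξ) ξ) ∧ Continuous m'' ∧
      (∀ ξ, twExpr α V H₁ H₂ H₃ K (sph (rotS (Real.tanh ξ) (sech ξ) (u ξ))
        (rotC (Real.tanh ξ) (sech ξ) (u ξ)) (v ξ)) (m' ξ) (m'' ξ) = 0) ∧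
      ∀ l : Filter ℝ, ∀ x, Tendsto (fun ξ => ((Real.tanh ξ, sech ξ, qf k ξ),
        (u ξ, w ξ, v ξ, z ξ, V))) l (nhds x) → ∀ y, Tendsto f l (nhds y) →
        (∃ b, Tendsto m' l (nhds b)) ∧ ∃ b, Tendsto m'' l (nhds b) := by
  -- `Φ` and `Φ'` express the two derivatives through coefficients, response and `f`
  let Φ : Coef × Resp → Fin 3 → ℝ := fun x =>
    sph' (rotS x.1.1 x.1.2.1 x.2.1) (rotC x.1.1 x.1.2.1 x.2.1) x.2.2.2.1
      (x.1.2.1 + x.2.2.1 - x.1.1 * x.2.1) (x.1.2.2 * x.2.2.2.1 + x.2.2.2.2.1)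
  let Φ' : (Coef × Resp) × (ℝ × ℝ) → Fin 3 → ℝ := fun y =>
    sph'' (rotS y.1.1.1 y.1.1.2.1 y.1.2.1) (rotC y.1.1.1 y.1.1.2.1 y.1.2.1) y.1.2.2.2.1
      (y.1.1.2.1 + y.1.2.2.1 - y.1.1.1 * y.1.2.1) (y.1.1.2.2 * y.1.2.2.2.1 + y.1.2.2.2.2.1)
      (-(y.1.1.2.1 * y.1.1.1) + (y.1.1.1 ^ 2 - y.1.1.2.1 ^ 2) * y.1.2.1
        + (y.2.1 - α * V * y.1.1.2.1))
      ((K₂ + y.1.1.1 ^ 2 - y.1.1.2.1 ^ 2) * y.1.2.2.2.1 + (y.2.2 + V * y.1.1.2.1))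
  have hΦ : Continuous Φ := by
    refine continuous_pi fun i => ?_
    fin_cases i <;> simp [Φ, sph', rotS, rotC] <;> fun_prop
  have hΦ' : Continuous Φ' := by
    refine continuous_pi fun i => ?_
    fin_cases i <;> simp [Φ', sph'', rotS, rotC] <;> fun_prop
  let x : ℝ → Coef × Resp := fun ξ => ((Real.tanh ξ, sech ξ, qf k ξ), (u ξ, w ξ, v ξ, z ξ, V))
  have cu : Continuous u := continuous_iff_continuousAt.mpr fun ξ => (hu ξ).continuousAt
  have cw : Continuous w := continuous_iff_continuousAt.mpr fun ξ => (hw ξ).continuousAt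
  have cv : Continuous v := continuous_iff_continuousAt.mpr fun ξ => (hv ξ).continuousAt
  have cz : Continuous z := continuous_iff_continuousAt.mpr fun ξ => (hz ξ).continuousAt
  have cq : Continuous (qf k) :=
    continuous_iff_continuousAt.mpr fun ξ => (hasDerivAt_qf hk ξ).continuousAt
  have cx : Continuous x := by
    have := continuous_tanh
    have := continuous_sech
    fun_prop
  have hS : ∀ ξ, HasDerivAt (fun y => rotS (Real.tanh y) (sech y) (u y))
      (rotC (Real.tanh ξ) (sech ξ) (u ξ) * (sech ξ + w ξ - Real.tanh ξ * u ξ)) ξ := fun ξ => by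
    refine (((hasDerivAt_tanh ξ).mul (hu ξ).cos).add
      ((hasDerivAt_sech ξ).mul (hu ξ).sin)).congr_deriv ?_
    simp only [rotC]
    ring
  have hC : ∀ ξ, HasDerivAt (fun y => rotC (Real.tanh y) (sech y) (u y))
      (-(rotS (Real.tanh ξ) (sech ξ) (u ξ) * (sech ξ + w ξ - Real.tanh ξ * u ξ))) ξ := fun ξ => by
    refine (((hasDerivAt_sech ξ).mul (hu ξ).cos).sub
      ((hasDerivAt_tanh ξ).mul (hu ξ).sin)).congr_deriv ?_
    simp only [rotS]
    ring
  have hp : ∀ ξ, HasDerivAt (fun y => sech y + w y - Real.tanh y * u y)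
      (-(sech ξ * Real.tanh ξ) + (Real.tanh ξ ^ 2 - sech ξ ^ 2) * u ξ
        + ((f ξ).1 - α * V * sech ξ)) ξ := fun ξ => by
    refine (((hasDerivAt_sech ξ).add (hw ξ)).sub
      ((hasDerivAt_tanh ξ).mul (hu ξ))).congr_deriv ?_
    ring
  have hr : ∀ ξ, HasDerivAt (fun y => qf k y * v y + z y)
      ((K₂ + Real.tanh ξ ^ 2 - sech ξ ^ 2) * v ξ + ((f ξ).2 + V * sech ξ)) ξ := fun ξ => by
    refine (((hasDerivAt_qf hk ξ).mul (hv ξ)).add (hz ξ)).congr_deriv ?_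
    rw [← hkK]
    ring
  refine ⟨fun ξ => Φ (x ξ), fun ξ => Φ' (x ξ, f ξ), fun ξ => hasDerivAt_sph (hS ξ) (hC ξ) (hv ξ),
    fun ξ => hasDerivAt_sph' (hS ξ) (hC ξ) (hv ξ) (hp ξ) (hr ξ), by fun_prop, fun ξ => ?_,
    fun l y hy g hg => ⟨⟨_, (hΦ.tendsto y).comp hy⟩,
      ⟨_, (hΦ'.tendsto (y, g)).comp (hy.prodMk_nhds hg)⟩⟩⟩
  have h1 : (f ξ).1 = _ := congrArg Prod.fst (hfn ξ)
  have h2 : (f ξ).2 = _ := congrArg Prod.snd (hfn ξ)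
  refine twExpr_sph (rot_sq (tanh_sq_add_sech_sq ξ) _) ?_ ?_
  · change V * Real.cos (v ξ) * (sech ξ + w ξ - Real.tanh ξ * u ξ) -
      α * V * (qf k ξ * v ξ + z ξ) - ((K₂ + Real.tanh ξ ^ 2 - sech ξ ^ 2) * v ξ +
        ((f ξ).2 + V * sech ξ) + _ + _ - _) = 0
    rw [h2]
    simp only [nonlin, nonlinH]
    ring
  · change V * (qf k ξ * v ξ + z ξ) + α * V * Real.cos (v ξ) *
      (sech ξ + w ξ - Real.tanh ξ * u ξ) + Real.cos (v ξ) * (-(sech ξ * Real.tanh ξ) +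
        (Real.tanh ξ ^ 2 - sech ξ ^ 2) * u ξ + ((f ξ).1 - α * V * sech ξ)) -
      2 * Real.sin (v ξ) * (qf k ξ * v ξ + z ξ) * (sech ξ + w ξ - Real.tanh ξ * u ξ) + _ + _ - _ = 0
    rw [h1]
    simp only [nonlin, nonlinG]
    have := hcos ξ
    field_simp
    ring

/-! ### Behaviour at infinity -/

/-- A convergent function whose derivative converges has derivative tending to zero. -/
lemma deriv_lim_zero {l : Filter ℝ} (hl : l = atTop ∨ l = atBot) {g g' : ℝ → ℝ} {a b : ℝ}
    (hg : ∀ ξ, HasDerivAt g (g' ξ) ξ) (ha : Tendsto g l (nhds a)) (hb : Tendsto g' l (nhds b)) :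
    b = 0 := by
  have hmv : ∀ ξ : ℝ, ∃ c, ξ ≤ c ∧ c ≤ ξ + 1 ∧ g' c = g (ξ + 1) - g ξ := fun ξ => by
    obtain ⟨c, hc, hc'⟩ := exists_hasDerivAt_eq_slope g g' (lt_add_one ξ)
      (continuous_iff_continuousAt.mpr fun y => (hg y).continuousAt).continuousOn
      fun y _ => hg y
    exact ⟨c, hc.1.le, hc.2.le, by rw [hc']; simp⟩
  choose c h1 h2 h3 using hmv
  have hc : Tendsto c l l ∧ Tendsto (fun ξ : ℝ => ξ + 1) l l := by
    rcases hl with rfl | rfl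
    · exact ⟨tendsto_atTop_mono h1 tendsto_id, tendsto_atTop_add_const_right _ _ tendsto_id⟩
    · have h4 : Tendsto (fun ξ : ℝ => ξ + 1) atBot atBot :=
        tendsto_atBot_add_const_right _ _ tendsto_id
      exact ⟨tendsto_atBot_mono h2 h4, h4⟩
  have hne : l.NeBot := by rcases hl with rfl | rfl <;> infer_instance
  have h5 := hb.comp hc.1
  have h6 := (ha.comp hc.2).sub ha
  rw [sub_self] at h6
  exact tendsto_nhds_unique h5 (h6.congr fun ξ => (h3 ξ).symm)

lemma deriv_lim_zero_vec {l : Filter ℝ} (hl : l = atTop ∨ l = atBot) {g g' : ℝ → Fin 3 → ℝ}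
    {a b : Fin 3 → ℝ} (hg : ∀ ξ, HasDerivAt g (g' ξ) ξ) (ha : Tendsto g l (nhds a))
    (hb : Tendsto g' l (nhds b)) : b = 0 := by
  ext i
  exact deriv_lim_zero hl (fun ξ => hasDerivAt_pi.mp (hg ξ) i) (tendsto_pi_nhds.mp ha i)
    (tendsto_pi_nhds.mp hb i)

/-- The torque vanishes at the limits of a travelling wave. -/
lemma torque_zero {α V H₁ H₂ H₃ K : ℝ} {l : Filter ℝ} (hl : l = atTop ∨ l = atBot)
    {m m' m'' : ℝ → Fin 3 → ℝ} (hm : ∀ ξ, HasDerivAt m (m' ξ) ξ)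
    (hm' : ∀ ξ, HasDerivAt m' (m'' ξ) ξ)
    (htw : ∀ ξ, twExpr α V H₁ H₂ H₃ K (m ξ) (m' ξ) (m'' ξ) = 0)
    {a : Fin 3 → ℝ} (ha : Tendsto m l (nhds a))
    (hb : (∃ b, Tendsto m' l (nhds b)) ∧ ∃ b, Tendsto m'' l (nhds b)) :
    cross3 a ((dot3 a xhat) • xhat - (K * dot3 a yhat) • yhat + ![H₁, H₂, H₃]) = 0 := by
  obtain ⟨⟨b, hb⟩, c, hc⟩ := hb
  obtain rfl := deriv_lim_zero_vec hl hm ha hb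
  obtain rfl := deriv_lim_zero_vec hl hm' hb hc
  have hne : l.NeBot := by rcases hl with rfl | rfl <;> infer_instance
  have hcont : Continuous fun x : (Fin 3 → ℝ) × (Fin 3 → ℝ) × (Fin 3 → ℝ) =>
      twExpr α V H₁ H₂ H₃ K x.1 x.2.1 x.2.2 := by
    refine continuous_pi fun i => ?_
    fin_cases i <;> simp [twExpr, cross3, dot3, xhat, yhat, Matrix.vecHead, Matrix.vecTail] <;>
      fun_prop
  have h := (hcont.tendsto (a, 0, 0)).comp (ha.prodMk_nhds (hb.prodMk_nhds hc))
  have h0 : twExpr α V H₁ H₂ H₃ K a 0 0 = 0 := by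
    refine tendsto_nhds_unique h (tendsto_const_nhds.congr fun ξ => ?_)
    exact (htw ξ).symm
  have h1 : cross3 a (0 : Fin 3 → ℝ) = 0 := by
    ext i
    fin_cases i <;> simp [cross3]
  simpa [twExpr, h1] using h0

/-! ### Distance to the static wall -/

lemma norm3_le_sum (x : Fin 3 → ℝ) : norm3 x ≤ |x 0| + |x 1| + |x 2| := by
  unfold norm3 dot3
  refine Real.sqrt_le_iff.mpr ⟨by positivity, ?_⟩
  have h0 := abs_mul_abs_self (x 0)
  have h1 := abs_mul_abs_self (x 1)
  have h2 := abs_mul_abs_self (x 2)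
  nlinarith [abs_nonneg (x 0), abs_nonneg (x 1), abs_nonneg (x 2),
    mul_nonneg (abs_nonneg (x 0)) (abs_nonneg (x 1)),
    mul_nonneg (abs_nonneg (x 0)) (abs_nonneg (x 2)),
    mul_nonneg (abs_nonneg (x 1)) (abs_nonneg (x 2))]

lemma abs_cos_sub_one_le {y η : ℝ} (hy : |y| ≤ η) (hη : η ≤ 1) : |Real.cos y - 1| ≤ η := by
  have h1 := Real.one_sub_sq_div_two_le_cos (x := y)
  have h2 := Real.cos_le_one y
  have h3 : y ^ 2 ≤ η := by
    rw [← sq_abs]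
    nlinarith [abs_nonneg y]
  rw [abs_le]
  constructor <;> nlinarith [abs_nonneg y]

lemma sph_close {t s u v η : ℝ} (ht : |t| ≤ 1) (hs : |s| ≤ 1) (hu : |u| ≤ η) (hv : |v| ≤ η)
    (hη : η ≤ 1) : norm3 (sph (rotS t s u) (rotC t s u) v - ![t, 0, s]) ≤ 7 * η := by
  have hη0 : 0 ≤ η := (abs_nonneg u).trans hu
  have hcu := abs_cos_sub_one_le hu hη
  have hcv := abs_cos_sub_one_le hv hη
  have hsu : |Real.sin u| ≤ η := Real.abs_sin_le_abs.trans hu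
  have hsv : |Real.sin v| ≤ η := Real.abs_sin_le_abs.trans hv
  have hc1 : |Real.cos v| ≤ 1 := Real.abs_cos_le_one v
  have aux : ∀ x y : ℝ, |x| ≤ 1 → |y| ≤ 1 →
      |(x * Real.cos u + y * Real.sin u) * Real.cos v - x| ≤ 3 * η := fun x y hx hy => by
    have e : (x * Real.cos u + y * Real.sin u) * Real.cos v - x =
        x * (Real.cos u - 1) * Real.cos v + y * Real.sin u * Real.cos v
          + x * (Real.cos v - 1) := by ring
    rw [e]
    refine (abs_add_three _ _ _).trans ?_
    simp only [abs_mul]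
    have b1 : |x| * |Real.cos u - 1| * |Real.cos v| ≤ 1 * η * 1 := by gcongr
    have b2 : |y| * |Real.sin u| * |Real.cos v| ≤ 1 * η * 1 := by gcongr
    have b3 : |x| * |Real.cos v - 1| ≤ 1 * η := by gcongr
    linarith
  refine (norm3_le_sum _).trans ?_
  have h0 := aux t s ht hs
  have h2 := aux s (-t) hs (by rwa [abs_neg])
  rw [neg_mul, ← sub_eq_add_neg] at h2
  change |rotS t s u * Real.cos v - t| + |Real.sin v - 0| + |rotC t s u * Real.cos v - s| ≤ _
  rw [sub_zero]
  unfold rotS rotC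
  linarith

lemma norm3_sph {S C : ℝ} (h : S ^ 2 + C ^ 2 = 1) (v : ℝ) : norm3 (sph S C v) = 1 := by
  unfold norm3 dot3 sph
  rw [Real.sqrt_eq_one]
  simp
  linear_combination Real.cos v ^ 2 * h + Real.sin_sq_add_cos_sq v

lemma tendsto_sph {l : Filter ℝ} {t s u v : ℝ → ℝ} {t₀ s₀ u₀ v₀ : ℝ} (ht : Tendsto t l (nhds t₀))
    (hs : Tendsto s l (nhds s₀)) (hu : Tendsto u l (nhds u₀)) (hv : Tendsto v l (nhds v₀)) :
    Tendsto (fun x => sph (rotS (t x) (s x) (u x)) (rotC (t x) (s x) (u x)) (v x)) l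
      (nhds (sph (rotS t₀ s₀ u₀) (rotC t₀ s₀ u₀) v₀)) := by
  have hcu := (Real.continuous_cos.tendsto u₀).comp hu
  have hsu := (Real.continuous_sin.tendsto u₀).comp hu
  have hcv := (Real.continuous_cos.tendsto v₀).comp hv
  have hsv := (Real.continuous_sin.tendsto v₀).comp hv
  refine tendsto_pi_nhds.mpr fun i => ?_
  fin_cases i
  · exact ((ht.mul hcu).add (hs.mul hsu)).mul hcv
  · exact hsv
  · exact ((hs.mul hcu).sub (ht.mul hsu)).mul hcv

/-! ### Existence of travelling waves -/

/-- Anisotropy-dominated travelling waves: existence for parameters close to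
Λ_W = (0,0,0,K₂). -/
theorem anisotropy_dominated_travelling_waves
    (α K₂ : ℝ) (hα : 0 < α) (hK : 0 < K₂) (δ : ℝ) (hδ : 0 < δ) :
    ∃ ε > 0, ∀ H₁ H₂ H₃ K₂' : ℝ,
      Real.sqrt (H₁ ^ 2 + H₂ ^ 2 + H₃ ^ 2 + (K₂' - K₂) ^ 2) < ε →
      ∃ (V : ℝ) (m : ℝ → Fin 3 → ℝ) (mp mm : Fin 3 → ℝ),
        |V| < δ ∧
        ContDiff ℝ 2 m ∧
        (∀ ξ, norm3 (m ξ) = 1) ∧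
        -- travelling-wave equation
        (∀ ξ, V • deriv m ξ + (α * V) • cross3 (m ξ) (deriv m ξ) +
            cross3 (m ξ)
              (deriv (deriv m) ξ + (dot3 (m ξ) xhat) • xhat -
                (K₂' * dot3 (m ξ) yhat) • yhat + ![H₁, H₂, H₃]) = 0) ∧
        -- limits at ±∞
        Tendsto m atTop (nhds mp) ∧ Tendsto m atBot (nhds mm) ∧
        -- vanishing torque on the limiting values
        cross3 mp ((dot3 mp xhat) • xhat - (K₂' * dot3 mp yhat) • yhat + ![H₁, H₂, H₃]) = 0 ∧
        cross3 mm ((dot3 mm xhat) • xhat - (K₂' * dot3 mm yhat) • yhat + ![H₁, H₂, H₃]) = 0 ∧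
        -- tail-to-tail boundary conditions
        0 < dot3 xhat mp ∧ dot3 xhat mm < 0 ∧
        -- uniform closeness to the Bloch wall: sup_ξ |m(ξ) − m_W(ξ)| < δ
        (∃ c, c < δ ∧ ∀ ξ, norm3 (m ξ - mW ξ) ≤ c) ∧
        -- at Λ = Λ_W the solution is the static Bloch wall
        ((H₁ = 0 ∧ H₂ = 0 ∧ H₃ = 0 ∧ K₂' = K₂) → V = 0 ∧ m = mW) := by
  set k : ℝ := Real.sqrt (1 + K₂) with hkdef
  have hk2 : k ^ 2 - 1 = K₂ := by
    rw [hkdef, Real.sq_sqrt (by linarith)]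
    ring
  have hk : 1 < k := by
    rw [hkdef, Real.lt_sqrt (by norm_num)]
    linarith
  obtain ⟨Y, hYl, hY⟩ := exists_Y α hα hk
  let A : Set Coef := Set.Icc (-1) 1 ×ˢ Set.Icc 0 1 ×ˢ Set.Icc (k - 1 / (k - 1)) k
  have hA : IsCompact A := isCompact_Icc.prod (isCompact_Icc.prod isCompact_Icc)
  let a : ℝ → Coef := fun ξ => (Real.tanh ξ, sech ξ, qf k ξ)
  have ha : Continuous a := by
    have cq : Continuous (qf k) :=
      continuous_iff_continuousAt.mpr fun ξ => (hasDerivAt_qf hk ξ).continuousAt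
    exact continuous_tanh.prodMk (continuous_sech.prodMk cq)
  have haA : ∀ ξ, a ξ ∈ A := fun ξ => by
    have h1 := tanh_bounds ξ
    have h2 := sech_pos ξ
    have h3 := sech_le_one ξ
    have h4 : 0 ≤ sech ξ ^ 2 / (k - Real.tanh ξ) := div_nonneg (sq_nonneg _) (by linarith)
    have h5 : sech ξ ^ 2 / (k - Real.tanh ξ) ≤ 1 / (k - 1) :=
      div_le_div₀ zero_le_one (by nlinarith) (by linarith) (by linarith)
    refine ⟨⟨h1.1.le, h1.2.le⟩, ⟨h2.le, h3⟩, ?_, ?_⟩ <;> simp only [a, qf] <;> linarith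
  have hatop : Tendsto a atTop (nhds (1, 0, k)) := tendsto_tanh_atTop.prodMk_nhds
    (tendsto_sech_atTop.prodMk_nhds (qf_tendsto_atTop hk))
  have habot : Tendsto a atBot (nhds (-1, 0, k)) := tendsto_tanh_atBot.prodMk_nhds
    (tendsto_sech_atBot.prodMk_nhds (qf_tendsto_atBot hk))
  -- the size allowed for `u`, `v` and `V`
  set η : ℝ := min (1 / 2) (δ / 20) with hη
  have hη0 : 0 < η := lt_min (by norm_num) (by linarith)
  have hη1 : η ≤ 1 / 2 := min_le_left _ _
  have hη2 : η ≤ δ / 20 := min_le_right _ _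
  obtain ⟨ε, hε, hfix⟩ := exists_fixed_point (n := nonlin α K₂) hA (l₀ := (0, 0, 0, K₂))
    (fun a _ => nonlin_contDiffAt α K₂ a _) (fun a _ y => nonlin_fderiv α K₂ a y)
    (fun a _ => nonlin_zero α K₂ a) Y hYl ha haA ⟨⟨_, hatop⟩, _, habot⟩
    (r := η / (‖Y‖ + 1)) (by positivity)
  refine ⟨ε, hε, fun H₁ H₂ H₃ K hΛ => ?_⟩
  have hl : ‖((H₁, H₂, H₃, K) : Par) - (0, 0, 0, K₂)‖ < ε := by
    refine lt_of_le_of_lt ?_ hΛ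
    simp only [Prod.mk_sub_mk, sub_zero, norm_prod_le_iff, Real.norm_eq_abs]
    refine ⟨?_, ?_, ?_, ?_⟩ <;> refine Real.abs_le_sqrt ?_ <;>
      linarith [sq_nonneg H₁, sq_nonneg H₂, sq_nonneg H₃, sq_nonneg (K - K₂)]
  obtain ⟨f, hfl, hfr, hff, hf0⟩ := hfix _ hl
  obtain ⟨V, u, w, v, z, hYf, hu, hw, hv, hz⟩ := hY f
  have hsmall : ∀ ξ, ‖Y f ξ‖ ≤ η := fun ξ => by
    refine ((Y f).norm_coe_le_norm ξ).trans ((Y.le_opNorm f).trans ?_)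
    calc ‖Y‖ * ‖f‖ ≤ (‖Y‖ + 1) * (η / (‖Y‖ + 1)) := by gcongr; linarith
      _ = η := by field_simp
  simp only [hYf, norm_prod_le_iff, Real.norm_eq_abs] at hsmall
  have hcos : ∀ y : ℝ, |y| ≤ η → 0 < Real.cos y := fun y hy => by
    have := abs_le.mp hy
    have := Real.pi_gt_three
    exact Real.cos_pos_of_mem_Ioo ⟨by linarith, by linarith⟩
  obtain ⟨m', m'', hm, hm', hm'', htw, hlim⟩ := wall_solution (α := α) (K₂ := K₂) (V := V)
    (H₁ := H₁) (H₂ := H₂) (H₃ := H₃) (K := K) hk2 hk f.continuous hu hw hv hz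
    (fun ξ => (hcos _ (hsmall ξ).2.2.1).ne') (fun ξ => by rw [hff ξ, hYf ξ])
  set m : ℝ → Fin 3 → ℝ := fun x => sph (rotS (Real.tanh x) (sech x) (u x))
    (rotC (Real.tanh x) (sech x) (u x)) (v x) with hmdef
  have hdm : deriv m = m' := funext fun ξ => (hm ξ).deriv
  have hdm' : deriv m' = m'' := funext fun ξ => (hm' ξ).deriv
  -- limits of all the ingredients at either end
  have hend : ∀ l : Filter ℝ, (l = atTop ∨ l = atBot) → ∀ c : Coef, Tendsto a l (nhds c) →
      (∃ x, Tendsto f l (nhds x)) → (∃ y, Tendsto (Y f) l (nhds y)) →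
      ∃ y : Resp, |y.1| ≤ η ∧ |y.2.2.1| ≤ η ∧
        Tendsto m l (nhds (sph (rotS c.1 c.2.1 y.1) (rotC c.1 c.2.1 y.1) y.2.2.1)) ∧
        cross3 (sph (rotS c.1 c.2.1 y.1) (rotC c.1 c.2.1 y.1) y.2.2.1)
          ((dot3 (sph (rotS c.1 c.2.1 y.1) (rotC c.1 c.2.1 y.1) y.2.2.1) xhat) • xhat -
            (K * dot3 (sph (rotS c.1 c.2.1 y.1) (rotC c.1 c.2.1 y.1) y.2.2.1) yhat) • yhat
              + ![H₁, H₂, H₃]) = 0 := by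
    rintro l hl c hc ⟨x, hx⟩ ⟨y, hy⟩
    have hne : l.NeBot := by rcases hl with rfl | rfl <;> infer_instance
    have hy' : Tendsto (fun ξ => (u ξ, w ξ, v ξ, z ξ, V)) l (nhds y) := hy.congr hYf
    have hu' : Tendsto u l (nhds y.1) := (continuous_fst.tendsto y).comp hy'
    have hv' : Tendsto v l (nhds y.2.2.1) :=
      ((show Continuous fun y : Resp => y.2.2.1 by fun_prop).tendsto y).comp hy'
    have h1 := tendsto_sph ((continuous_fst.tendsto c).comp hc)
      (((show Continuous fun c : Coef => c.2.1 by fun_prop).tendsto c).comp hc) hu' hv'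
    exact ⟨y, le_of_tendsto hu'.abs (Eventually.of_forall fun ξ => (hsmall ξ).1),
      le_of_tendsto hv'.abs (Eventually.of_forall fun ξ => (hsmall ξ).2.2.1), h1,
      torque_zero hl hm hm' htw h1 (hlim l (c, y) (hc.prodMk_nhds hy') x hx)⟩
  obtain ⟨y, hy1, hy2, hmp, htp⟩ := hend atTop (Or.inl rfl) _ hatop hfl.1 (hYl f hfl).1
  obtain ⟨y', hy1', hy2', hmm, htm⟩ := hend atBot (Or.inr rfl) _ habot hfl.2 (hYl f hfl).2
  refine ⟨V, m, _, _, ?_, ?_, fun ξ => norm3_sph (rot_sq (tanh_sq_add_sech_sq ξ) _) _, fun ξ => ?_,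
    hmp, hmm, htp, htm, ?_, ?_, ⟨δ / 2, by linarith, fun ξ => ?_⟩, ?_⟩
  · have := (hsmall 0).2.2.2.2
    linarith
  · have h1 : ContDiff ℝ 1 m' := contDiff_one_iff_deriv.mpr
      ⟨fun ξ => (hm' ξ).differentiableAt, by rwa [hdm']⟩
    refine (contDiff_succ_iff_deriv (n := 1)).mpr
      ⟨fun ξ => (hm ξ).differentiableAt, by simp, by rwa [hdm]⟩
  · rw [hdm, hdm']
    exact htw ξ
  · have := mul_pos (hcos _ hy1) (hcos _ hy2)
    simpa [dot3, xhat, sph, rotS] using this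
  · have := mul_pos (hcos _ hy1') (hcos _ hy2')
    simpa [dot3, xhat, sph, rotS] using this
  · have ht := tanh_bounds ξ
    have hs := sech_pos ξ
    refine (sph_close (abs_le.mpr ⟨ht.1.le, ht.2.le⟩) (abs_le.mpr ⟨by linarith, sech_le_one ξ⟩)
      (hsmall ξ).1 (hsmall ξ).2.2.1 (by linarith)).trans (by linarith)
  · rintro ⟨rfl, rfl, rfl, rfl⟩
    have h0 : ∀ ξ, (u ξ, w ξ, v ξ, z ξ, V) = (0 : Resp) := fun ξ => by
      rw [← hYf, hf0 rfl, map_zero]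
      rfl
    simp only [Prod.ext_iff] at h0
    refine ⟨(h0 0).2.2.2.2, funext fun ξ => ?_⟩
    have h1 : u ξ = 0 := (h0 ξ).1
    have h2 : v ξ = 0 := (h0 ξ).2.2.1
    simp [hmdef, h1, h2, sph, rotS, rotC, mW, sech]

end
end

section
/- Let α > 0 and 0 < H₃ < 1, and set Λ_T = (0,0,H₃,0). Let β_T : ℝ → ℝ be the strictly decreasing solution of β_T' = H₃ − sin β_T with lim_{ξ→−∞} β_T = π − arcsin H₃ and lim_{ξ→+∞} β_T = arcsin H₃, and let m_T(ξ) = (cos β_T(ξ), 0, sin β_T(ξ)). For every δ > 0 there exists ε > 0 such that for all parameters Λ = (H₁,H₂,H₃',K₂) ∈ ℝ⁴ with |Λ − Λ_T| < ε, there exist a velocity V ∈ ℝ with |V| < δ and a twice continuously differentiable profile m : ℝ → ℝ³ with |m(ξ)| = 1 for all ξ, satisfying the travelling-wave equation V m' + α V (m × m') + m × (m'' + (m·x̂)x̂ − K₂(m·ŷ)ŷ + H_a) = 0 on ℝ, such that m has limits m₊ and m₋ as ξ → +∞ and ξ → −∞ respectively, these limits satisfy m± × ((m±·x̂)x̂ −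 K₂(m±·ŷ)ŷ + H_a) = 0 with x̂·m₊ > 0 and x̂·m₋ < 0, and sup_{ξ∈ℝ} |m(ξ) − m_T(ξ)| < δ. In particular, for Λ = Λ_T the solution is V = 0 and m = m_T. -/
/-!
Write `m = (cos θ cos β, sin θ, cos θ sin β)`. The travelling-wave equation becomes two scalar
equations for the angles (`azimRes`, `polRes`), solved for `Λ = Λ_T` by `V = 0`, `θ = 0`, `β = β_T`.
Nearby parameters are handled by the implicit function theorem in the Banach algebra `LimFun` of
continuous functions on `ℝ` with limits at `±∞`, with unknowns `V`, `θ` and `φ = β - β_T`.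

With `s = sin β_T`, `c = cos β_T` and `p = s - H₃ = -β_T' > 0`, the linearisation decouples:
`θ'' + (p² - c² - H₃ s) θ - V p = f` and `φ'' + (p s - c²) φ - α V p = h`.
* The second operator factors as `(d/dx - c)(d/dx + c)`, since `p' = -c p`. The translation mode `p`
  spans its kernel and its cokernel; solvability determines `V`, because `α ≠ 0`, and explicit
  integrals invert both factors (`exists_planar_left`, `exists_planar_right`).
* The first operator is invertible because `s` is a positive strict supersolution, its image being
  the constant `-H₃ < 0` (`exists_transverse`).

Taking the right-hand side `(f, h)` of the linear problem as the unknown, instead of `(V, θ, φ)`,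
makes the partial derivative at the wall the identity and removes the kernel at the same time
(`exists_inverse_operators`, `eventually_exists_profile`). The second derivatives of the solutions
again have limits, so all angle derivatives vanish at `±∞` and the limits of `m` carry no torque
(`travelling_wave_of_angles`).
-/

open MeasureTheory Filter Real

noncomputable section

/-! ### Functions with limits at infinity -/

/-- Continuous functions on `ℝ` with limits at `±∞`, encoded as continuous functions on the
compact space `EReal`. With the sup norm this is a commutative Banach algebra, and evaluation at
`⊤` and `⊥` gives the limits. -/
abbrev LimFun := C(EReal, ℝ)

lemma LimFun.tendsto_top (f : LimFun) : Tendsto (fun x : ℝ => f x) atTop (nhds (f ⊤)) :=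
  (f.continuous.tendsto ⊤).comp (EReal.tendsto_coe_nhds_top_iff.2 tendsto_id)

lemma LimFun.tendsto_bot (f : LimFun) : Tendsto (fun x : ℝ => f x) atBot (nhds (f ⊥)) :=
  (f.continuous.tendsto ⊥).comp (EReal.tendsto_coe_nhds_bot_iff.2 tendsto_id)

lemma LimFun.continuous_real (f : LimFun) : Continuous (fun x : ℝ => f x) :=
  f.continuous.comp continuous_coe_real_ereal

lemma LimFun.abs_apply_le (f : LimFun) (x : EReal) : |f x| ≤ ‖f‖ := f.norm_coe_le_norm x

lemma LimFun.ext_real {f g : LimFun} (h : ∀ x : ℝ, f x = g x) : f = g := by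
  ext x
  induction x using EReal.rec with
  | bot => exact tendsto_nhds_unique f.tendsto_bot (by simpa only [h] using g.tendsto_bot)
  | coe x => exact h x
  | top => exact tendsto_nhds_unique f.tendsto_top (by simpa only [h] using g.tendsto_top)

/-- A continuous function on `ℝ` with limits at both ends extends to a `LimFun`. -/
lemma LimFun.exists_of_tendsto {u : ℝ → ℝ} (hu : Continuous u) {l r : ℝ}
    (hl : Tendsto u atBot (nhds l)) (hr : Tendsto u atTop (nhds r)) :
    ∃ F : LimFun, (∀ x : ℝ, F x = u x) ∧ F ⊥ = l ∧ F ⊤ = r := by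
  let F : EReal → ℝ := fun x => EReal.rec l u r x
  have hF : Continuous F := by
    rw [continuous_iff_continuousAt]
    intro x
    induction x using EReal.rec with
    | bot =>
      intro s hs
      rw [mem_map, EReal.mem_nhds_bot_iff]
      have h1 : ∀ᶠ x in atBot, u x ∈ s := hl hs
      obtain ⟨y, hy⟩ := eventually_atBot.1 h1
      refine ⟨y, fun z hz => ?_⟩
      induction z using EReal.rec with
      | bot => exact (mem_of_mem_nhds hs : F ⊥ ∈ s)
      | coe z => exact hy z (EReal.coe_lt_coe_iff.1 hz).le
      | top => exact absurd hz (by simp)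
    | coe x =>
      unfold ContinuousAt
      rw [EReal.nhds_coe, tendsto_map'_iff]
      exact hu.tendsto x
    | top =>
      intro s hs
      rw [mem_map, EReal.mem_nhds_top_iff]
      have h1 : ∀ᶠ x in atTop, u x ∈ s := hr hs
      obtain ⟨y, hy⟩ := eventually_atTop.1 h1
      refine ⟨y, fun z hz => ?_⟩
      induction z using EReal.rec with
      | top => exact (mem_of_mem_nhds hs : F ⊤ ∈ s)
      | coe z => exact hy z (EReal.coe_lt_coe_iff.1 hz).le
      | bot => exact absurd hz (by simp)
  exact ⟨⟨F, hF⟩, fun x => rfl, rfl, rfl⟩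

/-- A linear integral formula whose value at each single point is bounded by a multiple of `‖f‖`, and
which maps `LimFun` to `LimFun`, is automatically a bounded operator, by the closed graph theorem.
No uniformity of `C` in `x` is needed. -/
lemma LimFun.exists_clm (K : LimFun → ℝ → ℝ)
    (hadd : ∀ f g x, K (f + g) x = K f x + K g x)
    (hsmul : ∀ (a : ℝ) f x, K (a • f) x = a * K f x)
    (C : ℝ → ℝ) (hC : ∀ f x, |K f x| ≤ C x * ‖f‖)
    (hex : ∀ f, ∃ F : LimFun, ∀ x : ℝ, F x = K f x) :
    ∃ T : LimFun →L[ℝ] LimFun, ∀ f (x : ℝ), T f x = K f x := by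
  choose T hT using hex
  let L : LimFun →ₗ[ℝ] LimFun :=
    { toFun := T
      map_add' := fun f g => LimFun.ext_real fun x => by simp [hT, hadd]
      map_smul' := fun a f => LimFun.ext_real fun x => by simp [hT, hsmul] }
  refine ⟨ContinuousLinearMap.ofSeqClosedGraph (g := L) ?_, fun f x => hT f x⟩
  intro u f g hu hLu
  refine LimFun.ext_real fun x => ?_
  have h1 : Tendsto (fun n => (L (u n)) x) atTop (nhds (g x)) :=
    ((continuous_eval_const (x : EReal)).tendsto g).comp hLu
  have h2 : Tendsto (fun n => (L (u n)) x) atTop (nhds (L f x)) := by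
    rw [tendsto_iff_norm_sub_tendsto_zero] at hu ⊢
    have h3 : Tendsto (fun n => C x * ‖u n - f‖) atTop (nhds 0) := by
      simpa using hu.const_mul (C x)
    refine squeeze_zero (fun _ => norm_nonneg _) (fun n => ?_) h3
    have : (L (u n)) x - L f x = K (u n - f) x := by
      rw [← hT]
      change _ = L (u n - f) x
      simp
    rw [this]
    exact hC _ _
  exact tendsto_nhds_unique h1 h2

/-- L'Hôpital's rule in the form `∞/∞`, with `E' = a E` and `N' = f E`. No growth of `N` is assumed:
for `ε > 0` the functions `(ε/2) E ± (N - l E)`, `l = f₀ / a₀`, are eventually increasing. -/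
lemma tendsto_div_atTop {E N a f : ℝ → ℝ} {a₀ f₀ : ℝ} (hpos : ∀ x, 0 < E x)
    (hE : ∀ x, HasDerivAt E (a x * E x) x) (hN : ∀ x, HasDerivAt N (f x * E x) x)
    (ha : Tendsto a atTop (nhds a₀)) (ha₀ : 0 < a₀) (hf : Tendsto f atTop (nhds f₀))
    (hEt : Tendsto E atTop atTop) : Tendsto (fun x => N x / E x) atTop (nhds (f₀ / a₀)) := by
  set l := f₀ / a₀ with hl
  have hW : ∀ x, HasDerivAt (fun x => N x - l * E x) ((f x - l * a x) * E x) x := fun x => by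
    exact ((hN x).sub ((hE x).const_mul l)).congr_deriv (by ring)
  have hh : Tendsto (fun x => f x - l * a x) atTop (nhds 0) := by
    have := hf.sub (ha.const_mul l)
    rwa [show f₀ - l * a₀ = 0 by rw [hl, div_mul_cancel₀ _ ha₀.ne', sub_self]] at this
  rw [Metric.tendsto_atTop]
  intro ε hε
  have e1 : ∀ᶠ x in atTop, a₀ / 2 < a x := ha.eventually_const_lt (by linarith)
  have e2 : ∀ᶠ x in atTop, |f x - l * a x| < ε / 2 * (a₀ / 2) := by
    have := (Metric.tendsto_nhds.1 hh) (ε / 2 * (a₀ / 2)) (by positivity)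
    simpa [Real.dist_eq] using this
  obtain ⟨x₀, hx₀⟩ := eventually_atTop.1 (e1.and e2)
  have mono : ∀ σ : ℝ, |σ| = 1 → ∀ x ≥ x₀,
      ε / 2 * E x₀ + σ * (N x₀ - l * E x₀) ≤ ε / 2 * E x + σ * (N x - l * E x) := by
    intro σ hσ x hx
    have hd : ∀ x, HasDerivAt (fun x => ε / 2 * E x + σ * (N x - l * E x))
        (ε / 2 * (a x * E x) + σ * ((f x - l * a x) * E x)) x := fun x =>
      ((hE x).const_mul _).add ((hW x).const_mul _)
    refine monotoneOn_of_deriv_nonneg (convex_Ici x₀)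
      (fun y _ => (hd y).continuousAt.continuousWithinAt)
      (fun y _ => (hd y).differentiableAt.differentiableWithinAt) ?_
      (Set.mem_Ici.2 le_rfl) (Set.mem_Ici.2 hx) hx
    intro y hy
    rw [interior_Ici] at hy
    obtain ⟨h1, h2⟩ := hx₀ y (le_of_lt hy)
    rw [(hd y).deriv]
    have h3 : |σ * (f y - l * a y)| < ε / 2 * (a₀ / 2) := by rw [abs_mul, hσ, one_mul]; exact h2
    have h4 := (abs_lt.1 h3).1
    have : 0 ≤ (ε / 2 * a y + σ * (f y - l * a y)) * E y := by
      refine mul_nonneg ?_ (hpos y).le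
      nlinarith
    linarith
  obtain ⟨x₁, hx₁⟩ := eventually_atTop.1
    ((tendsto_atTop.1 hEt) ((|N x₀ - l * E x₀| + 1) / (ε / 2)))
  refine ⟨max x₀ x₁, fun x hx => ?_⟩
  have hx0 := le_of_max_le_left hx
  have hEx := hx₁ x (le_of_max_le_right hx)
  rw [div_le_iff₀ (by positivity)] at hEx
  have m1 := mono 1 (by simp) x hx0
  have m2 := mono (-1) (by simp) x hx0
  have h5 := neg_abs_le (N x₀ - l * E x₀)
  have h6 := le_abs_self (N x₀ - l * E x₀)
  have hp := hpos x₀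
  have : |N x - l * E x| < ε * E x := by
    rw [abs_lt]; constructor <;> nlinarith [mul_pos hε hp]
  rw [Real.dist_eq, show N x / E x - l = (N x - l * E x) / E x by
    field_simp [(hpos x).ne'], abs_div, abs_of_pos (hpos x), div_lt_iff₀ (hpos x)]
  exact this

lemma tendsto_div_atBot {E N a f : ℝ → ℝ} {a₀ f₀ : ℝ} (hpos : ∀ x, 0 < E x)
    (hE : ∀ x, HasDerivAt E (a x * E x) x) (hN : ∀ x, HasDerivAt N (f x * E x) x)
    (ha : Tendsto a atBot (nhds a₀)) (ha₀ : a₀ < 0) (hf : Tendsto f atBot (nhds f₀))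
    (hEt : Tendsto E atBot atTop) : Tendsto (fun x => N x / E x) atBot (nhds (f₀ / a₀)) := by
  have key := tendsto_div_atTop (E := fun x => E (-x)) (N := fun x => N (-x))
    (a := fun x => - a (-x)) (f := fun x => - f (-x)) (a₀ := -a₀) (f₀ := -f₀)
    (fun x => hpos _)
    (fun x => by simpa [Function.comp_def] using (hE (-x)).comp x (hasDerivAt_neg x))
    (fun x => by simpa [Function.comp_def] using (hN (-x)).comp x (hasDerivAt_neg x))
    (ha.comp tendsto_neg_atTop_atBot).neg (by linarith)
    (hf.comp tendsto_neg_atTop_atBot).neg (hEt.comp tendsto_neg_atTop_atBot)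
  rw [neg_div_neg_eq] at key
  simpa [Function.comp_def] using key.comp tendsto_neg_atBot_atTop

lemma hasDerivAt_integral_Iic {F : ℝ → ℝ} (hF : Continuous F)
    (hi : ∀ x, IntegrableOn F (Set.Iic x)) (x : ℝ) :
    HasDerivAt (fun x => ∫ t in Set.Iic x, F t) (F x) x := by
  have h1 : (fun x => ∫ t in Set.Iic x, F t) =
      fun x => (∫ t in Set.Iic 0, F t) + ∫ t in (0:ℝ)..x, F t := by
    funext y
    rw [← intervalIntegral.integral_Iic_sub_Iic (hi 0) (hi y)]; ring
  rw [h1]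
  exact (intervalIntegral.integral_hasDerivAt_right (hF.intervalIntegrable _ _)
    hF.aestronglyMeasurable.stronglyMeasurableAtFilter hF.continuousAt).const_add _

/-- L'Hôpital's rule in the form `0/0`, at both ends, with `E' = a E` and `N' = f E`. -/
lemma tendsto_div_zero {E N a f : ℝ → ℝ} {a₀ f₀ : ℝ} (hpos : ∀ x, 0 < E x)
    (hE : ∀ x, HasDerivAt E (a x * E x) x) (hN : ∀ x, HasDerivAt N (f x * E x) x) :
    (Tendsto a atTop (nhds a₀) → a₀ ≠ 0 → Tendsto f atTop (nhds f₀) →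
      Tendsto E atTop (nhds 0) → Tendsto N atTop (nhds 0) →
      Tendsto (fun x => N x / E x) atTop (nhds (f₀ / a₀))) ∧
    (Tendsto a atBot (nhds a₀) → a₀ ≠ 0 → Tendsto f atBot (nhds f₀) →
      Tendsto E atBot (nhds 0) → Tendsto N atBot (nhds 0) →
      Tendsto (fun x => N x / E x) atBot (nhds (f₀ / a₀))) := by
  have hr : ∀ x, f x * E x / (a x * E x) = f x / a x := fun x =>
    mul_div_mul_right _ _ (hpos x).ne'
  constructor <;> intro ha ha₀ hf hEt hNt
  · refine HasDerivAt.lhopital_zero_atTop (Eventually.of_forall hN) (Eventually.of_forall hE)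
      ?_ hNt hEt (by simp only [hr]; exact hf.div ha ha₀)
    filter_upwards [ha.eventually_ne ha₀] with x hx using mul_ne_zero hx (hpos x).ne'
  · refine HasDerivAt.lhopital_zero_atBot (Eventually.of_forall hN) (Eventually.of_forall hE)
      ?_ hNt hEt (by simp only [hr]; exact hf.div ha ha₀)
    filter_upwards [ha.eventually_ne ha₀] with x hx using mul_ne_zero hx (hpos x).ne'

lemma LimFun.integrableOn_mul (f : LimFun) {g : ℝ → ℝ} {s : Set ℝ} (hg : IntegrableOn g s) :
    IntegrableOn (fun t : ℝ => f t * g t) s :=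
  Integrable.bdd_mul (c := ‖f‖) hg f.continuous_real.aestronglyMeasurable
    (Eventually.of_forall fun x => f.abs_apply_le x)

lemma LimFun.abs_integral_mul_le (f : LimFun) {g : ℝ → ℝ} {s : Set ℝ} (hg : IntegrableOn g s) :
    |∫ t in s, f t * g t| ≤ (∫ t in s, |g t|) * ‖f‖ := by
  rw [← integral_mul_const]
  refine (abs_integral_le_integral_abs).trans ?_
  refine integral_mono (f.integrableOn_mul hg).abs (hg.abs.mul_const _) fun t => ?_
  simp only [abs_mul]
  rw [mul_comm]
  exact mul_le_mul_of_nonneg_left (f.abs_apply_le t) (abs_nonneg _)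

lemma hasDerivAt_div_of {E N : ℝ → ℝ} {a f x : ℝ} (hpos : 0 < E x)
    (hE : HasDerivAt E (a * E x) x) (hN : HasDerivAt N (f * E x) x) :
    HasDerivAt (fun x => N x / E x) (f - a * (N x / E x)) x := by
  refine (hN.div hE hpos.ne').congr_deriv ?_
  field_simp

/-! ### The inverse of `1 - d²/dx²` -/

/-- The positive inverse of `d/dx + 1`, namely `A f (x) = e⁻ˣ ∫_{-∞}^x f(t) eᵗ dt`. -/
lemma exists_resolvent_add : ∃ A : LimFun →L[ℝ] LimFun,
    (∀ f (x : ℝ), HasDerivAt (fun x : ℝ => A f x) (f x - A f x) x) ∧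
    ∀ f : LimFun, (∀ x : ℝ, 0 ≤ f x) → ∀ x : ℝ, 0 ≤ A f x := by
  have hi : ∀ x : ℝ, IntegrableOn Real.exp (Set.Iic x) := fun x => integrableOn_exp_Iic x
  have hE : ∀ x, HasDerivAt Real.exp (1 * Real.exp x) x := fun x => by
    simpa using Real.hasDerivAt_exp x
  have hN : ∀ (f : LimFun) (x : ℝ),
      HasDerivAt (fun x : ℝ => ∫ t in Set.Iic x, f (t : ℝ) * Real.exp t) (f x * Real.exp x) x := fun f x =>
    hasDerivAt_integral_Iic (f.continuous_real.mul Real.continuous_exp)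
      (fun x => f.integrableOn_mul (hi x)) x
  have hd := fun (f : LimFun) (x : ℝ) => hasDerivAt_div_of (Real.exp_pos x) (hE x) (hN f x)
  obtain ⟨A, hA⟩ := LimFun.exists_clm
    (fun f x => (∫ t : ℝ in Set.Iic x, f t * Real.exp t) / Real.exp x)
    (fun f g x => by
      simp only [ContinuousMap.add_apply, add_mul]
      rw [integral_add (f.integrableOn_mul (hi x)) (g.integrableOn_mul (hi x)), add_div])
    (fun a f x => by
      simp only [ContinuousMap.smul_apply, smul_eq_mul, mul_assoc]
      rw [integral_const_mul, mul_div_assoc])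
    (fun x => (∫ t in Set.Iic x, |Real.exp t|) / Real.exp x)
    (fun f x => by
      rw [abs_div, abs_of_pos (Real.exp_pos x), div_mul_eq_mul_div]
      gcongr
      exact f.abs_integral_mul_le (hi x))
    (fun f => by
      obtain ⟨F, hF, -⟩ := LimFun.exists_of_tendsto
        (continuous_iff_continuousAt.2 fun x => (hd f x).continuousAt)
        ((tendsto_div_zero Real.exp_pos hE (hN f)).2 tendsto_const_nhds one_ne_zero
          f.tendsto_bot Real.tendsto_exp_atBot (tendsto_integral_Iic_zero tendsto_id))
        (tendsto_div_atTop Real.exp_pos hE (hN f) tendsto_const_nhds one_pos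
          f.tendsto_top Real.tendsto_exp_atTop)
      exact ⟨F, hF⟩)
  refine ⟨A, fun f x => ?_, fun f hf x => ?_⟩
  · simpa only [hA, one_mul] using hd f x
  · rw [hA]
    exact div_nonneg (integral_nonneg fun t => mul_nonneg (hf t) (Real.exp_pos t).le)
      (Real.exp_pos x).le

/-- The reflection `x ↦ -x` of the line, acting on `LimFun`. -/
def LimFun.reflect : LimFun →L[ℝ] LimFun :=
  ⟨(ContinuousMap.compRightAlgHom ℝ ℝ ⟨fun x : EReal => -x, continuous_neg⟩).toLinearMap,
    ContinuousMap.compRightAlgHom_continuous ..⟩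

lemma LimFun.reflect_apply (f : LimFun) (x : ℝ) : LimFun.reflect f x = f ((-x : ℝ) : EReal) := by
  rfl

/-- The positive inverse of `1 - d/dx`, obtained by reflecting the inverse of `d/dx + 1`. -/
lemma exists_resolvent_sub : ∃ B : LimFun →L[ℝ] LimFun,
    (∀ f (x : ℝ), HasDerivAt (fun x : ℝ => B f x) (B f x - f x) x) ∧
    ∀ f : LimFun, (∀ x : ℝ, 0 ≤ f x) → ∀ x : ℝ, 0 ≤ B f x := by
  obtain ⟨A, hA, hA'⟩ := exists_resolvent_add
  refine ⟨LimFun.reflect ∘L A ∘L LimFun.reflect, fun f x => ?_, fun f hf x => ?_⟩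
  · have := (hA (LimFun.reflect f) (-x)).comp x (hasDerivAt_neg x)
    simp only [LimFun.reflect_apply, neg_neg, Function.comp_def] at this
    simp only [ContinuousLinearMap.comp_apply, LimFun.reflect_apply]
    exact this.congr_deriv (by ring)
  · simp only [ContinuousLinearMap.comp_apply, LimFun.reflect_apply]
    exact hA' _ (fun y => by rw [LimFun.reflect_apply]; exact hf _) _

lemma LimFun.eq_zero_of_deriv_add (d : LimFun)
    (h : ∀ x : ℝ, HasDerivAt (fun x : ℝ => d x) (-d x) x) : d = 0 := by
  have h1 : ∀ x : ℝ, HasDerivAt (fun x : ℝ => d x * Real.exp x) 0 x := fun x => by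
    exact ((h x).mul (Real.hasDerivAt_exp x)).congr_deriv (by ring)
  have h2 : ∀ x y : ℝ, d x * Real.exp x = d y * Real.exp y :=
    is_const_of_deriv_eq_zero (fun x => (h1 x).differentiableAt) (fun x => (h1 x).deriv)
  have h3 : Tendsto (fun x : ℝ => d x * Real.exp x) atBot (nhds (d ⊥ * 0)) :=
    d.tendsto_bot.mul Real.tendsto_exp_atBot
  refine LimFun.ext_real fun x => ?_
  have h4 : Tendsto (fun y : ℝ => d y * Real.exp y) atBot (nhds (d x * Real.exp x)) := by
    simp only [h2 _ x]; exact tendsto_const_nhds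
  have h5 := tendsto_nhds_unique h4 h3
  simpa [(Real.exp_pos x).ne'] using h5

lemma LimFun.eq_zero_of_deriv_sub (d : LimFun)
    (h : ∀ x : ℝ, HasDerivAt (fun x : ℝ => d x) (d x) x) : d = 0 := by
  have h1 : LimFun.reflect d = 0 := LimFun.eq_zero_of_deriv_add _ fun x => by
    simp only [LimFun.reflect_apply]
    exact ((h (-x)).comp x (hasDerivAt_neg x)).congr_deriv (by ring)
  refine LimFun.ext_real fun x => ?_
  have := LimFun.reflect_apply d (-x)
  rw [h1, neg_neg] at this
  simpa using this.symm

/-! ### The planar operator -/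

/-- A bounded right inverse of `d/dx + c`, when `1/p` is an integrating factor (`p' = -c p`) which blows
up at both ends: `A f (x) = p(x) ∫₀ˣ f / p`. -/
lemma exists_planar_right {p c : LimFun} (hp : ∀ x : ℝ, 0 < p x)
    (hp' : ∀ x : ℝ, HasDerivAt (fun x : ℝ => p x) (-(c x) * p x) x)
    (hpT : p ⊤ = 0) (hpB : p ⊥ = 0) (hcT : 0 < c ⊤) (hcB : c ⊥ < 0) :
    ∃ A : LimFun →L[ℝ] LimFun,
      ∀ f (x : ℝ), HasDerivAt (fun x : ℝ => A f x) (f x - c x * A f x) x := by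
  have hE0 : ∀ x : ℝ, 0 < (p x)⁻¹ := fun x => inv_pos.2 (hp x)
  have hE : ∀ x : ℝ, HasDerivAt (fun x : ℝ => (p x)⁻¹) (c x * (p x)⁻¹) x := fun x => by
    refine ((hp' x).inv (hp x).ne').congr_deriv ?_
    have := (hp x).ne'
    field_simp
    try ring
  have hEc : Continuous fun x : ℝ => (p x)⁻¹ :=
    continuous_iff_continuousAt.2 fun x => (hE x).continuousAt
  have hc : ∀ f : LimFun, Continuous fun x : ℝ => f x * (p x)⁻¹ := fun f =>
    f.continuous_real.mul hEc
  have hN : ∀ (f : LimFun) (x : ℝ),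
      HasDerivAt (fun x : ℝ => ∫ t in (0:ℝ)..x, f (t : ℝ) * (p (t : ℝ))⁻¹)
        (f x * (p x)⁻¹) x := fun f x =>
    intervalIntegral.integral_hasDerivAt_right ((hc f).intervalIntegrable _ _)
      (hc f).aestronglyMeasurable.stronglyMeasurableAtFilter (hc f).continuousAt
  have hd := fun (f : LimFun) (x : ℝ) => hasDerivAt_div_of (E := fun x : ℝ => (p x)⁻¹)
    (hE0 x) (hE x) (hN f x)
  have hEtop : Tendsto (fun x : ℝ => (p x)⁻¹) atTop atTop :=
    (tendsto_nhdsWithin_iff.2 ⟨by simpa [hpT] using p.tendsto_top,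
      Eventually.of_forall hp⟩ : Tendsto (fun x : ℝ => p x) atTop
        (nhdsWithin 0 (Set.Ioi 0))).inv_tendsto_nhdsGT_zero
  have hEbot : Tendsto (fun x : ℝ => (p x)⁻¹) atBot atTop :=
    (tendsto_nhdsWithin_iff.2 ⟨by simpa [hpB] using p.tendsto_bot,
      Eventually.of_forall hp⟩ : Tendsto (fun x : ℝ => p x) atBot
        (nhdsWithin 0 (Set.Ioi 0))).inv_tendsto_nhdsGT_zero
  obtain ⟨A, hA⟩ := LimFun.exists_clm
    (fun f x => (∫ t in (0:ℝ)..x, f (t : ℝ) * (p (t : ℝ))⁻¹) / (p x)⁻¹)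
    (fun f g x => by
      simp only [ContinuousMap.add_apply, add_mul]
      rw [intervalIntegral.integral_add ((hc f).intervalIntegrable _ _)
        ((hc g).intervalIntegrable _ _), add_div])
    (fun a f x => by
      simp only [ContinuousMap.smul_apply, smul_eq_mul, mul_assoc]
      rw [intervalIntegral.integral_const_mul, mul_div_assoc])
    (fun x => (∫ t in Set.uIoc (0:ℝ) x, |(p (t : ℝ))⁻¹|) / (p x)⁻¹)
    (fun f x => by
      rw [abs_div, abs_of_pos (hE0 x), div_mul_eq_mul_div,
        intervalIntegral.abs_intervalIntegral_eq]
      have := hE0 x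
      gcongr
      exact f.abs_integral_mul_le (hEc.integrableOn_uIoc))
    (fun f => by
      obtain ⟨F, hF, -⟩ := LimFun.exists_of_tendsto
        (continuous_iff_continuousAt.2 fun x => (hd f x).continuousAt)
        (tendsto_div_atBot hE0 hE (hN f) c.tendsto_bot hcB f.tendsto_bot hEbot)
        (tendsto_div_atTop hE0 hE (hN f) c.tendsto_top hcT f.tendsto_top hEtop)
      exact ⟨F, hF⟩)
  refine ⟨A, fun f x => ?_⟩
  simpa only [hA] using hd f x

/-- `d/dx - c` has range of codimension one: `h` lies in it exactly when `∫ h p = 0`. Subtracting the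
multiple `μ(h) = ∫ h p / ∫ p²` of `p` makes `h` admissible, and then
`B h (x) = p(x)⁻¹ ∫_{-∞}^x (h - μ(h) p) p` is a solution with limits at `±∞`. -/
lemma exists_planar_left {p c : LimFun} (hp : ∀ x : ℝ, 0 < p x)
    (hp' : ∀ x : ℝ, HasDerivAt (fun x : ℝ => p x) (-(c x) * p x) x)
    (hpT : p ⊤ = 0) (hpB : p ⊥ = 0) (hcT : 0 < c ⊤) (hcB : c ⊥ < 0)
    (hint : Integrable (fun x : ℝ => p x)) :
    ∃ (μ : LimFun →L[ℝ] ℝ) (B : LimFun →L[ℝ] LimFun),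
      ∀ h (x : ℝ), HasDerivAt (fun x : ℝ => B h x) (h x - μ h * p x + c x * B h x) x := by
  have hi : ∀ s, IntegrableOn (fun x : ℝ => p x) s := fun s => hint.integrableOn
  set I : ℝ := ∫ x : ℝ, p x * p x with hI
  have hIpos : 0 < I := by
    have h2 := (p.integrableOn_mul (hi Set.univ)).integrable
    rw [Measure.restrict_univ] at h2
    rw [hI, integral_pos_iff_support_of_nonneg
      (fun x : ℝ => (mul_pos (hp x) (hp x)).le) h2]
    have : Function.support (fun x : ℝ => p x * p x) = Set.univ :=
      Set.eq_univ_of_forall fun x => (mul_pos (hp x) (hp x)).ne'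
    simp [this]
  let μ₀ : LimFun →ₗ[ℝ] ℝ :=
    { toFun := fun h => (∫ x : ℝ in Set.univ, h x * p x) / I
      map_add' := fun f g => by
        simp only [ContinuousMap.add_apply, add_mul]
        rw [integral_add (f.integrableOn_mul (hi _)) (g.integrableOn_mul (hi _)), add_div]
      map_smul' := fun a f => by
        simp only [ContinuousMap.smul_apply, smul_eq_mul, mul_assoc]
        rw [integral_const_mul, mul_div_assoc]; rfl }
  let μ : LimFun →L[ℝ] ℝ := μ₀.mkContinuous ((∫ x : ℝ in Set.univ, |p x|) / I) fun f => by
    change |(∫ x : ℝ in Set.univ, f x * p x) / I| ≤ _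
    rw [abs_div, abs_of_pos hIpos, div_mul_eq_mul_div]
    gcongr
    exact f.abs_integral_mul_le (hi _)
  have hμ : ∀ h, μ h * I = ∫ x : ℝ, h x * p x := fun h => by
    change (∫ x : ℝ in Set.univ, h x * p x) / I * I = _
    rw [div_mul_cancel₀ _ hIpos.ne', setIntegral_univ]
  let P : LimFun →L[ℝ] LimFun := ContinuousLinearMap.id ℝ LimFun - μ.smulRight p
  have hP : ∀ h x, P h x = h x - μ h * p x := fun h x => rfl
  have hP0 : ∀ h, ∫ x : ℝ, P h x * p x = 0 := fun h => by
    simp only [hP, sub_mul, mul_assoc]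
    have h1 := (h.integrableOn_mul (hi Set.univ)).integrable
    have h2 := (p.integrableOn_mul (hi Set.univ)).integrable
    rw [Measure.restrict_univ] at h1 h2
    rw [integral_sub h1 (h2.const_mul _), integral_const_mul, ← hI, hμ, sub_self]
  have hN : ∀ (f : LimFun) (x : ℝ),
      HasDerivAt (fun x : ℝ => ∫ t in Set.Iic x, f (t : ℝ) * p (t : ℝ)) (f x * p x) x :=
    fun f x => hasDerivAt_integral_Iic (f.continuous_real.mul p.continuous_real)
      (fun x => f.integrableOn_mul (hi _)) x
  have hd := fun (f : LimFun) (x : ℝ) =>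
    hasDerivAt_div_of (E := fun x : ℝ => p x) (hp x) (hp' x) (hN f x)
  -- at `+∞` both the integral and `p` tend to `0`, thanks to the solvability condition `hP0`
  have hcont : ∀ f : LimFun,
      Tendsto (fun x : ℝ => ∫ t in Set.Iic x, f (t : ℝ) * p (t : ℝ)) atTop
        (nhds (∫ t : ℝ, f t * p t)) := fun f => by
    have h1 := (f.integrableOn_mul (hi Set.univ)).integrable
    rw [Measure.restrict_univ] at h1
    exact (aecover_Iic tendsto_id).integral_tendsto_of_countably_generated h1
  obtain ⟨B, hB⟩ := LimFun.exists_clm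
    (fun h x => (∫ t in Set.Iic x, P h (t : ℝ) * p (t : ℝ)) / p x)
    (fun f g x => by
      simp only [map_add, ContinuousMap.add_apply, add_mul]
      rw [integral_add ((P f).integrableOn_mul (hi _)) ((P g).integrableOn_mul (hi _)), add_div])
    (fun a f x => by
      simp only [map_smul, ContinuousMap.smul_apply, smul_eq_mul, mul_assoc]
      rw [integral_const_mul, mul_div_assoc])
    (fun x => (∫ t : ℝ in Set.Iic x, |p t|) / p x * ‖P‖)
    (fun f x => by
      rw [abs_div, abs_of_pos (hp x), mul_assoc, div_mul_eq_mul_div]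
      have := hp x
      gcongr
      refine ((P f).abs_integral_mul_le (hi _)).trans ?_
      gcongr
      exact P.le_opNorm f)
    (fun f => by
      obtain ⟨F, hF, -⟩ := LimFun.exists_of_tendsto
        (continuous_iff_continuousAt.2 fun x => (hd (P f) x).continuousAt)
        ((tendsto_div_zero (a := fun x : ℝ => -(c x)) hp hp' (hN (P f))).2 c.tendsto_bot.neg
          (neg_ne_zero.2 hcB.ne) (P f).tendsto_bot (by simpa [hpB] using p.tendsto_bot)
          (tendsto_integral_Iic_zero tendsto_id))
        ((tendsto_div_zero (a := fun x : ℝ => -(c x)) hp hp' (hN (P f))).1 c.tendsto_top.neg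
          (neg_ne_zero.2 hcT.ne') (P f).tendsto_top (by simpa [hpT] using p.tendsto_top)
          (by simpa only [hP0] using hcont (P f)))
      exact ⟨F, hF⟩)
  refine ⟨μ, B, fun h x => ?_⟩
  have := hd (P h) x
  simp only [hB]
  refine this.congr_deriv ?_
  rw [hP]; ring

/-! ### The transverse operator -/

/-- `d²/dx² + q` is invertible on `LimFun` if it has a strict supersolution: `0 < w ≤ 1` with
`w'' + q w = -η < 0`. Since `1 + q ≥ 0`, the equation `θ'' + q θ = f` is the fixed point problem
`θ = K θ - (1 - d²/dx²)⁻¹ f` with the positive operator `K = (1 - d²/dx²)⁻¹ (1 + q)`. As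
`K w = w - η ≤ (1 - η) w`, the positive operator `w⁻¹ K w` has norm at most `1 - η`, and the Neumann
series applies. -/
lemma exists_transverse {q w w' : LimFun} {η : ℝ} (hη : 0 < η) (hη1 : η < 1)
    (hw : ∀ x, 0 < w x) (hw1 : ∀ x, w x ≤ 1) (hq : ∀ x, 0 ≤ 1 + q x)
    (hd : ∀ x : ℝ, HasDerivAt (fun x : ℝ => w x) (w' x) x)
    (hd' : ∀ x : ℝ, HasDerivAt (fun x : ℝ => w' x) (-(q x * w x) - η) x) :
    ∃ G G' : LimFun →L[ℝ] LimFun, ∀ f (x : ℝ),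
      HasDerivAt (fun x : ℝ => G f x) (G' f x) x ∧
      HasDerivAt (fun x : ℝ => G' f x) (f x - q x * G f x) x := by
  obtain ⟨A, hA, hA0⟩ := exists_resolvent_add
  obtain ⟨B, hB, hB0⟩ := exists_resolvent_sub
  let wi : LimFun := ⟨fun x => (w x)⁻¹, w.continuous.inv₀ fun x => (hw x).ne'⟩
  have hwi : ∀ x, wi x = (w x)⁻¹ := fun x => rfl
  -- `w - η` is the image of `w` under the positive operator `f ↦ A (B ((1 + q) f))`
  have hTw : A (B ((1 + q) * w)) = w - algebraMap ℝ LimFun η := by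
    have h1 : B ((1 + q) * w) = w - algebraMap ℝ LimFun η + w' := by
      rw [← sub_eq_zero]
      refine LimFun.eq_zero_of_deriv_sub _ fun x => ?_
      have := (hB ((1 + q) * w) x).sub (((hd x).sub_const η).add (hd' x))
      refine this.congr_deriv ?_
      simp
      ring
    rw [← sub_eq_zero]
    refine LimFun.eq_zero_of_deriv_add _ fun x => ?_
    refine ((hA (B ((1 + q) * w)) x).sub ((hd x).sub_const η)).congr_deriv ?_
    rw [h1]
    simp
    ring
  let mul := ContinuousLinearMap.mul ℝ LimFun
  let S : LimFun →L[ℝ] LimFun := mul wi ∘L A ∘L B ∘L mul ((1 + q) * w)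
  have hS : ∀ f x, S f x = (w x)⁻¹ * A (B ((1 + q) * w * f)) x := fun f x => rfl
  have hpos : ∀ f : LimFun, (∀ x : ℝ, 0 ≤ f x) → ∀ x, 0 ≤ S f x := fun f hf => by
    have hr : ∀ x : ℝ, 0 ≤ S f x := fun x => by
      rw [hS]
      exact mul_nonneg (inv_pos.2 (hw x)).le
        (hA0 _ (hB0 _ fun y => mul_nonneg (mul_nonneg (hq y) (hw y).le) (hf y)) x)
    intro x
    induction x using EReal.rec with
    | bot => exact ge_of_tendsto (S f).tendsto_bot (Eventually.of_forall hr)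
    | coe x => exact hr x
    | top => exact ge_of_tendsto (S f).tendsto_top (Eventually.of_forall hr)
  -- a positive operator on `C(EReal, ℝ)` is bounded by its value at `1`
  have hS1 : ∀ x, S 1 x ≤ 1 - η := fun x => by
    rw [hS, mul_one, hTw]
    have := hw x
    have h2 := hw1 x
    rw [inv_mul_le_iff₀ this]
    simp
    nlinarith
  have hSn : ‖S‖ ≤ 1 - η := by
    refine S.opNorm_le_bound (by linarith) fun f => ?_
    rw [ContinuousMap.norm_le _ (mul_nonneg (by linarith) (norm_nonneg f))]
    intro x
    have e : ∀ σ : ℝ, S (‖f‖ • (1 : LimFun) - σ • f) x = ‖f‖ * S 1 x - σ * S f x := fun σ => by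
      simp only [map_sub, map_smul]; simp
    have h1 := hpos (‖f‖ • (1 : LimFun) - (1 : ℝ) • f) (fun y => by
      simpa using (abs_le.1 (f.abs_apply_le y)).2) x
    have h2 := hpos (‖f‖ • (1 : LimFun) - (-1 : ℝ) • f) (fun y => by
      have := (abs_le.1 (f.abs_apply_le y)).1
      simp; linarith) x
    rw [e] at h1 h2
    have h3 := mul_le_mul_of_nonneg_left (hS1 x) (norm_nonneg f)
    rw [Real.norm_eq_abs, abs_le]
    constructor <;> linarith
  obtain ⟨U, hU⟩ := isUnit_one_sub_of_norm_lt_one (x := S) (by linarith)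
  let J : LimFun →L[ℝ] LimFun := ↑U⁻¹
  have hJ : ∀ f, J f = S (J f) + f := fun f => by
    have : (U : LimFun →L[ℝ] LimFun) * J = 1 := U.mul_inv
    rw [hU] at this
    have := congrArg (fun T : LimFun →L[ℝ] LimFun => T f) this
    simp [sub_mul] at this
    rw [← sub_eq_iff_eq_add']
    exact this
  let G : LimFun →L[ℝ] LimFun := -(mul w ∘L J ∘L mul wi ∘L A ∘L B)
  have hG : ∀ f, G f = - A (B (f - (1 + q) * G f)) := fun f => by
    have h1 : G f = - (w * J (wi * A (B f))) := rfl
    have h2 := hJ (wi * A (B f))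
    have h3 : w * wi = 1 := by ext x; simp [hwi, (hw x).ne']
    have h4 : ∀ g, S g = wi * A (B ((1 + q) * w * g)) := fun g => rfl
    set j := J (wi * A (B f))
    rw [h4] at h2
    rw [h1]
    have h5 : w * j = A (B ((1 + q) * w * j)) + A (B f) := by
      calc w * j = w * (wi * A (B ((1 + q) * w * j)) + wi * A (B f)) := by rw [← h2]
        _ = (w * wi) * (A (B ((1 + q) * w * j)) + A (B f)) := by ring
        _ = _ := by rw [h3, one_mul]
    have h6 : f - (1 + q) * -(w * j) = (1 + q) * w * j + f := by ring
    rw [h6, map_add, map_add, ← h5]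
  let R : LimFun →L[ℝ] LimFun := ContinuousLinearMap.id ℝ LimFun - mul (1 + q) ∘L G
  have hR : ∀ f, R f = f - (1 + q) * G f := fun f => rfl
  refine ⟨G, -((B - A ∘L B) ∘L R), fun f x => ?_⟩
  have hG' : ∀ f, G f = - A (B (R f)) := hG
  have h1 := fun x => (hA (B (R f)) x).neg
  have e2 : (-((B - A ∘L B) ∘L R)) f = -(B (R f) - A (B (R f))) := rfl
  have h2 := ((hB (R f) x).sub (hA (B (R f)) x)).neg
  constructor
  · rw [e2]
    conv => enter [1, x]; rw [hG']
    exact (h1 x).congr_deriv (by simp)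
  · rw [e2]
    refine h2.congr_deriv ?_
    have e3 : G f x = - A (B (R f)) x := by rw [hG']; rfl
    have e4 : R f x = f x - (1 + q x) * G f x := rfl
    have : A (B (R f)) x = - G f x := by rw [e3, neg_neg]
    rw [this, e4]
    ring

/-! ### Composition with sine and cosine -/

/-- Composition with sine. -/
def LimFun.sin (θ : LimFun) : LimFun := ⟨fun x => Real.sin (θ x), Real.continuous_sin.comp θ.continuous⟩

/-- Composition with cosine. -/
def LimFun.cos (θ : LimFun) : LimFun := ⟨fun x => Real.cos (θ x), Real.continuous_cos.comp θ.continuous⟩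

/-- Composition with `sin` and `cos` is `C¹` on `LimFun`, with derivative the multiplication by the
composition with the derivative; the remainder is quadratic uniformly in the base point. -/
lemma LimFun.contDiff_sin_cos : ContDiff ℝ 1 LimFun.sin ∧ ContDiff ℝ 1 LimFun.cos := by
  have key : ∀ (F F' : LimFun → LimFun) (f f' : ℝ → ℝ), (∀ θ x, F θ x = f (θ x)) →
      (∀ θ x, F' θ x = f' (θ x)) → Continuous F' →
      (∀ a b, |f b - f a - f' a * (b - a)| ≤ 3 * |b - a| ^ 2) → ContDiff ℝ 1 F := by
    intro F F' f f' hF hF' hc hest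
    rw [contDiff_one_iff_hasFDerivAt]
    refine ⟨fun θ => ContinuousLinearMap.mul ℝ LimFun (F' θ),
      (ContinuousLinearMap.mul ℝ LimFun).continuous.comp hc, fun θ => ?_⟩
    rw [hasFDerivAt_iff_isLittleO_nhds_zero]
    refine Asymptotics.IsBigO.trans_isLittleO (g := fun h : LimFun => ‖h‖ ^ 2) ?_
      (Asymptotics.isLittleO_norm_pow_id one_lt_two)
    refine Asymptotics.IsBigO.of_bound 3 (Eventually.of_forall fun h => ?_)
    rw [norm_pow, norm_norm, ContinuousMap.norm_le _ (by positivity)]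
    intro x
    have h1 := hest (θ x) (θ x + h x)
    have h2 : |h x| ^ 2 ≤ ‖h‖ ^ 2 := by gcongr; exact h.abs_apply_le x
    rw [add_sub_cancel_left] at h1
    refine le_trans ?_ (mul_le_mul_of_nonneg_left h2 zero_le_three)
    simpa [hF, hF'] using h1
  have hs : Continuous LimFun.sin := ContinuousMap.continuous_postcomp ⟨Real.sin, Real.continuous_sin⟩
  have hc : Continuous LimFun.cos := ContinuousMap.continuous_postcomp ⟨Real.cos, Real.continuous_cos⟩
  have c1 : ∀ h : ℝ, |Real.cos h - 1| ≤ |h| ^ 2 / 2 := fun h => by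
    have h1 := Real.one_sub_sq_div_two_le_cos (x := h)
    have h2 := Real.cos_le_one h
    rw [abs_le, sq_abs]; constructor <;> nlinarith [sq_nonneg h]
  have s0 : ∀ h : ℝ, 0 ≤ h → |Real.sin h - h| ≤ 2 * |h| ^ 2 := fun h hh => by
    have h1 := Real.sin_le hh
    rw [abs_le, sq_abs]
    refine ⟨?_, by nlinarith⟩
    rcases le_or_gt h 1 with h2 | h2
    · rcases hh.eq_or_lt with rfl | h3
      · simp
      · have h4 := Real.sin_gt_sub_cube h3
        nlinarith [pow_pos h3 2, mul_nonneg (pow_pos h3 2).le (sub_nonneg.2 h2)]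
    · nlinarith [Real.neg_one_le_sin h]
  have s1 : ∀ h : ℝ, |Real.sin h - h| ≤ 2 * |h| ^ 2 := fun h => by
    rcases le_total 0 h with hh | hh
    · exact s0 h hh
    · have := s0 (-h) (by linarith)
      rwa [Real.sin_neg, abs_neg, ← neg_sub', abs_neg] at this
  refine ⟨key LimFun.sin LimFun.cos Real.sin Real.cos (fun _ _ => rfl) (fun _ _ => rfl) hc ?_,
    key LimFun.cos (fun θ => -LimFun.sin θ) Real.cos (fun x => -Real.sin x) (fun _ _ => rfl)
      (fun _ _ => rfl) hs.neg ?_⟩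
  all_goals
    intro a b
    obtain ⟨h, rfl⟩ : ∃ h, b = a + h := ⟨b - a, by ring⟩
    rw [add_sub_cancel_left]
    have hc1 := c1 h
    have hs1 := s1 h
    have ha := Real.abs_sin_le_one a
    have hb := Real.abs_cos_le_one a
    have e1 : |Real.sin a * (Real.cos h - 1)| ≤ |h| ^ 2 / 2 := by
      rw [abs_mul]; nlinarith [abs_nonneg (Real.cos h - 1)]
    have e2 : |Real.cos a * (Real.sin h - h)| ≤ 2 * |h| ^ 2 := by
      rw [abs_mul]; nlinarith [abs_nonneg (Real.sin h - h)]
    have e3 : |Real.cos a * (Real.cos h - 1)| ≤ |h| ^ 2 / 2 := by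
      rw [abs_mul]; nlinarith [abs_nonneg (Real.cos h - 1)]
    have e4 : |Real.sin a * (Real.sin h - h)| ≤ 2 * |h| ^ 2 := by
      rw [abs_mul]; nlinarith [abs_nonneg (Real.sin h - h)]
    rw [abs_le] at e1 e2 e3 e4 ⊢
    have e0 := sq_nonneg |h|
  · rw [Real.sin_add]; constructor <;> linarith
  · rw [Real.cos_add]; constructor <;> linarith

/-! ### The static wall -/

/-- The static wall as an element of `LimFun`. Strict monotonicity keeps `βT` strictly between
`arcsin H` and `π - arcsin H`, so `sin βT > H` on the line, and `sin βT - H = -βT'` is integrable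
because `βT` is monotone and bounded. -/
lemma exists_wall {H : ℝ} (hH : 0 < H) (hH1 : H < 1) {βT : ℝ → ℝ} (hβT : ContDiff ℝ 1 βT)
    (hode : ∀ ξ, deriv βT ξ = H - Real.sin (βT ξ)) (hanti : StrictAnti βT)
    (hbot : Tendsto βT atBot (nhds (π - Real.arcsin H)))
    (htop : Tendsto βT atTop (nhds (Real.arcsin H))) :
    ∃ b : LimFun, (∀ x : ℝ, b x = βT x) ∧ (∀ x : ℝ, H < Real.sin (b x)) ∧
      Real.sin (b ⊤) = H ∧ Real.sin (b ⊥) = H ∧ 0 < Real.cos (b ⊤) ∧ Real.cos (b ⊥) < 0 ∧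
      (∀ x : ℝ, HasDerivAt (fun x : ℝ => b x) (H - Real.sin (b x)) x) ∧
      Integrable (fun x : ℝ => Real.sin (b x) - H) := by
  obtain ⟨b, hb, hbB, hbT⟩ := LimFun.exists_of_tendsto hβT.continuous hbot htop
  have ha1 : -(π / 2) < Real.arcsin H := by
    have := Real.neg_pi_div_two_le_arcsin H
    have := Real.arcsin_pos.2 hH
    linarith [Real.pi_pos]
  have ha2 : Real.arcsin H < π / 2 := Real.arcsin_lt_pi_div_two.2 hH1
  have hsa : Real.sin (Real.arcsin H) = H := Real.sin_arcsin (by linarith) hH1.le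
  have hca : 0 < Real.cos (Real.arcsin H) := Real.cos_pos_of_mem_Ioo ⟨ha1, ha2⟩
  have hlo : ∀ x, Real.arcsin H < βT x := fun x =>
    (hanti.antitone.le_of_tendsto htop (x + 1)).trans_lt (hanti (by linarith))
  have hhi : ∀ x, βT x < π - Real.arcsin H := fun x =>
    (hanti (by linarith : x - 1 < x)).trans_le (hanti.antitone.ge_of_tendsto hbot (x - 1))
  have hs : ∀ x, H < Real.sin (βT x) := by
    intro x
    rcases le_total (βT x) (π / 2) with h | h
    · rw [← hsa]
      exact (Real.sin_lt_sin_of_lt_of_le_pi_div_two ha1.le h (hlo x))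
    · rw [← Real.sin_pi_sub (βT x)]
      have h2 := hhi x
      have := Real.sin_lt_sin_of_lt_of_le_pi_div_two (x := Real.arcsin H) (y := π - βT x)
        ha1.le (by linarith) (by linarith)
      rwa [hsa] at this
  have hd : ∀ x : ℝ, HasDerivAt βT (H - Real.sin (βT x)) x := fun x => by
    rw [← hode]
    exact (hβT.differentiable one_ne_zero x).hasDerivAt
  have hi : Integrable (fun x : ℝ => H - Real.sin (βT x)) := by
    rw [← integrableOn_univ, ← Set.Iic_union_Ioi (a := (0 : ℝ))]
    refine IntegrableOn.union ?_ ?_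
    · refine (integrableOn_Iic_iff_integrableOn_Iio (by simp)).2 ?_
      have h1 : IntegrableOn (fun x : ℝ => -(H - Real.sin (βT (-x)))) (Set.Ioi 0) := by
        refine integrableOn_Ioi_deriv_of_nonneg' (g := fun x => βT (-x)) (l := π - Real.arcsin H)
          (fun x _ => ?_) (fun x _ => ?_) (hbot.comp tendsto_neg_atTop_atBot)
        · simpa [Function.comp_def] using (hd (-x)).comp x (hasDerivAt_neg x)
        · linarith [hs (-x)]
      have h2 := h1.neg.comp_neg
      simpa [Function.comp_def] using h2
    · exact integrableOn_Ioi_deriv_of_nonpos' (g := βT) (fun x _ => hd x)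
        (fun x _ => by linarith [hs x]) htop
  have hbf : (fun x : ℝ => b x) = βT := funext hb
  refine ⟨b, hb, fun x => by rw [hb]; exact hs x, by rw [hbT, hsa], by rw [hbB, Real.sin_pi_sub, hsa],
    by rwa [hbT], by rw [hbB, Real.cos_pi_sub]; linarith, fun x => ?_, ?_⟩
  · rw [hbf, hb]; exact hd x
  · simp only [hb]
    exact hi.neg.congr (Eventually.of_forall fun x => neg_sub _ _)

/-! ### Linearisation at the wall -/

@[fun_prop]
lemma LimFun.contDiff_sin : ContDiff ℝ 1 LimFun.sin := LimFun.contDiff_sin_cos.1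

@[fun_prop]
lemma LimFun.contDiff_cos : ContDiff ℝ 1 LimFun.cos := LimFun.contDiff_sin_cos.2

lemma LimFun.cos_apply (θ : LimFun) (x : EReal) : LimFun.cos θ x = Real.cos (θ x) := rfl

lemma LimFun.sin_apply (θ : LimFun) (x : EReal) : LimFun.sin θ x = Real.sin (θ x) := rfl

lemma LimFun.smul_one_apply (a : ℝ) (x : EReal) : (a • (1 : LimFun)) x = a := mul_one a

/-- The component along `∂_β m / cos θ` of the travelling-wave equation for
`m = (cos θ cos β, sin θ, cos θ sin β)`. The indices `₁`, `₂` mark derivatives of the angles. -/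
def azimRes (α V H₁ H₂ H₃ K₂ θ θ₁ θ₂ β β₁ : ℝ) : ℝ :=
  θ₂ + Real.sin θ * Real.cos θ * (β₁ ^ 2 - Real.cos β ^ 2 - K₂)
    - Real.sin θ * (H₁ * Real.cos β + H₃ * Real.sin β) + H₂ * Real.cos θ
    + V * Real.cos θ * β₁ + α * V * θ₁

/-- Minus the component along `∂_θ m` of the travelling-wave equation; see `azimRes`. -/
def polRes (α V H₁ H₃ θ θ₁ β β₁ β₂ : ℝ) : ℝ :=
  Real.cos θ * β₂ - 2 * Real.sin θ * θ₁ * β₁ - Real.cos θ * Real.cos β * Real.sin β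
    - H₁ * Real.sin β + H₃ * Real.cos β - V * θ₁ + α * V * Real.cos θ * β₁

/-- Inversion of the linearisation of `(azimRes, polRes)` at the static wall. For a right-hand side
`u = (f, h)` there are a velocity `V u` and angle perturbations `T u`, `F u`, with derivatives `T₁ u`,
`T₂ u`, `F₁ u`, `F₂ u`, solving
`θ'' + (p² - c² - H s) θ - V p = f` and `φ'' + (p s - c²) φ - α V p = h`,
where `s = sin b`, `c = cos b`, `p = s - H`. In the second equation the operator factors as
`(d/dx - c)(d/dx + c)` and has the one-dimensional cokernel spanned by `p`, so `h` fixes `V`. In the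
first one `s` is a strict supersolution: `s'' + (p² - c² - H s) s = -H`. -/
lemma exists_inverse_operators {α H : ℝ} (hα : 0 < α) (hH : 0 < H) (hH1 : H < 1) {b : LimFun}
    (hs : ∀ x : ℝ, H < Real.sin (b x)) (hsT : Real.sin (b ⊤) = H) (hsB : Real.sin (b ⊥) = H)
    (hcT : 0 < Real.cos (b ⊤)) (hcB : Real.cos (b ⊥) < 0)
    (hd : ∀ x : ℝ, HasDerivAt (fun x : ℝ => b x) (H - Real.sin (b x)) x)
    (hint : Integrable (fun x : ℝ => Real.sin (b x) - H)) :
    ∃ (V : LimFun × LimFun →L[ℝ] ℝ) (T T₁ T₂ F F₁ F₂ : LimFun × LimFun →L[ℝ] LimFun),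
      (∀ u (x : ℝ), HasDerivAt (fun x : ℝ => T u x) (T₁ u x) x) ∧
      (∀ u (x : ℝ), HasDerivAt (fun x : ℝ => T₁ u x) (T₂ u x) x) ∧
      (∀ u (x : ℝ), HasDerivAt (fun x : ℝ => F u x) (F₁ u x) x) ∧
      (∀ u (x : ℝ), HasDerivAt (fun x : ℝ => F₁ u x) (F₂ u x) x) ∧
      (∀ u x, T₂ u x + ((Real.sin (b x) - H) ^ 2 - Real.cos (b x) ^ 2 - H * Real.sin (b x)) * T u x
        - V u * (Real.sin (b x) - H) = u.1 x) ∧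
      (∀ u x, F₂ u x + ((Real.sin (b x) - H) * Real.sin (b x) - Real.cos (b x) ^ 2) * F u x
        - α * V u * (Real.sin (b x) - H) = u.2 x) := by
  set s : LimFun := b.sin with hsd
  set c : LimFun := b.cos with hcd
  set p : LimFun := s - H • 1 with hpd
  have hpx : ∀ x, p x = Real.sin (b x) - H := fun x => by
    rw [hpd, ContinuousMap.sub_apply, LimFun.smul_one_apply]; rfl
  have hsx : ∀ x, s x = Real.sin (b x) := fun x => rfl
  have hcx : ∀ x, c x = Real.cos (b x) := fun x => rfl
  have hs' : ∀ x : ℝ, HasDerivAt (fun x : ℝ => s x) (-(c x) * p x) x := fun x =>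
    (hd x).sin.congr_deriv (by rw [hcx, hpx]; ring)
  have hc' : ∀ x : ℝ, HasDerivAt (fun x : ℝ => c x) (s x * p x) x := fun x =>
    (hd x).cos.congr_deriv (by rw [hsx, hpx]; ring)
  have hp' : ∀ x : ℝ, HasDerivAt (fun x : ℝ => p x) (-(c x) * p x) x := fun x => by
    have : (fun x : ℝ => p x) = fun x : ℝ => s x - H := funext fun x => hpx x
    rw [this]
    exact (hs' x).sub_const H
  have hp : ∀ x : ℝ, 0 < p x := fun x => by rw [hpx]; linarith [hs x]
  have hpT : p ⊤ = 0 := by rw [hpx, hsT, sub_self]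
  have hpB : p ⊥ = 0 := by rw [hpx, hsB, sub_self]
  have hint' : Integrable (fun x : ℝ => p x) := by simpa only [hpx] using hint
  have hsH : ∀ x : EReal, H ≤ s x := fun x => by
    induction x using EReal.rec with
    | bot => exact hsB.ge
    | coe x => exact (hs x).le
    | top => exact hsT.ge
  obtain ⟨A, hA⟩ := exists_planar_right hp hp' hpT hpB hcT hcB
  obtain ⟨μ, B, hB⟩ := exists_planar_left hp hp' hpT hpB hcT hcB hint'
  set q : LimFun := p ^ 2 - c ^ 2 - H • s with hqd
  have hqx : ∀ x, q x = p x ^ 2 - c x ^ 2 - H * s x := fun x => rfl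
  -- hence `1 + q = 2 (s - H) (s - H / 2) ≥ 0`
  have hqx' : ∀ x, q x = 2 * (s x - H) * (s x - H / 2) - 1 := fun x => by
    rw [hqx, hpx, hcx, Real.cos_sq', hsx]; ring
  obtain ⟨G, G', hG⟩ := exists_transverse (q := q) (w := s) (w' := -(c * p)) hH hH1
    (fun x => hH.trans_le (hsH x)) (fun x => Real.sin_le_one _)
    (fun x => by
      have := hsH x
      rw [hqx']
      have := mul_nonneg (sub_nonneg.2 this) (by linarith : 0 ≤ s x - H / 2)
      linarith)
    (fun x => (hs' x).congr_deriv (by simp))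
    (fun x => by
      have := ((hc' x).mul (hp' x)).neg
      refine this.congr_deriv ?_
      have h1 : c x ^ 2 = 1 - s x ^ 2 := Real.cos_sq' _
      have h2 : p x = s x - H := hpx x
      rw [hqx', h2]
      linear_combination (s x - H) * h1)
  let E := LimFun × LimFun
  let snd : E →L[ℝ] LimFun := ContinuousLinearMap.snd ℝ LimFun LimFun
  let fst : E →L[ℝ] LimFun := ContinuousLinearMap.fst ℝ LimFun LimFun
  let mul := ContinuousLinearMap.mul ℝ LimFun
  let V : E →L[ℝ] ℝ := -(α⁻¹ • (μ ∘L snd))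
  have hV : ∀ u, α * V u = -μ u.2 := fun u => by
    change α * -(α⁻¹ * μ u.2) = _
    field_simp
  let S : E →L[ℝ] LimFun := fst + V.smulRight p
  let F : E →L[ℝ] LimFun := A ∘L B ∘L snd
  refine ⟨V, G ∘L S, G' ∘L S, S - mul q ∘L (G ∘L S), F, B ∘L snd - mul c ∘L F,
    snd - (μ ∘L snd).smulRight p - mul (p * s - c ^ 2) ∘L F, fun u x => (hG (S u) x).1,
    fun u x => (hG (S u) x).2, fun u x => hA (B u.2) x, fun u x => ?_, fun u x => ?_,
    fun u x => ?_⟩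
  · refine ((hB u.2 x).sub ((hc' x).mul (hA (B u.2) x))).congr_deriv ?_
    change _ = u.2 x - μ u.2 * p x - (p x * s x - c x ^ 2) * F u x
    change _ - (_ * F u x + c x * (_ - c x * F u x)) = _
    ring
  · change (u.1 x + V u * p x - q x * G (S u) x) + _ * G (S u) x - _ = _
    rw [hqx, hpx, hcx, hsx]; ring
  · rw [hV]
    change (u.2 x - μ u.2 * p x - (p x * s x - c x ^ 2) * F u x) + _ * F u x - _ = _
    rw [hpx, hcx, hsx]; ring

/-! ### The implicit function theorem -/

/-- For parameters `l = (H₁, H₂, H₃, K₂)` near `(0, 0, H, 0)` there is a small solution of the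
travelling-wave equations in angle variables, by the implicit function theorem. The unknown is the
right-hand side `u` of the linearised problem, so that the partial derivative in `u` at the static
wall is the identity. -/
lemma eventually_exists_profile {α H : ℝ} (hα : 0 < α) (hH : 0 < H) (hH1 : H < 1) {b : LimFun}
    (hs : ∀ x : ℝ, H < Real.sin (b x)) (hsT : Real.sin (b ⊤) = H) (hsB : Real.sin (b ⊥) = H)
    (hcT : 0 < Real.cos (b ⊤)) (hcB : Real.cos (b ⊥) < 0)
    (hd : ∀ x : ℝ, HasDerivAt (fun x : ℝ => b x) (H - Real.sin (b x)) x)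
    (hint : Integrable (fun x : ℝ => Real.sin (b x) - H)) {δ : ℝ} (hδ : 0 < δ) :
    ∀ᶠ l : ℝ × ℝ × ℝ × ℝ in nhds (0, 0, H, 0), ∃ (V : ℝ) (θ θ₁ θ₂ φ φ₁ φ₂ : LimFun),
      |V| < δ ∧ ‖θ‖ < δ ∧ ‖φ‖ < δ ∧
      (∀ x : ℝ, HasDerivAt (fun x : ℝ => θ x) (θ₁ x) x) ∧
      (∀ x : ℝ, HasDerivAt (fun x : ℝ => θ₁ x) (θ₂ x) x) ∧
      (∀ x : ℝ, HasDerivAt (fun x : ℝ => φ x) (φ₁ x) x) ∧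
      (∀ x : ℝ, HasDerivAt (fun x : ℝ => φ₁ x) (φ₂ x) x) ∧
      (∀ x : EReal, azimRes α V l.1 l.2.1 l.2.2.1 l.2.2.2 (θ x) (θ₁ x) (θ₂ x) (b x + φ x)
        (H - Real.sin (b x) + φ₁ x) = 0) ∧
      (∀ x : EReal, polRes α V l.1 l.2.2.1 (θ x) (θ₁ x) (b x + φ x)
        (H - Real.sin (b x) + φ₁ x) (Real.cos (b x) * (Real.sin (b x) - H) + φ₂ x) = 0) := by
  obtain ⟨V, T, T₁, T₂, F, F₁, F₂, hT, hT₁, hF, hF₁, hlin₁, hlin₂⟩ :=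
    exists_inverse_operators hα hH hH1 hs hsT hsB hcT hcB hd hint
  let d : LimFun := H • 1 - b.sin
  let e : LimFun := b.cos * (b.sin - H • 1)
  let Φ₁ : (ℝ × ℝ × ℝ × ℝ) × (LimFun × LimFun) → LimFun := fun z =>
    T₂ z.2 + (T z.2).sin * (T z.2).cos * ((d + F₁ z.2) ^ 2 - (b + F z.2).cos ^ 2 - z.1.2.2.2 • 1)
    - (T z.2).sin * (z.1.1 • (b + F z.2).cos + z.1.2.2.1 • (b + F z.2).sin)
    + z.1.2.1 • (T z.2).cos
    + V z.2 • ((T z.2).cos * (d + F₁ z.2)) + (α * V z.2) • T₁ z.2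
  let Φ₂ : (ℝ × ℝ × ℝ × ℝ) × (LimFun × LimFun) → LimFun := fun z =>
    (T z.2).cos * (e + F₂ z.2) - (2 : ℝ) • ((T z.2).sin * T₁ z.2 * (d + F₁ z.2))
    - (T z.2).cos * (b + F z.2).cos * (b + F z.2).sin
    - z.1.1 • (b + F z.2).sin + z.1.2.2.1 • (b + F z.2).cos - V z.2 • T₁ z.2
    + (α * V z.2) • ((T z.2).cos * (d + F₁ z.2))
  have hΦ₁ : ∀ z x, Φ₁ z x = azimRes α (V z.2) z.1.1 z.1.2.1 z.1.2.2.1 z.1.2.2.2 (T z.2 x)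
      (T₁ z.2 x) (T₂ z.2 x) (b x + F z.2 x) (H - Real.sin (b x) + F₁ z.2 x) := fun z x => by
    simp [Φ₁, azimRes, LimFun.sin_apply, LimFun.cos_apply, d, mul_assoc]
  have hΦ₂ : ∀ z x, Φ₂ z x = polRes α (V z.2) z.1.1 z.1.2.2.1 (T z.2 x) (T₁ z.2 x) (b x + F z.2 x)
      (H - Real.sin (b x) + F₁ z.2 x) (Real.cos (b x) * (Real.sin (b x) - H) + F₂ z.2 x) :=
    fun z x => by
    simp [Φ₂, polRes, LimFun.sin_apply, LimFun.cos_apply, d, e, mul_assoc]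
  let Φ : (ℝ × ℝ × ℝ × ℝ) × (LimFun × LimFun) → LimFun × LimFun := fun z => (Φ₁ z, Φ₂ z)
  have hΦ : ContDiff ℝ 1 Φ := by
    simp only [Φ, Φ₁, Φ₂]
    fun_prop
  let z₀ : (ℝ × ℝ × ℝ × ℝ) × (LimFun × LimFun) := ((0, 0, H, 0), 0)
  have hz₀ : Φ z₀ = 0 := by
    refine Prod.ext (ContinuousMap.ext fun x => ?_) (ContinuousMap.ext fun x => ?_)
    · refine (hΦ₁ z₀ x).trans ?_
      simp [z₀, azimRes]
    · refine (hΦ₂ z₀ x).trans ?_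
      simp [z₀, polRes]
      ring
  have hcd : ContDiffAt ℝ 1 Φ z₀ := hΦ.contDiffAt
  -- this derivative is computed pointwise in `x` along the line `t ↦ t • v`
  have hid : fderiv ℝ Φ z₀ ∘L .inr ℝ (ℝ × ℝ × ℝ × ℝ) (LimFun × LimFun) = ContinuousLinearMap.id ℝ (LimFun × LimFun) := by
    refine ContinuousLinearMap.ext fun v => ?_
    have hl : HasDerivAt (fun t : ℝ => ((0, 0, H, 0), t • v) : ℝ → (ℝ × ℝ × ℝ × ℝ) × (LimFun × LimFun)) (0, v) 0 := by
      have h1 : HasDerivAt (fun t : ℝ => t • v) v 0 := by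
        simpa using (hasDerivAt_id (0 : ℝ)).smul_const v
      exact (hasDerivAt_const _ _).prodMk h1
    have hcomp : HasDerivAt (fun t : ℝ => Φ ((0, 0, H, 0), t • v)) (fderiv ℝ Φ z₀ (0, v)) 0 := by
      have h2 : HasFDerivAt Φ (fderiv ℝ Φ z₀) (((0, 0, H, 0), (0 : ℝ) • v) : (ℝ × ℝ × ℝ × ℝ) × (LimFun × LimFun)) := by
        rw [zero_smul]
        exact (hcd.differentiableAt one_ne_zero).hasFDerivAt
      exact h2.comp_hasDerivAt 0 hl
    have ht : ∀ a : ℝ, HasDerivAt (fun t : ℝ => t * a) a 0 := fun a => by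
      simpa using (hasDerivAt_id (0 : ℝ)).mul_const a
    have hsin : ∀ a c : ℝ, HasDerivAt (fun t : ℝ => Real.sin (c + t * a)) (Real.cos c * a) 0 :=
      fun a c => (((ht a).const_add c).sin).congr_deriv (by simp)
    have hcos : ∀ a c : ℝ, HasDerivAt (fun t : ℝ => Real.cos (c + t * a)) (-Real.sin c * a) 0 :=
      fun a c => (((ht a).const_add c).cos).congr_deriv (by simp)
    have hsin0 : ∀ a : ℝ, HasDerivAt (fun t : ℝ => Real.sin (t * a)) a 0 :=
      fun a => ((ht a).sin).congr_deriv (by simp)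
    have hcos0 : ∀ a : ℝ, HasDerivAt (fun t : ℝ => Real.cos (t * a)) 0 0 :=
      fun a => ((ht a).cos).congr_deriv (by simp)
    have ev : ∀ (f : ℝ → LimFun) (f' : LimFun) (x : EReal), HasDerivAt f f' 0 →
        HasDerivAt (fun t => f t x) (f' x) 0 := fun f f' x hf =>
      (ContinuousMap.evalCLM ℝ x : LimFun →L[ℝ] ℝ).hasFDerivAt.comp_hasDerivAt 0 hf
    refine Prod.ext (ContinuousMap.ext fun x => ?_) (ContinuousMap.ext fun x => ?_)
    · have h3 := ev _ _ x hcomp.fst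
      refine h3.unique ?_
      have h4 : (fun t : ℝ => (Φ ((0, 0, H, 0), t • v)).1 x) = fun t => t * T₂ v x
          + Real.sin (t * T v x) * Real.cos (t * T v x) * ((H - Real.sin (b x) + t * F₁ v x) ^ 2
            - Real.cos (b x + t * F v x) ^ 2)
          - Real.sin (t * T v x) * (H * Real.sin (b x + t * F v x))
          + t * V v * (Real.cos (t * T v x) * (H - Real.sin (b x) + t * F₁ v x))
          + t * (α * V v) * (t * T₁ v x) := by
        funext t
        refine (hΦ₁ _ x).trans ?_
        simp only [azimRes, map_smul, ContinuousMap.smul_apply, smul_eq_mul]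
        ring
      rw [h4]
      refine (((((ht (T₂ v x)).add (((hsin0 (T v x)).mul (hcos0 (T v x))).mul
        ((((ht (F₁ v x)).const_add _).pow 2).sub ((hcos _ _).pow 2)))).sub
        ((hsin0 _).mul ((hsin _ _).const_mul H))).add
        ((ht (V v)).mul ((hcos0 _).mul ((ht (F₁ v x)).const_add _)))).add
        ((ht (α * V v)).mul (ht (T₁ v x)))).congr_deriv ?_
      have h5 := hlin₁ v x
      change _ = v.1 x
      rw [← h5]
      simp
      ring
    · have h3 := ev _ _ x hcomp.snd
      refine h3.unique ?_
      have h4 : (fun t : ℝ => (Φ ((0, 0, H, 0), t • v)).2 x) = fun t =>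
          Real.cos (t * T v x) * (Real.cos (b x) * (Real.sin (b x) - H) + t * F₂ v x)
          - t * T₁ v x * (Real.sin (t * T v x) * 2 * (H - Real.sin (b x) + t * F₁ v x))
          - Real.cos (t * T v x) * (Real.cos (b x + t * F v x) * Real.sin (b x + t * F v x))
          + H * Real.cos (b x + t * F v x) - t * V v * (t * T₁ v x)
          + t * (α * V v) * (Real.cos (t * T v x) * (H - Real.sin (b x) + t * F₁ v x)) := by
        funext t
        refine (hΦ₂ _ x).trans ?_
        simp only [polRes, map_smul, ContinuousMap.smul_apply, smul_eq_mul]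
        ring
      rw [h4]
      refine (((((((hcos0 (T v x)).mul ((ht (F₂ v x)).const_add _)).sub
        ((ht (T₁ v x)).mul (((hsin0 _).mul_const 2).mul ((ht (F₁ v x)).const_add _)))).sub
        ((hcos0 _).mul ((hcos _ _).mul (hsin _ _)))).add ((hcos _ _).const_mul H)).sub
        ((ht (V v)).mul (ht (T₁ v x)))).add
        ((ht (α * V v)).mul ((hcos0 _).mul ((ht (F₁ v x)).const_add _)))).congr_deriv ?_
      have h5 := hlin₂ v x
      change _ = v.2 x
      rw [← h5]
      simp
      ring
  have hinv : (fderiv ℝ Φ z₀ ∘L .inr ℝ (ℝ × ℝ × ℝ × ℝ) (LimFun × LimFun)).IsInvertible := by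
    rw [hid]
    exact ⟨ContinuousLinearEquiv.refl ℝ (LimFun × LimFun), rfl⟩
  set ψ := hcd.implicitFunction one_ne_zero hinv with hψ
  have hψ0 : Tendsto ψ (nhds z₀.1) (nhds 0) :=
    (hcd.hasStrictFDerivAt one_ne_zero).tendsto_implicitFunctionOfProdDomain hinv
  have hsmall : ∀ {X : Type} [NormedAddCommGroup X] [NormedSpace ℝ X] (L : LimFun × LimFun →L[ℝ] X),
      ∀ᶠ l in nhds z₀.1, ‖L (ψ l)‖ < δ := fun L => by
    have h1 := ((L.continuous.tendsto 0).comp hψ0).norm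
    rw [map_zero, norm_zero] at h1
    exact h1.eventually_lt_const hδ
  filter_upwards [hcd.eventually_apply_implicitFunction one_ne_zero hinv, hsmall V, hsmall T,
    hsmall F] with l h1 h2 h3 h4
  rw [hz₀, ← hψ] at h1
  refine ⟨V (ψ l), T (ψ l), T₁ (ψ l), T₂ (ψ l), F (ψ l), F₁ (ψ l), F₂ (ψ l), h2, h3, h4, hT _,
    hT₁ _, hF _, hF₁ _, fun x => ?_, fun x => ?_⟩
  · rw [← hΦ₁ (l, ψ l) x]
    exact congrArg (fun u : LimFun × LimFun => u.1 x) h1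
  · rw [← hΦ₂ (l, ψ l) x]
    exact congrArg (fun u : LimFun × LimFun => u.2 x) h1

/-! ### From angles to magnetization -/

/-- The unit vector with angles `θ` (elevation above the `xz`-plane) and `β` (in that plane). -/
def dirVec (θ β : ℝ) : Fin 3 → ℝ :=
  ![Real.cos θ * Real.cos β, Real.sin θ, Real.cos θ * Real.sin β]

/-- The first derivative of `dirVec θ β` along a curve with `θ' = θ₁`, `β' = β₁`. -/
def dirVel (θ θ₁ β β₁ : ℝ) : Fin 3 → ℝ :=
  ![-Real.sin θ * θ₁ * Real.cos β - Real.cos θ * Real.sin β * β₁, Real.cos θ * θ₁,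
    -Real.sin θ * θ₁ * Real.sin β + Real.cos θ * Real.cos β * β₁]

/-- The second derivative of `dirVec θ β` along a curve with `θ' = θ₁`, `θ'' = θ₂`, `β' = β₁`,
`β'' = β₂`. -/
def dirAcc (θ θ₁ θ₂ β β₁ β₂ : ℝ) : Fin 3 → ℝ :=
  ![-Real.cos θ * θ₁ ^ 2 * Real.cos β - Real.sin θ * θ₂ * Real.cos β
      + 2 * Real.sin θ * θ₁ * Real.sin β * β₁ - Real.cos θ * Real.cos β * β₁ ^ 2
      - Real.cos θ * Real.sin β * β₂,
    -Real.sin θ * θ₁ ^ 2 + Real.cos θ * θ₂,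
    -Real.cos θ * θ₁ ^ 2 * Real.sin β - Real.sin θ * θ₂ * Real.sin β
      - 2 * Real.sin θ * θ₁ * Real.cos β * β₁ - Real.cos θ * Real.sin β * β₁ ^ 2
      + Real.cos θ * Real.cos β * β₂]

/-- In the orthonormal tangent frame `e_θ`, `e_β` of the sphere the travelling-wave vector is
`azimRes • e_β - polRes • e_θ`, so it vanishes with the two residuals. -/
lemma travelling_wave_identity {α V H₁ H₂ H₃ K₂ θ θ₁ θ₂ β β₁ β₂ : ℝ}
    (h₁ : azimRes α V H₁ H₂ H₃ K₂ θ θ₁ θ₂ β β₁ = 0) (h₂ : polRes α V H₁ H₃ θ θ₁ β β₁ β₂ = 0) :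
    V • dirVel θ θ₁ β β₁ + (α * V) • cross3 (dirVec θ β) (dirVel θ θ₁ β β₁) +
      cross3 (dirVec θ β) (dirAcc θ θ₁ θ₂ β β₁ β₂ + (dot3 (dirVec θ β) xhat) • xhat -
        (K₂ * dot3 (dirVec θ β) yhat) • yhat + ![H₁, H₂, H₃]) = 0 := by
  have hθ := Real.sin_sq_add_cos_sq θ
  have hβ := Real.sin_sq_add_cos_sq β
  simp only [azimRes, polRes] at h₁ h₂
  ext i
  fin_cases i <;>
    simp only [dirVel, dirVec, dirAcc, cross3, dot3, xhat, yhat, Pi.add_apply, Pi.sub_apply,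
      Pi.smul_apply, Pi.zero_apply, smul_eq_mul, Fin.zero_eta, Fin.mk_one, Fin.reduceFinMk, Matrix.cons_val]
  all_goals generalize Real.sin θ = s at *
  all_goals generalize Real.cos θ = c at *
  all_goals generalize Real.sin β = t at *
  all_goals generalize Real.cos β = d at *
  · grind
  · grind
  · grind

lemma hasDerivAt_dirVec {θ β : ℝ → ℝ} {θ₁ β₁ x : ℝ} (hθ : HasDerivAt θ θ₁ x)
    (hβ : HasDerivAt β β₁ x) :
    HasDerivAt (fun x => dirVec (θ x) (β x)) (dirVel (θ x) θ₁ (β x) β₁) x := by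
  rw [hasDerivAt_pi]
  intro i
  fin_cases i
  · exact (hθ.cos.mul hβ.cos).congr_deriv (by simp [dirVel]; ring)
  · exact hθ.sin.congr_deriv (by simp [dirVel])
  · exact (hθ.cos.mul hβ.sin).congr_deriv (by simp [dirVel]; ring)

lemma hasDerivAt_dirVel {θ θ₁ β β₁ : ℝ → ℝ} {θ₂ β₂ x : ℝ} (hθ : HasDerivAt θ (θ₁ x) x)
    (hθ₁ : HasDerivAt θ₁ θ₂ x) (hβ : HasDerivAt β (β₁ x) x) (hβ₁ : HasDerivAt β₁ β₂ x) :
    HasDerivAt (fun x => dirVel (θ x) (θ₁ x) (β x) (β₁ x))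
      (dirAcc (θ x) (θ₁ x) θ₂ (β x) (β₁ x) β₂) x := by
  rw [hasDerivAt_pi]
  intro i
  fin_cases i
  · exact (((hθ.sin.neg.mul hθ₁).mul hβ.cos).sub ((hθ.cos.mul hβ.sin).mul hβ₁)).congr_deriv
      (by simp [dirAcc]; ring)
  · exact (hθ.cos.mul hθ₁).congr_deriv (by simp [dirAcc]; ring)
  · exact (((hθ.sin.neg.mul hθ₁).mul hβ.sin).add ((hθ.cos.mul hβ.cos).mul hβ₁)).congr_deriv
      (by simp [dirAcc]; ring)

lemma tendsto_dirVec {l : Filter ℝ} {f g : ℝ → ℝ} {x y : ℝ} (hf : Tendsto f l (nhds x))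
    (hg : Tendsto g l (nhds y)) :
    Tendsto (fun t => dirVec (f t) (g t)) l (nhds (dirVec x y)) := by
  have hc := (Real.continuous_cos.tendsto x).comp hf
  rw [tendsto_pi_nhds]
  intro i
  fin_cases i
  · exact hc.mul ((Real.continuous_cos.tendsto y).comp hg)
  · exact (Real.continuous_sin.tendsto x).comp hf
  · exact hc.mul ((Real.continuous_sin.tendsto y).comp hg)

lemma contDiff_two_of_hasDerivAt {f f₁ f₂ : ℝ → ℝ} (h : ∀ x, HasDerivAt f (f₁ x) x)
    (h₁ : ∀ x, HasDerivAt f₁ (f₂ x) x) (hc : Continuous f₂) : ContDiff ℝ 2 f := by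
  have e : deriv f = f₁ := funext fun x => (h x).deriv
  have e₁ : deriv f₁ = f₂ := funext fun x => (h₁ x).deriv
  have c1 : ContDiff ℝ 1 f₁ := by
    rw [contDiff_one_iff_deriv, e₁]
    exact ⟨fun x => (h₁ x).differentiableAt, hc⟩
  rw [show (2 : WithTop ℕ∞) = 1 + 1 by norm_num, contDiff_succ_iff_deriv, e]
  exact ⟨fun x => (h x).differentiableAt, by simp, c1⟩

/-- If `f` and `f'` both have limits at `±∞`, the limits of `f'` vanish, by the mean value theorem on
`[x, x + 1]`. -/
lemma LimFun.deriv_limits_eq_zero {f f₁ : LimFun}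
    (h : ∀ x : ℝ, HasDerivAt (fun x : ℝ => f x) (f₁ x) x) : f₁ ⊤ = 0 ∧ f₁ ⊥ = 0 := by
  have hmv : ∀ x : ℝ, ∃ y, (x ≤ y ∧ y ≤ x + 1) ∧ f₁ y = f ((x + 1 : ℝ) : EReal) - f x := fun x => by
    obtain ⟨y, hy, e⟩ := exists_hasDerivAt_eq_slope (fun x : ℝ => f x) (fun x : ℝ => f₁ x)
      (lt_add_one x) f.continuous_real.continuousOn (fun y _ => h y)
    exact ⟨y, ⟨hy.1.le, hy.2.le⟩, by simpa using e⟩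
  choose y hy e using hmv
  have key : ∀ (l : Filter ℝ) [l.NeBot] (z : EReal), Tendsto y l l →
      Tendsto (fun x : ℝ => x + 1) l l → Tendsto (fun x : ℝ => f x) l (nhds (f z)) →
      Tendsto (fun x : ℝ => f₁ x) l (nhds (f₁ z)) → f₁ z = 0 := by
    intro l _ z h1 h2 h3 h4
    have h5 := (h3.comp h2).sub h3
    rw [sub_self] at h5
    exact tendsto_nhds_unique (h4.comp h1) (h5.congr fun x => (e x).symm)
  exact ⟨key atTop ⊤ (tendsto_atTop_mono (fun x => (hy x).1) tendsto_id)
      (tendsto_atTop_add_const_right _ _ tendsto_id) f.tendsto_top f₁.tendsto_top,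
    key atBot ⊥ (tendsto_atBot_mono (fun x => (hy x).2)
      (tendsto_atBot_add_const_right _ _ tendsto_id))
      (tendsto_atBot_add_const_right _ _ tendsto_id) f.tendsto_bot f₁.tendsto_bot⟩

lemma norm3_le (a : Fin 3 → ℝ) : norm3 a ≤ |a 0| + |a 1| + |a 2| := by
  refine Real.sqrt_le_iff.2 ⟨by positivity, ?_⟩
  have h0 := abs_nonneg (a 0)
  have h1 := abs_nonneg (a 1)
  have h2 := abs_nonneg (a 2)
  simp only [dot3, ← abs_mul_abs_self (a 0), ← abs_mul_abs_self (a 1), ← abs_mul_abs_self (a 2)]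
  nlinarith [mul_nonneg h0 h1, mul_nonneg h0 h2, mul_nonneg h1 h2]

lemma norm3_dirVec (θ β : ℝ) : norm3 (dirVec θ β) = 1 := by
  rw [norm3, Real.sqrt_eq_one]
  simp [dot3, dirVec]
  linear_combination (Real.cos θ) ^ 2 * Real.sin_sq_add_cos_sq β + Real.sin_sq_add_cos_sq θ

lemma abs_mul_sub_le {c d e : ℝ} (hc : |c| ≤ 1) : |c * d - e| ≤ |d - e| + |e| * |c - 1| := by
  have : c * d - e = c * (d - e) + e * (c - 1) := by ring
  rw [this]
  refine (abs_add_le _ _).trans ?_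
  rw [abs_mul, abs_mul]
  nlinarith [abs_nonneg (d - e)]

lemma abs_dirVec_sub_le (θ β φ : ℝ) :
    |dirVec θ (β + φ) 0 - Real.cos β| ≤ |θ| + |φ| ∧ |dirVec θ (β + φ) 1| ≤ |θ| ∧
      |dirVec θ (β + φ) 2 - Real.sin β| ≤ |θ| + |φ| := by
  have h1 : |Real.cos θ - 1| ≤ |θ| := by simpa using Real.abs_cos_sub_cos_le θ 0
  have h2 : |Real.sin θ| ≤ |θ| := by simpa using Real.abs_sin_sub_sin_le θ 0
  have h3 : |Real.cos (β + φ) - Real.cos β| ≤ |φ| := by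
    simpa using Real.abs_cos_sub_cos_le (β + φ) β
  have h4 : |Real.sin (β + φ) - Real.sin β| ≤ |φ| := by
    simpa using Real.abs_sin_sub_sin_le (β + φ) β
  have h5 := Real.abs_cos_le_one β
  have h6 := Real.abs_sin_le_one β
  have h7 := abs_nonneg (Real.cos θ - 1)
  refine ⟨(abs_mul_sub_le (Real.abs_cos_le_one θ)).trans ?_, h2,
    (abs_mul_sub_le (Real.abs_cos_le_one θ)).trans ?_⟩ <;> nlinarith

/-- Angle perturbations `θ`, `φ` of size less than `δ` with vanishing residuals yield a travelling wave
with all the required properties. The angle derivatives vanish at `±∞`, so there the wave equation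
reduces to the vanishing of the torque. -/
lemma travelling_wave_of_angles {α V H H₁ H₂ H₃ K₂ δ : ℝ}
    {b θ θ₁ θ₂ φ φ₁ φ₂ : LimFun}
    (hb : ∀ x : ℝ, HasDerivAt (fun x : ℝ => b x) (H - Real.sin (b x)) x)
    (hcT : 3 * δ ≤ Real.cos (b ⊤)) (hcB : Real.cos (b ⊥) ≤ -(3 * δ)) (hδ : 0 < δ)
    (hθδ : ‖θ‖ < δ) (hφδ : ‖φ‖ < δ)
    (hθ : ∀ x : ℝ, HasDerivAt (fun x : ℝ => θ x) (θ₁ x) x)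
    (hθ₁ : ∀ x : ℝ, HasDerivAt (fun x : ℝ => θ₁ x) (θ₂ x) x)
    (hφ : ∀ x : ℝ, HasDerivAt (fun x : ℝ => φ x) (φ₁ x) x)
    (hφ₁ : ∀ x : ℝ, HasDerivAt (fun x : ℝ => φ₁ x) (φ₂ x) x)
    (hR₁ : ∀ x : EReal, azimRes α V H₁ H₂ H₃ K₂ (θ x) (θ₁ x) (θ₂ x) (b x + φ x)
        (H - Real.sin (b x) + φ₁ x) = 0)
    (hR₂ : ∀ x : EReal, polRes α V H₁ H₃ (θ x) (θ₁ x) (b x + φ x)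
        (H - Real.sin (b x) + φ₁ x) (Real.cos (b x) * (Real.sin (b x) - H) + φ₂ x) = 0)
    {m mT : ℝ → Fin 3 → ℝ} (hm : m = fun x : ℝ => dirVec (θ x) (b x + φ x))
    (hmT : ∀ x : ℝ, mT x = ![Real.cos (b x), 0, Real.sin (b x)]) :
    ∃ mp mm : Fin 3 → ℝ,
      ContDiff ℝ 2 m ∧ (∀ ξ, norm3 (m ξ) = 1) ∧
      (∀ ξ, V • deriv m ξ + (α * V) • cross3 (m ξ) (deriv m ξ) +
          cross3 (m ξ)
            (deriv (deriv m) ξ + (dot3 (m ξ) xhat) • xhat -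
              (K₂ * dot3 (m ξ) yhat) • yhat + ![H₁, H₂, H₃]) = 0) ∧
      Tendsto m atTop (nhds mp) ∧ Tendsto m atBot (nhds mm) ∧
      cross3 mp ((dot3 mp xhat) • xhat - (K₂ * dot3 mp yhat) • yhat + ![H₁, H₂, H₃]) = 0 ∧
      cross3 mm ((dot3 mm xhat) • xhat - (K₂ * dot3 mm yhat) • yhat + ![H₁, H₂, H₃]) = 0 ∧
      0 < dot3 xhat mp ∧ dot3 xhat mm < 0 ∧
      ∀ ξ, norm3 (m ξ - mT ξ) ≤ 5 * δ := by
  set β : LimFun := b + φ with hβd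
  set β₁ : LimFun := H • 1 - b.sin + φ₁ with hβ₁d
  set β₂ : LimFun := b.cos * (b.sin - H • 1) + φ₂ with hβ₂d
  have eβ : ∀ x, b x + φ x = β x := fun x => rfl
  have eβ₁ : ∀ x, H - Real.sin (b x) + φ₁ x = β₁ x := fun x => by
    simp [hβ₁d, LimFun.sin_apply]
  have eβ₂ : ∀ x, Real.cos (b x) * (Real.sin (b x) - H) + φ₂ x = β₂ x := fun x => by
    simp [hβ₂d, LimFun.sin_apply, LimFun.cos_apply]
  have hβ : ∀ x : ℝ, HasDerivAt (fun x : ℝ => β x) (β₁ x) x := fun x => by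
    rw [← eβ₁]
    exact (hb x).add (hφ x)
  have hβ₁ : ∀ x : ℝ, HasDerivAt (fun x : ℝ => β₁ x) (β₂ x) x := fun x => by
    simp only [← eβ₁, ← eβ₂]
    exact (((hb x).sin.const_sub H).add (hφ₁ x)).congr_deriv (by ring)
  simp only [eβ, eβ₁, eβ₂] at hR₁ hR₂ hm
  have hd1 : deriv m = fun x : ℝ => dirVel (θ x) (θ₁ x) (β x) (β₁ x) := by
    funext x
    rw [hm]
    exact (hasDerivAt_dirVec (hθ x) (hβ x)).deriv
  have hd2 : deriv (deriv m) = fun x : ℝ => dirAcc (θ x) (θ₁ x) (θ₂ x) (β x) (β₁ x) (β₂ x) := by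
    funext x
    rw [hd1]
    exact (hasDerivAt_dirVel (hθ x) (hθ₁ x) (hβ x) (hβ₁ x)).deriv
  have hstat : ∀ x : EReal, θ₁ x = 0 → θ₂ x = 0 → β₁ x = 0 → β₂ x = 0 →
      cross3 (dirVec (θ x) (β x)) ((dot3 (dirVec (θ x) (β x)) xhat) • xhat -
        (K₂ * dot3 (dirVec (θ x) (β x)) yhat) • yhat + ![H₁, H₂, H₃]) = 0 := by
    intro x h1 h2 h3 h4
    have h5 := travelling_wave_identity (hR₁ x) (hR₂ x)
    rw [h1, h2, h3, h4] at h5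
    have e1 : dirVel (θ x) 0 (β x) 0 = 0 := by
      ext i; fin_cases i <;> simp [dirVel]
    have e2 : dirAcc (θ x) 0 0 (β x) 0 0 = 0 := by
      ext i; fin_cases i <;> simp [dirAcc]
    have e3 : ∀ a, cross3 a 0 = 0 := fun a => by
      ext i; fin_cases i <;> simp [cross3]
    rw [e1, e2, e3] at h5
    simpa using h5
  obtain ⟨t1, b1⟩ := LimFun.deriv_limits_eq_zero hθ
  obtain ⟨t2, b2⟩ := LimFun.deriv_limits_eq_zero hθ₁
  obtain ⟨t3, b3⟩ := LimFun.deriv_limits_eq_zero hβ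
  obtain ⟨t4, b4⟩ := LimFun.deriv_limits_eq_zero hβ₁
  have hcl : ∀ x : EReal, |θ x| + |φ x| < 2 * δ := fun x => by
    have := θ.abs_apply_le x
    have := φ.abs_apply_le x
    linarith
  have hx : ∀ a : Fin 3 → ℝ, dot3 xhat a = a 0 := fun a => by simp [dot3, xhat]
  refine ⟨dirVec (θ ⊤) (β ⊤), dirVec (θ ⊥) (β ⊥), ?_, fun ξ => ?_, fun ξ => ?_, ?_, ?_,
    hstat ⊤ t1 t2 t3 t4, hstat ⊥ b1 b2 b3 b4, ?_, ?_, fun ξ => ?_⟩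
  · have c1 := contDiff_two_of_hasDerivAt hθ hθ₁ θ₂.continuous_real
    have c2 := contDiff_two_of_hasDerivAt hβ hβ₁ β₂.continuous_real
    rw [hm, contDiff_pi]
    intro i
    fin_cases i
    · exact c1.cos.mul c2.cos
    · exact c1.sin
    · exact c1.cos.mul c2.sin
  · rw [hm]; exact norm3_dirVec _ _
  · rw [hd2, hd1, hm]
    exact travelling_wave_identity (hR₁ ξ) (hR₂ ξ)
  · rw [hm]
    exact tendsto_dirVec θ.tendsto_top β.tendsto_top
  · rw [hm]
    exact tendsto_dirVec θ.tendsto_bot β.tendsto_bot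
  · rw [hx, ← eβ]
    have := (abs_le.1 (abs_dirVec_sub_le (θ ⊤) (b ⊤) (φ ⊤)).1).1
    linarith [hcl ⊤]
  · rw [hx, ← eβ]
    have := (abs_le.1 (abs_dirVec_sub_le (θ ⊥) (b ⊥) (φ ⊥)).1).2
    linarith [hcl ⊥]
  · refine (norm3_le _).trans ?_
    obtain ⟨h0, h1, h2⟩ := abs_dirVec_sub_le (θ ξ) (b ξ) (φ ξ)
    rw [hm, hmT]
    have h3 := hcl ξ
    have h4 := θ.abs_apply_le ξ
    simp only [Pi.sub_apply, Matrix.cons_val, sub_zero, ← eβ]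
    linarith

/-- Transverse-field-dominated travelling waves: existence for parameters close to
Λ_T = (0,0,H₃,0). -/
theorem transverse_field_dominated_travelling_waves
    (α H₃ : ℝ) (hα : 0 < α) (hH₃ : 0 < H₃) (hH₃' : H₃ < 1)
    (βT : ℝ → ℝ) (hβT : ContDiff ℝ 1 βT)
    (hode : ∀ ξ, deriv βT ξ = H₃ - Real.sin (βT ξ))
    (hanti : StrictAnti βT)
    (hbot : Tendsto βT atBot (nhds (π - Real.arcsin H₃)))
    (htop : Tendsto βT atTop (nhds (Real.arcsin H₃)))
    (mT : ℝ → Fin 3 → ℝ)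
    (hmT : mT = fun ξ => ![Real.cos (βT ξ), 0, Real.sin (βT ξ)])
    (δ : ℝ) (hδ : 0 < δ) :
    ∃ ε > 0, ∀ H₁ H₂ H₃' K₂ : ℝ,
      Real.sqrt (H₁ ^ 2 + H₂ ^ 2 + (H₃' - H₃) ^ 2 + K₂ ^ 2) < ε →
      ∃ (V : ℝ) (m : ℝ → Fin 3 → ℝ) (mp mm : Fin 3 → ℝ),
        |V| < δ ∧
        ContDiff ℝ 2 m ∧
        (∀ ξ, norm3 (m ξ) = 1) ∧
        -- travelling-wave equation
        (∀ ξ, V • deriv m ξ + (α * V) • cross3 (m ξ) (deriv m ξ) +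
            cross3 (m ξ)
              (deriv (deriv m) ξ + (dot3 (m ξ) xhat) • xhat -
                (K₂ * dot3 (m ξ) yhat) • yhat + ![H₁, H₂, H₃']) = 0) ∧
        -- limits at ±∞
        Tendsto m atTop (nhds mp) ∧ Tendsto m atBot (nhds mm) ∧
        -- vanishing torque on the limiting values
        cross3 mp ((dot3 mp xhat) • xhat - (K₂ * dot3 mp yhat) • yhat + ![H₁, H₂, H₃']) = 0 ∧
        cross3 mm ((dot3 mm xhat) • xhat - (K₂ * dot3 mm yhat) • yhat + ![H₁, H₂, H₃']) = 0 ∧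
        -- tail-to-tail boundary conditions
        0 < dot3 xhat mp ∧ dot3 xhat mm < 0 ∧
        -- uniform closeness to the static transverse-field wall: sup_ξ |m(ξ) − m_T(ξ)| < δ
        (∃ c, c < δ ∧ ∀ ξ, norm3 (m ξ - mT ξ) ≤ c) ∧
        -- at Λ = Λ_T the solution is the static profile
        ((H₁ = 0 ∧ H₂ = 0 ∧ H₃' = H₃ ∧ K₂ = 0) → V = 0 ∧ m = mT) := by
  obtain ⟨b, hb, hs, hsT, hsB, hcT, hcB, hd, hint⟩ :=
    exists_wall hH₃ hH₃' hβT hode hanti hbot htop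
  have hmT' : ∀ x : ℝ, mT x = ![Real.cos (b x), 0, Real.sin (b x)] := fun x => by rw [hmT, hb]
  obtain ⟨η, hη, hη1, hη2, hη3⟩ : ∃ η > 0, 6 * η ≤ δ ∧ 3 * η ≤ Real.cos (b ⊤) ∧
      3 * η ≤ -Real.cos (b ⊥) := by
    refine ⟨min (δ / 6) (min (Real.cos (b ⊤) / 3) (-Real.cos (b ⊥) / 3)),
      lt_min (by positivity) (lt_min (by positivity) (by linarith)), ?_, ?_, ?_⟩
    · linarith [min_le_left (δ / 6) (min (Real.cos (b ⊤) / 3) (-Real.cos (b ⊥) / 3))]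
    · linarith [(min_le_right (δ / 6) _).trans
        (min_le_left (Real.cos (b ⊤) / 3) (-Real.cos (b ⊥) / 3))]
    · linarith [(min_le_right (δ / 6) _).trans
        (min_le_right (Real.cos (b ⊤) / 3) (-Real.cos (b ⊥) / 3))]
  obtain ⟨ε, hε, hball⟩ := Metric.eventually_nhds_iff.1
    (eventually_exists_profile hα hH₃ hH₃' hs hsT hsB hcT hcB hd hint hη)
  refine ⟨ε, hε, fun H₁ H₂ H₃' K₂ hΛ => ?_⟩
  by_cases h0 : H₁ = 0 ∧ H₂ = 0 ∧ H₃' = H₃ ∧ K₂ = 0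
  · obtain ⟨rfl, rfl, rfl, rfl⟩ := h0
    -- here the wall itself is the solution; the implicit function is not needed
    have hz : ∀ x : ℝ, HasDerivAt (fun x : ℝ => (0 : LimFun) x) ((0 : LimFun) x) x :=
      fun x => hasDerivAt_const x (0 : ℝ)
    obtain ⟨mp, mm, h1, h2, h3, h4, h5, h6, h7, h8, h9, h10⟩ :=
      travelling_wave_of_angles (α := α) (V := 0) (H₁ := 0) (H₂ := 0) (H₃ := H₃') (K₂ := 0)
        (θ := 0) (θ₁ := 0) (θ₂ := 0) (φ := 0) (φ₁ := 0) (φ₂ := 0) (m := mT)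
        hd hη2 (by linarith) hη (by simpa using hη) (by simpa using hη) hz hz hz hz
        (fun x => by simp [azimRes]) (fun x => by simp [polRes]; ring)
        (funext fun x => by rw [hmT']; simp [dirVec]) hmT'
    exact ⟨0, mT, mp, mm, by simpa using hδ, h1, h2, h3, h4, h5, h6, h7, h8, h9,
      ⟨5 * η, by linarith, h10⟩, fun _ => ⟨rfl, rfl⟩⟩
  · have hdist : dist ((H₁, H₂, H₃', K₂) : ℝ × ℝ × ℝ × ℝ) (0, 0, H₃, 0) < ε := by
      have e : ∀ a : ℝ, a ^ 2 ≤ H₁ ^ 2 + H₂ ^ 2 + (H₃' - H₃) ^ 2 + K₂ ^ 2 → |a| < ε :=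
        fun a ha => (Real.abs_le_sqrt ha).trans_lt hΛ
      have s1 := sq_nonneg H₁
      have s2 := sq_nonneg H₂
      have s3 := sq_nonneg (H₃' - H₃)
      have s4 := sq_nonneg K₂
      simp only [Prod.dist_eq, Real.dist_eq, sub_zero, max_lt_iff]
      exact ⟨e _ (by linarith), e _ (by linarith), e _ (by linarith), e _ (by linarith)⟩
    obtain ⟨V, θ, θ₁, θ₂, φ, φ₁, φ₂, hV, hθδ, hφδ, hθ, hθ₁, hφ, hφ₁, hR₁, hR₂⟩ := hball hdist
    obtain ⟨mp, mm, h1, h2, h3, h4, h5, h6, h7, h8, h9, h10⟩ :=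
      travelling_wave_of_angles hd hη2 (by linarith) hη hθδ hφδ hθ hθ₁ hφ hφ₁ hR₁ hR₂ rfl hmT'
    exact ⟨V, _, mp, mm, by linarith, h1, h2, h3, h4, h5, h6, h7, h8, h9,
      ⟨5 * η, by linarith, h10⟩, fun h => absurd h h0⟩

end
end
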